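/- For all positive integers μ₁, μ₂, μ₃, the pruned simple Hurwitz number satisfies K_{0,3}(μ₁, μ₂, μ₃) = (μ₁+μ₂+μ₃+1)! · μ₁·μ₂·μ₃. -/

import Mathlib

/-- `σ` is a tuple of `m` transpositions in the symmetric group on `d` letters whose
ordered product is `T`, which generates a subgroup acting transitively, and such that
every point is moved by at least two of the transpositions.  These are the objects
counted by the pruned simple Hurwitz numbers. -/
def IsPrunedFactorisation {d m : ℕ} (T : Equiv.Perm (Fin d))
    (σ : Fin m → Equiv.Perm (Fin d)) : Prop :=
  (∀ i, (σ i).IsSwap) ∧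
  (List.ofFn σ).prod = T ∧
  (∀ x y : Fin d, ∃ g ∈ Subgroup.closure (Set.range σ), g x = y) ∧
  (∀ x : Fin d, 2 ≤ Nat.card {i : Fin m // σ i x ≠ x})

set_option linter.all false
set_option linter.unusedSectionVars false
namespace PH
open Equiv

variable {α ι : Type*} [DecidableEq α]

/-- walk with `n` edges whose vertices `1..N` are distinct -/
structure Walk (σ : ι → Perm α) (n N : ℕ) (w : ℕ → ι) (v : ℕ → α) : Prop where
  step : ∀ j < n, σ (w j) = swap (v j) (v (j+1))
  ne : ∀ j < n, v j ≠ v (j+1)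
  winj : ∀ i < n, ∀ j < n, w i = w j → i = j
  vinj : ∀ i, 1 ≤ i → i ≤ N → ∀ j, 1 ≤ j → j ≤ N → v i = v j → i = j

theorem Walk.inc {σ : ι → Perm α} {n N w v} (h : Walk σ n N w v) {j : ℕ} (hj : j < n) (x : α) :
    σ (w j) x ≠ x ↔ (x = v j ∨ x = v (j+1)) := by
  rw [h.step j hj]
  have := h.ne j hj
  constructor
  · intro hx
    by_contra hc
    push Not at hc
    exact hx (swap_apply_of_ne_of_ne hc.1 hc.2)
  · rintro (rfl | rfl)
    · rw [swap_apply_left]; exact this.symm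
    · rw [swap_apply_right]; exact this

theorem swap_eq_of {σ : Perm α} (hσ : σ.IsSwap) {x : α} (hx : σ x ≠ x) : σ = swap x (σ x) := by
  obtain ⟨a, b, hab, rfl⟩ := hσ
  by_cases h1 : x = a
  · subst h1; simp
  by_cases h2 : x = b
  · subst h2; rw [swap_apply_right, swap_comm]
  exact absurd (swap_apply_of_ne_of_ne h1 h2) hx

theorem Walk.len_le [Fintype α] {σ : ι → Perm α} {n N w v} (h : Walk σ n N w v) :
    N ≤ Fintype.card α := by
  have : Function.Injective (fun i : Fin N => v (i+1)) := by
    intro i j hij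
    have := h.vinj (i+1) (by omega) (by omega) (j+1) (by omega) (by omega) hij
    exact Fin.ext (by omega)
  simpa using Fintype.card_le_of_injective _ this

/-- extend by an unused edge to a new vertex -/
theorem Walk.extend {σ : ι → Perm α} {n w v} (hσ : ∀ i, (σ i).IsSwap) (h : Walk σ n n w v)
    {i : ι} (hi : ∀ j < n, w j ≠ i) (hmv : σ i (v n) ≠ v n) :
    ∃ w' v', Walk σ (n+1) n w' v' ∧ (∀ j < n, w' j = w j) ∧ (∀ j ≤ n, v' j = v j) ∧
      w' n = i ∧ v' (n+1) = σ i (v n) := by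
  refine ⟨fun j => if j < n then w j else i, fun j => if j ≤ n then v j else σ i (v n),
    ⟨?_, ?_, ?_, ?_⟩, ?_, ?_, ?_, ?_⟩
  · intro j hj
    by_cases h1 : j < n
    · simp [h1, h1.le, Nat.succ_le_of_lt h1, h.step j h1]
    · have : j = n := by omega
      subst this
      simpa using swap_eq_of (hσ i) hmv
  · intro j hj
    by_cases h1 : j < n
    · simpa [h1, h1.le, Nat.succ_le_of_lt h1] using h.ne j h1
    · have : j = n := by omega
      subst this
      simpa using hmv.symm
  · intro a ha b hb
    have := h.winj a
    have := h.winj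
    by_cases h1 : a < n <;> by_cases h2 : b < n <;> simp only [h1, h2, if_true, if_false]
    · exact h.winj a h1 b h2
    · intro h3; exact absurd h3 (hi a h1)
    · intro h3; exact absurd h3.symm (hi b h2)
    · omega
  · intro a ha ha' b hb hb'
    simp only [ha', hb', if_true]
    exact h.vinj a ha ha' b hb hb'
  · intro j hj; simp [hj]
  · intro j hj; simp [hj]
  · simp
  · simp

theorem Walk.succ_new {σ : ι → Perm α} {n w v} (h : Walk σ (n+1) n w v)
    (hn : ∀ j, 1 ≤ j → j ≤ n → v (n+1) ≠ v j) : Walk σ (n+1) (n+1) w v := by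
  refine ⟨h.step, h.ne, h.winj, ?_⟩
  intro a ha ha' b hb hb' hab
  by_cases h1 : a ≤ n <;> by_cases h2 : b ≤ n
  · exact h.vinj a ha h1 b hb h2 hab
  · have : b = n+1 := by omega
    subst this; exact absurd hab.symm (hn a ha h1)
  · have : a = n+1 := by omega
    subst this; exact absurd hab (hn b hb h2)
  · omega

/-- edges used at the end vertex -/
theorem Walk.used_end {σ : ι → Perm α} {n w v} (h : Walk σ n n w v) {j : ℕ} (hj : j < n)
    (hm : σ (w j) (v n) ≠ v n) : j = n - 1 ∨ (j = 0 ∧ v 0 = v n) := by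
  rcases (h.inc hj _).1 hm with h1 | h1
  · rcases Nat.eq_zero_or_pos j with rfl | hp
    · right; exact ⟨rfl, h1.symm⟩
    · have := h.vinj n (by omega) le_rfl j hp hj.le h1
      omega
  · have := h.vinj n (by omega) le_rfl (j+1) (by omega) (by omega) h1
    left; omega

variable [Fintype ι] [DecidableEq ι]

def deg (σ : ι → Perm α) (x : α) : ℕ := (Finset.univ.filter (fun i => σ i x ≠ x)).card

theorem exists_unused {σ : ι → Perm α} {x : α} (S : Finset ι) (h : S.card < deg σ x) :
    ∃ i, σ i x ≠ x ∧ i ∉ S := by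
  obtain ⟨i, hi, hi'⟩ := Finset.exists_mem_notMem_of_card_lt_card h
  exact ⟨i, by simpa using hi, hi'⟩

theorem Walk.unused_end {σ : ι → Perm α} {n w v} (h : Walk σ n n w v) (_hn : 1 ≤ n)
    (h2 : 2 ≤ deg σ (v n)) (h3 : v 0 = v n → 3 ≤ deg σ (v n)) :
    ∃ i, σ i (v n) ≠ v n ∧ ∀ j < n, w j ≠ i := by
  by_cases h0 : v 0 = v n
  · obtain ⟨i, hi, hi'⟩ := exists_unused (σ := σ) (x := v n) {w 0, w (n-1)}
      (lt_of_le_of_lt Finset.card_le_two (by have := h3 h0; omega))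
    refine ⟨i, hi, ?_⟩
    rintro j hj rfl
    rcases h.used_end hj hi with h1 | h1
    · subst h1; simp at hi'
    · rw [h1.1] at hi'; simp at hi'
  · obtain ⟨i, hi, hi'⟩ := exists_unused (σ := σ) (x := v n) {w (n-1)} (by simp; omega)
    refine ⟨i, hi, ?_⟩
    rintro j hj rfl
    rcases h.used_end hj hi with h1 | h1
    · subst h1; simp at hi'
    · exact h0 h1.2

variable [Fintype α]

theorem sum_deg_on {σ : ι → Perm α} (R : Finset α) :
    ∑ x ∈ R, deg σ x = ∑ i, (R.filter (fun x => σ i x ≠ x)).card := by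
  simp only [deg, Finset.card_filter]
  rw [Finset.sum_comm]

theorem moved_card {σ : Perm α} (h : σ.IsSwap) (R : Finset α) :
    (R.filter (fun x => σ x ≠ x)).card ≤ 2 := by
  rw [← Perm.card_support_eq_two.2 h]
  apply Finset.card_le_card
  intro x hx
  simpa using (Finset.mem_filter.1 hx).2

theorem exists_branch {σ : ι → Perm α} (hσ : ∀ i, (σ i).IsSwap)
    (hc : Fintype.card ι = Fintype.card α + 1) : ∃ z, 3 ≤ deg σ z := by
  by_contra hcon
  push Not at hcon
  have h1 := sum_deg_on (σ := σ) Finset.univ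
  have h2 : ∀ i, (Finset.univ.filter (fun x => σ i x ≠ x)).card = 2 := by
    intro i
    rw [← Perm.card_support_eq_two.2 (hσ i)]
    congr 1
  simp only [h2] at h1
  have h3 : ∑ x : α, deg σ x ≤ ∑ x : α, 2 := Finset.sum_le_sum (fun x _ => by have := hcon x; omega)
  simp at h1 h3
  omega

def Closed (σ : ι → Perm α) (n : ℕ) : Prop := ∃ w v k, Walk σ n n w v ∧ 1 ≤ k ∧ k ≤ n ∧ v 0 = v k ∧
    (n = k → ∃ i, σ i (v n) ≠ v n ∧ ∀ j < n, w j ≠ i)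

theorem exists_closed {σ : ι → Perm α} (hσ : ∀ i, (σ i).IsSwap)
    (hc : Fintype.card ι = Fintype.card α + 1) (hd : ∀ x, 2 ≤ deg σ x) : ∃ n, Closed σ n := by
  obtain ⟨z, hz⟩ := exists_branch hσ hc
  obtain ⟨i, hi, -⟩ := exists_unused (σ := σ) (x := z) ∅ (by simp; omega)
  let P : ℕ → Prop := fun n => 1 ≤ n ∧ ∃ w v, Walk σ n n w v ∧ v 0 = z
  have hP : P 1 := by
    refine ⟨le_rfl, fun _ => i, fun j => if j = 0 then z else σ i z, ⟨?_, ?_, ?_, ?_⟩, rfl⟩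
    · intro j hj
      have : j = 0 := by omega
      subst this; simpa using swap_eq_of (hσ i) hi
    · intro j hj
      have : j = 0 := by omega
      subst this; simpa using hi.symm
    · intros; omega
    · intros; omega
  classical
  have hb : ∀ n, P n → n ≤ Fintype.card α := by
    rintro n ⟨-, w, v, h, -⟩; exact h.len_le
  obtain ⟨n, hn, hmax⟩ : ∃ n, P n ∧ ∀ n', P n' → n' ≤ n :=
    ⟨Nat.findGreatest P (Fintype.card α), Nat.findGreatest_spec (hb 1 hP) hP,
      fun n' h' => Nat.le_findGreatest (hb n' h') h'⟩
  obtain ⟨hn1, w, v, h, hv0⟩ := hn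
  obtain ⟨i, hi, hi'⟩ := h.unused_end hn1 (hd _) (by intro h0; rw [← h0, hv0]; exact hz)
  by_cases h0 : v 0 = v n
  · exact ⟨n, w, v, n, h, hn1, le_rfl, h0, fun _ => ⟨i, hi, hi'⟩⟩
  obtain ⟨w', v', h', hw, hv, hwn, hvn⟩ := h.extend hσ hi' hi
  by_cases hnew : ∀ j, 1 ≤ j → j ≤ n → v' (n+1) ≠ v' j
  · have := hmax (n+1) ⟨by omega, w', v', h'.succ_new hnew, by rw [hv 0 (by omega), hv0]⟩
    omega
  push Not at hnew
  obtain ⟨l, hl1, hl2, hl⟩ := hnew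
  have hln : l ≠ n := by
    rintro rfl
    exact h'.ne l (by omega) hl.symm
  refine ⟨n+1-l, fun j => w' (l+j), fun j => v' (l+j), n+1-l, ⟨?_, ?_, ?_, ?_⟩, by omega, le_rfl, ?_, ?_⟩
  · intro j hj; exact h'.step _ (by omega)
  · intro j hj; exact h'.ne _ (by omega)
  · intro a ha b hb hab
    have := h'.winj _ (by omega) _ (by omega) hab
    omega
  · intro a ha ha' b hb hb' hab
    have key : ∀ c, 1 ≤ c → c ≤ n+1-l → ∃ c', 1 ≤ c' ∧ c' ≤ n ∧ v' (l+c) = v' c' ∧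
        (c' = l + c ∨ (c' = l ∧ l + c = n+1)) := by
      intro c hc hc'
      by_cases h1 : l + c = n+1
      · exact ⟨l, hl1, hl2, by rw [h1, hl], Or.inr ⟨rfl, h1⟩⟩
      · exact ⟨l+c, by omega, by omega, rfl, Or.inl rfl⟩
    obtain ⟨a', h1, h2, h3, h4⟩ := key a ha ha'
    obtain ⟨b', g1, g2, g3, g4⟩ := key b hb hb'
    have := h'.vinj a' h1 h2 b' g1 g2 (by rw [← h3, ← g3]; exact hab)
    omega
  · show v' (l+0) = v' (l + (n+1-l))
    rw [show l + (n+1-l) = n+1 by omega]; exact hl.symm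
  · intro _
    refine ⟨w' (l-1), ?_, ?_⟩
    · show σ _ (v' (l + (n+1-l))) ≠ v' (l + (n+1-l))
      rw [show l + (n+1-l) = n+1 by omega, hl]
      rw [h'.inc (by omega)]
      right; congr 1; omega
    · intro j hj hjj
      have := h'.winj _ (by omega) _ (by omega) hjj
      omega

theorem closed_univ {σ : ι → Perm α} (hσ : ∀ i, (σ i).IsSwap)
    (ht : ∀ x y : α, ∃ g ∈ Subgroup.closure (Set.range σ), g x = y)
    {S : Set α} (hS : S.Nonempty) (h : ∀ i, ∀ x ∈ S, σ i x ∈ S) : ∀ x, x ∈ S := by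
  have key : ∀ g ∈ Subgroup.closure (Set.range σ), ∀ x, x ∈ S ↔ g x ∈ S := by
    intro g hg
    induction hg using Subgroup.closure_induction with
    | mem g hg =>
      obtain ⟨i, rfl⟩ := hg
      intro x
      refine ⟨h i x, fun hx => ?_⟩
      have h2 := h i _ hx
      obtain ⟨a, b, -, hab⟩ := hσ i
      rw [hab] at h2
      simpa using h2
    | one => simp
    | mul a b _ _ ha hb => intro x; rw [hb x, ha (b x)]; rfl
    | inv a _ ha => intro x; rw [ha (a⁻¹ x)]; simp
  obtain ⟨y, hy⟩ := hS
  intro x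
  obtain ⟨g, hg, rfl⟩ := ht y x
  exact (key g hg y).1 hy

theorem exists_trav {σ : ι → Perm α} (hσ : ∀ i, (σ i).IsSwap)
    (hc : Fintype.card ι = Fintype.card α + 1) (hd : ∀ x, 2 ≤ deg σ x)
    (ht : ∀ x y : α, ∃ g ∈ Subgroup.closure (Set.range σ), g x = y) :
    ∃ w v, Walk σ (Fintype.card α + 1) (Fintype.card α) w v := by
  classical
  have hb : ∀ n, Closed σ n → n ≤ Fintype.card α := by
    rintro n ⟨w, v, k, h, -⟩; exact h.len_le
  obtain ⟨n0, hn0⟩ := exists_closed hσ hc hd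
  obtain ⟨n, hn, hmax⟩ : ∃ n, Closed σ n ∧ ∀ n', Closed σ n' → n' ≤ n :=
    ⟨Nat.findGreatest (Closed σ) (Fintype.card α), Nat.findGreatest_spec (hb n0 hn0) hn0,
      fun n' h' => Nat.le_findGreatest (hb n' h') h'⟩
  obtain ⟨w, v, k, h, hk1, hk2, h0, hun⟩ := hn
  have hun' : ∃ i, σ i (v n) ≠ v n ∧ ∀ j < n, w j ≠ i := by
    by_cases hnk : n = k
    · exact hun hnk
    · refine h.unused_end (by omega) (hd _) (fun h1 => ?_)
      have := h.vinj n (by omega) le_rfl k hk1 hk2 (by rw [← h1, h0])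
      exact absurd this hnk
  obtain ⟨i, hi, hi'⟩ := hun'
  obtain ⟨w', v', h', hw, hv, hwn, hvn⟩ := h.extend hσ hi' hi
  have h0' : v' 0 = v' k := by rw [hv 0 (by omega), hv k hk2, h0]
  by_cases hnew : ∀ j, 1 ≤ j → j ≤ n → v' (n+1) ≠ v' j
  · have := hmax (n+1) ⟨w', v', k, h'.succ_new hnew, hk1, by omega, h0', by omega⟩
    omega
  push Not at hnew
  obtain ⟨l, hl1, hl2, hl⟩ := hnew
  -- vertex set
  let S : Finset α := (Finset.Icc 1 n).image v'
  let U : Finset ι := (Finset.range (n+1)).image w'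
  have hScard : S.card = n := by
    rw [Finset.card_image_of_injOn]
    · simp
    · intro a ha b hb hab
      simp at ha hb
      exact h'.vinj a ha.1 ha.2 b hb.1 hb.2 hab
  have hUcard : U.card = n+1 := by
    rw [Finset.card_image_of_injOn]
    · simp
    · intro a ha b hb hab
      simp at ha hb
      exact h'.winj a (by omega) b (by omega) hab
  have hvS : ∀ j ≤ n+1, v' j ∈ S := by
    intro j hj
    rw [Finset.mem_image]
    by_cases h1 : j = 0
    · exact ⟨k, by simp; omega, by rw [h1, h0']⟩
    by_cases h2 : j = n+1
    · exact ⟨l, by simp; omega, by rw [h2, hl]⟩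
    exact ⟨j, by simp; omega, rfl⟩
  have hUS : ∀ j ∈ U, ∀ x, σ j x ≠ x → x ∈ S := by
    intro j hj x hx
    obtain ⟨a, ha, rfl⟩ := Finset.mem_image.1 hj
    simp at ha
    rcases (h'.inc (by omega) x).1 hx with rfl | rfl
    · exact hvS _ (by omega)
    · exact hvS _ (by omega)
  have hclosed : ∀ i, ∀ x ∈ (S : Set α), σ i x ∈ (S : Set α) := by
    by_contra hcon
    push Not at hcon
    obtain ⟨i, x, hxS, hxn⟩ := hcon
    have hix : σ i x ≠ x := fun h => hxn (by rw [h]; exact hxS)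
    have hiU : i ∉ U := by
      intro hiU
      refine hxn (hUS i hiU _ ?_)
      intro h; exact hix ((σ i).injective h)
    have h1 := sum_deg_on (σ := σ) Sᶜ
    have h2 : 2 * Sᶜ.card ≤ ∑ x ∈ Sᶜ, deg σ x := by
      rw [mul_comm, ← smul_eq_mul, ← Finset.sum_const]
      exact Finset.sum_le_sum (fun x _ => hd x)
    have h3 : ∑ j, (Sᶜ.filter (fun x => σ j x ≠ x)).card < ∑ j, (if j ∈ U then 0 else 2) := by
      apply Finset.sum_lt_sum
      · intro j _
        split_ifs with hj
        · rw [Nat.le_zero, Finset.card_eq_zero, Finset.filter_eq_empty_iff]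
          intro y hy hy'
          exact (Finset.mem_compl.1 hy) (hUS j hj y hy')
        · exact moved_card (hσ j) _
      · refine ⟨i, Finset.mem_univ _, ?_⟩
        rw [if_neg hiU, ← Perm.card_support_eq_two.2 (hσ i)]
        apply Finset.card_lt_card
        rw [Finset.ssubset_iff_of_subset]
        · exact ⟨x, by simpa using hix, by simp; intro h; exact absurd hxS h⟩
        · intro y hy; simpa using (Finset.mem_filter.1 hy).2
    have h4 : ∑ j, (if j ∈ U then 0 else 2) = 2 * Uᶜ.card := by
      rw [Finset.sum_ite]; simp [Finset.compl_eq_univ_sdiff, mul_comm, Finset.filter_not]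
    rw [Finset.card_compl, hUcard] at h4
    rw [Finset.card_compl, hScard] at h2
    omega
  have huniv := closed_univ hσ ht ⟨v' 0, hvS 0 (by omega)⟩ hclosed
  have : n = Fintype.card α := by
    rw [← hScard, ← Finset.card_univ]; congr 1
    ext x; simpa using huniv x
  subst this
  exact ⟨w', v', h'⟩

end PH

set_option linter.all false
set_option linter.unusedSectionVars false
namespace PH
open Equiv

section
variable {α ι : Type*} [DecidableEq α] {d : ℕ} {σ : ι → Perm α} {w w' : ℕ → ι} {v v' : ℕ → α}

theorem Walk.vsurj [Fintype α] (h : Walk σ (d+1) d w v) (hα : Fintype.card α = d) (x : α) :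
    ∃ j, 1 ≤ j ∧ j ≤ d ∧ v j = x := by
  have hinj : Function.Injective (fun i : Fin d => v (i+1)) := by
    intro i j hij
    have := h.vinj (i+1) (by omega) (by omega) (j+1) (by omega) (by omega) hij
    exact Fin.ext (by omega)
  have := ((Fintype.bijective_iff_injective_and_card _).2 ⟨hinj, by simp [hα]⟩).2 x
  obtain ⟨i, hi⟩ := this
  exact ⟨i+1, by omega, by omega, hi⟩

theorem Walk.wsurj [Fintype ι] (h : Walk σ (d+1) d w v) (hι : Fintype.card ι = d+1) (x : ι) :
    ∃ j, j ≤ d ∧ w j = x := by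
  have hinj : Function.Injective (fun i : Fin (d+1) => w i) := by
    intro i j hij
    have := h.winj i (by omega) j (by omega) hij
    exact Fin.ext (by omega)
  have := ((Fintype.bijective_iff_injective_and_card _).2 ⟨hinj, by simp [hι]⟩).2 x
  obtain ⟨i, hi⟩ := this
  exact ⟨i, by omega, hi⟩

theorem Walk.getk [Fintype α] (h : Walk σ (d+1) d w v) (hα : Fintype.card α = d) :
    ∃ k, 2 ≤ k ∧ k ≤ d ∧ v 0 = v k := by
  obtain ⟨k, h1, h2, h3⟩ := h.vsurj hα (v 0)
  refine ⟨k, ?_, h2, h3.symm⟩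
  by_contra hc
  have : k = 1 := by omega
  subst this
  exact h.ne 0 (by omega) h3.symm

theorem Walk.getl [Fintype α] (h : Walk σ (d+1) d w v) (hα : Fintype.card α = d) :
    ∃ l, 1 ≤ l ∧ l < d ∧ v (d+1) = v l := by
  obtain ⟨l, h1, h2, h3⟩ := h.vsurj hα (v (d+1))
  refine ⟨l, h1, ?_, h3.symm⟩
  by_contra hc
  have : l = d := by omega
  subst this
  exact h.ne l (by omega) h3

theorem Walk.kge (h : Walk σ (d+1) d w v) {k : ℕ} (hk : 1 ≤ k) (hv : v 0 = v k) : 2 ≤ k := by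
  by_contra hc
  have : k = 1 := by omega
  subst this
  exact h.ne 0 (by omega) hv

theorem Walk.llt (h : Walk σ (d+1) d w v) {l : ℕ} (hl : l ≤ d) (hv : v (d+1) = v l) : l < d := by
  by_contra hc
  have : l = d := by omega
  subst this
  exact h.ne l (by omega) hv.symm

def rW (d : ℕ) (w : ℕ → ι) : ℕ → ι := fun j => w (d - j)
def rV (d : ℕ) (v : ℕ → α) : ℕ → α := fun j => v (d + 1 - j)
def pW (d l : ℕ) (w : ℕ → ι) : ℕ → ι := fun j => if j < l then w j else w (d + l - j)
def pV (d l : ℕ) (v : ℕ → α) : ℕ → α := fun j => if j ≤ l then v j else v (d + 1 + l - j)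

theorem Walk.rev (h : Walk σ (d+1) d w v) : Walk σ (d+1) d (rW d w) (rV d v) := by
  refine ⟨?_, ?_, ?_, ?_⟩
  · intro j hj
    simp only [rW, rV]
    rw [h.step _ (by omega), swap_comm]
    congr 2 <;> omega
  · intro j hj
    simp only [rV]
    have := h.ne (d - j) (by omega)
    rw [show d + 1 - (j+1) = d - j by omega, show d + 1 - j = d - j + 1 by omega]
    exact this.symm
  · intro a ha b hb hab
    have := h.winj _ (by omega) _ (by omega) hab
    omega
  · intro a ha ha' b hb hb' hab
    have := h.vinj _ (by omega) (by omega) _ (by omega) (by omega) hab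
    omega

theorem Walk.rho (h : Walk σ (d+1) d w v) {l : ℕ} (hl : 1 ≤ l) (hl' : l ≤ d) (hv : v (d+1) = v l) :
    Walk σ (d+1) d (pW d l w) (pV d l v) := by
  refine ⟨?_, ?_, ?_, ?_⟩
  · intro j hj
    simp only [pW, pV]
    rcases lt_trichotomy j l with h1 | h1 | h1
    · rw [if_pos h1, if_pos h1.le, if_pos (by omega), h.step _ hj]
    · subst h1
      rw [if_neg (by omega), if_pos le_rfl, if_neg (by omega), h.step _ (by omega), swap_comm, ← hv]
      congr 2 <;> omega
    · rw [if_neg (by omega), if_neg (by omega), if_neg (by omega), h.step _ (by omega), swap_comm]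
      congr 2 <;> omega
  · intro j hj
    simp only [pV]
    rcases lt_trichotomy j l with h1 | h1 | h1
    · rw [if_pos h1.le, if_pos (by omega)]; exact h.ne _ hj
    · subst h1
      rw [if_pos le_rfl, if_neg (by omega), ← hv, show d + 1 + j - (j+1) = d by omega]
      exact (h.ne _ (by omega)).symm
    · rw [if_neg (by omega), if_neg (by omega)]
      have := h.ne (d + l - j) (by omega)
      rw [show d + 1 + l - j = d + l - j + 1 by omega, show d + 1 + l - (j+1) = d + l - j by omega]
      exact this.symm
  · intro a ha b hb hab
    simp only [pW] at hab
    split_ifs at hab <;> have := h.winj _ (by omega) _ (by omega) hab <;> omega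
  · intro a ha ha' b hb hb' hab
    simp only [pV] at hab
    split_ifs at hab <;> have := h.vinj _ (by omega) (by omega) _ (by omega) (by omega) hab <;> omega

theorem Walk.next (h : Walk σ (d+1) d w v) {j : ℕ} (hj : j ≤ d) : v (j+1) = σ (w j) (v j) := by
  rw [h.step j (by omega), swap_apply_left]

theorem v_agree (h : Walk σ (d+1) d w v) (h' : Walk σ (d+1) d w' v') (h0 : v' 0 = v 0) {n : ℕ}
    (hn : n ≤ d + 1) (hw : ∀ i < n, w' i = w i) : ∀ i ≤ n, v' i = v i := by
  intro i
  induction i with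
  | zero => intro _; exact h0
  | succ i ih =>
    intro hi
    rw [h.next (by omega), h'.next (by omega), hw i (by omega), ih (by omega)]

theorem uniq0 [Fintype ι] (hι : Fintype.card ι = d+1)
    (h : Walk σ (d+1) d w v) (h' : Walk σ (d+1) d w' v') (h0 : v' 0 = v 0) (hw0 : w' 0 = w 0)
    {l : ℕ} (hl : 1 ≤ l) (hl' : l ≤ d) (hv : v (d+1) = v l) {j : ℕ} (hj : j ≤ d)
    (hag : ∀ i < j, w' i = w i) : w' j = w j ∨ (j = l ∧ w' j = w d) := by
  rcases Nat.eq_zero_or_pos j with rfl | hp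
  · left; exact hw0
  have hvj := v_agree h h' h0 (by omega) hag j le_rfl
  obtain ⟨i, hi, hwi⟩ := h.wsurj hι (w' j)
  have hij : j ≤ i := by
    by_contra hc
    have := h'.winj i (by omega) j (by omega) (by rw [hag i (by omega), hwi])
    omega
  rcases hij.eq_or_lt with rfl | hlt
  · left; exact hwi.symm
  right
  have hm : σ (w i) (v j) ≠ v j := by
    rw [hwi, ← hvj, h'.inc (by omega)]; left; rfl
  rcases (h.inc (by omega) _).1 hm with h1 | h1
  · have := h.vinj j hp hj i (by omega) hi h1
    omega
  · by_cases hid : i = d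
    · subst hid
      exact ⟨h.vinj j hp hj l hl hl' (by rw [h1, hv]), hwi.symm⟩
    · have := h.vinj j hp hj (i+1) (by omega) (by omega) h1
      omega

theorem uniq1 [Fintype ι] (hι : Fintype.card ι = d+1)
    (h : Walk σ (d+1) d w v) (h' : Walk σ (d+1) d w' v') (h0 : v' 0 = v 0) (hw0 : w' 0 = w 0)
    {l : ℕ} (hl : 1 ≤ l) (hl' : l ≤ d) (hv : v (d+1) = v l) (hwl : w' l = w l) :
    (∀ j ≤ d, w' j = w j) ∧ (∀ j ≤ d+1, v' j = v j) := by
  have : ∀ j ≤ d, w' j = w j := by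
    intro j
    induction j using Nat.strong_induction_on with
    | _ j ih =>
      intro hj
      rcases uniq0 hι h h' h0 hw0 hl hl' hv hj (fun i hi => ih i hi (by omega)) with h1 | ⟨rfl, _⟩
      · exact h1
      · exact hwl
  exact ⟨this, v_agree h h' h0 le_rfl (fun i hi => this i (by omega))⟩

theorem uniq2 [Fintype ι] (hι : Fintype.card ι = d+1)
    (h : Walk σ (d+1) d w v) (h' : Walk σ (d+1) d w' v') (h0 : v' 0 = v 0) (hw0 : w' 0 = w 0)
    {l : ℕ} (hl : 1 ≤ l) (hl' : l ≤ d) (hv : v (d+1) = v l) :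
    ((∀ j ≤ d, w' j = w j) ∧ (∀ j ≤ d+1, v' j = v j)) ∨
    ((∀ j ≤ d, w' j = pW d l w j) ∧ (∀ j ≤ d+1, v' j = pV d l v j)) := by
  have ag : ∀ j < l, w' j = w j := by
    intro j
    induction j using Nat.strong_induction_on with
    | _ j ih =>
      intro hj
      rcases uniq0 hι h h' h0 hw0 hl hl' hv (j := j) (by omega) (fun i hi => ih i hi (by omega)) with h1 | h1
      · exact h1
      · omega
  rcases uniq0 hι h h' h0 hw0 hl hl' hv (j := l) (by omega) ag with h1 | h1
  · left; exact uniq1 hι h h' h0 hw0 hl hl' hv h1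
  · right
    refine uniq1 hι (h.rho hl hl' hv) h' ?_ ?_ hl hl' ?_ ?_
    · simp [pV, h0]
    · rw [hw0]; simp only [pW]; rw [if_pos (by omega)]
    · simp only [pV]; rw [if_neg (by omega), if_pos le_rfl]; congr 1; omega
    · rw [h1.2]; simp only [pW]; rw [if_neg (by omega)]; congr 1; omega

/-- edges at a vertex -/
theorem Walk.inc_at (h : Walk σ (d+1) d w v) {i j : ℕ} (hi : i ≤ d) (hj : 1 ≤ j) (hj' : j ≤ d)
    (hm : σ (w i) (v j) ≠ v j) :
    i = j - 1 ∨ i = j ∨ (i = 0 ∧ v 0 = v j) ∨ (i = d ∧ v (d+1) = v j) := by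
  rcases (h.inc (by omega) _).1 hm with h1 | h1
  · rcases Nat.eq_zero_or_pos i with rfl | hp
    · right; right; left; exact ⟨rfl, h1.symm⟩
    · have := h.vinj j hj hj' i hp hi h1
      omega
  · by_cases hid : i = d
    · subst hid; right; right; right; exact ⟨rfl, h1.symm⟩
    · have := h.vinj j hj hj' (i+1) (by omega) (by omega) h1
      omega

def FD (d : ℕ) (σ : ι → Perm α) (i : ι) (x : α) : Prop :=
  ∃ w v, Walk σ (d+1) d w v ∧ w 0 = i ∧ v 0 = x

theorem fd1 (h : Walk σ (d+1) d w v) {k : ℕ} (hv : v 0 = v k) : FD d σ (w 0) (v k) :=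
  ⟨w, v, h, rfl, hv⟩
theorem fd2 (h : Walk σ (d+1) d w v) {l : ℕ} (hv : v (d+1) = v l) : FD d σ (w d) (v l) :=
  ⟨_, _, h.rev, rfl, hv⟩
theorem fd3 (h : Walk σ (d+1) d w v) {l : ℕ} (hl : 1 ≤ l) (hl' : l ≤ d) (hv : v (d+1) = v l) :
    FD d σ (w l) (v l) := by
  refine ⟨_, _, (h.rho hl hl' hv).rev, ?_, ?_⟩
  · simp only [rW, pW]; rw [if_neg (by omega)]; congr 1; omega
  · simp only [rV, pV]; rw [if_neg (by omega)]; congr 1; omega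
theorem fd4 (h : Walk σ (d+1) d w v) {k : ℕ} (hk : 1 ≤ k) (hk' : k ≤ d) (hv : v 0 = v k) :
    FD d σ (w (k-1)) (v k) := by
  have := fd3 h.rev (l := d+1-k) (by omega) (by omega)
    (by simp only [rV]; rw [show d + 1 - (d+1) = 0 by omega, hv]; congr 1; omega)
  convert this using 1
  · simp only [rW]; congr 1; omega
  · simp only [rV]; congr 1; omega
theorem fd5 (h : Walk σ (d+1) d w v) {k l : ℕ} (hk' : k ≤ d) (hv : v 0 = v k)
    (hl : 1 ≤ l) (hlk : l < k) (hv' : v (d+1) = v l) :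
    FD d σ (w k) (v k) := by
  have := fd4 (h.rho hl (by omega) hv') (k := d+1+l-k) (by omega) (by omega)
    (by simp only [pV]; rw [if_pos (by omega), if_neg (by omega), hv]; congr 1; omega)
  convert this using 1
  · simp only [pW]; rw [if_neg (by omega)]; congr 1; omega
  · simp only [pV]; rw [if_neg (by omega)]; congr 1; omega
theorem fd6 (h : Walk σ (d+1) d w v) {k l : ℕ} (hk' : k ≤ d) (hv : v 0 = v k)
    (hl : 1 ≤ l) (hlk : l < k) (hv' : v (d+1) = v l) :
    FD d σ (w (l-1)) (v l) := by
  have := fd5 h.rev (k := d+1-l) (l := d+1-k) (by omega)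
    (by simp only [rV]; rw [Nat.sub_zero, hv']; congr 1; omega) (by omega) (by omega)
    (by simp only [rV]; rw [show d + 1 - (d+1) = 0 by omega, hv]; congr 1; omega)
  convert this using 1
  · simp only [rW]; congr 1; omega
  · simp only [rV]; congr 1; omega

theorem fd_branch [Fintype α] [Fintype ι] (hι : Fintype.card ι = d+1) (hα : Fintype.card α = d)
    (h : Walk σ (d+1) d w v) {i : ι} {x : α} (hf : FD d σ i x) :
    x = v 0 ∨ x = v (d+1) := by
  obtain ⟨w', v', h', rfl, rfl⟩ := hf
  obtain ⟨k, hk, hk', hvk⟩ := h'.getk hα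
  obtain ⟨j, hj, hj', hvj⟩ := h.vsurj hα (v' 0)
  by_contra hc
  push Not at hc
  rw [← hvj] at hc
  have key : ∀ a ≤ d, σ (w' a) (v' 0) ≠ v' 0 → w' a = w (j-1) ∨ w' a = w j := by
    intro a ha hm
    obtain ⟨i, hi, hwi⟩ := h.wsurj hι (w' a)
    rw [← hwi, ← hvj] at hm
    rcases h.inc_at hi hj hj' hm with h1 | h1 | h1 | h1
    · left; rw [← hwi, h1]
    · right; rw [← hwi, h1]
    · exact absurd h1.2.symm hc.1
    · exact absurd h1.2.symm hc.2
  have a1 := key 0 (by omega) (by rw [h'.inc (by omega)]; left; rfl)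
  have a2 := key (k-1) (by omega) (by
    rw [h'.inc (by omega)]; right; rw [hvk]; congr 1; omega)
  have a3 := key k (by omega) (by rw [h'.inc (by omega)]; left; exact hvk)
  have b1 := h'.winj 0 (by omega) (k-1) (by omega)
  have b2 := h'.winj 0 (by omega) k (by omega)
  have b3 := h'.winj (k-1) (by omega) k (by omega)
  rcases a1 with a1 | a1 <;> rcases a2 with a2 | a2 <;> rcases a3 with a3 | a3 <;>
    simp only [a1, a2, a3] at b1 b2 b3 <;> simp at b1 b2 b3 <;> omega

theorem fd_moves (h : FD d σ (i : ι) (x : α)) : σ i x ≠ x := by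
  obtain ⟨w', v', h', rfl, rfl⟩ := h
  rw [h'.inc (by omega)]; left; rfl

theorem fd_not5 [Fintype α] [Fintype ι] (hι : Fintype.card ι = d+1) (hα : Fintype.card α = d)
    (h : Walk σ (d+1) d w v) {k l : ℕ} (hk : 1 ≤ k) (hv : v 0 = v k)
    (hl : l ≤ d) (hlk : k < l) (hv' : v (d+1) = v l) :
    ¬ FD d σ (w k) (v k) := by
  rintro ⟨w', v', h', hw0, hv0⟩
  obtain ⟨k', hk1, hk2, hvk⟩ := h'.getk hα
  let S : Set α := {x | ∃ j, k < j ∧ j ≤ d ∧ x = v j}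
  have hS : ∀ j, 1 ≤ j → j ≤ d → (v j ∈ S ↔ k < j) := by
    intro j h1 h2
    constructor
    · rintro ⟨i, h3, h4, h5⟩
      have := h.vinj j h1 h2 i (by omega) h4 h5
      omega
    · intro h3; exact ⟨j, h3, h2, rfl⟩
  -- crossing edges
  have hcross : ∀ i ≤ d, i ≠ k → (v i ∈ S ↔ v (i+1) ∈ S) := by
    intro i hi hik
    by_cases h0 : i = 0
    · subst h0
      rw [hv, hS k hk (by omega), hS 1 le_rfl (by omega)]; omega
    by_cases h1 : i = d
    · subst h1
      rw [hv', hS i (by omega) (by omega), hS l (by omega) (by omega)]; omega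
    · rw [hS i (by omega) hi, hS (i+1) (by omega) (by omega)]; omega
  have hin : ∀ j, 1 ≤ j → j ≤ k' → v' j ∈ S := by
    intro j
    induction j with
    | zero => omega
    | succ j ih =>
      intro _ hj
      by_cases hj0 : j = 0
      · subst hj0
        rw [h'.next (by omega), hw0, hv0, h.step k (by omega), swap_apply_left, hS _ (by omega) (by omega)]
        omega
      have hprev := ih (by omega) (by omega)
      obtain ⟨i, hi, hwi⟩ := h.wsurj hι (w' j)
      have hik : i ≠ k := by
        rintro rfl
        have := h'.winj j (by omega) 0 (by omega) (by rw [← hwi, hw0])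
        omega
      have hn := h'.next (j := j) (by omega)
      rw [← hwi, h.step i (by omega)] at hn
      have hm : σ (w i) (v' j) ≠ v' j := by rw [hwi, h'.inc (by omega)]; left; rfl
      rcases (h.inc (by omega) _).1 hm with h1 | h1
      · rw [h1, swap_apply_left] at hn
        rw [hn, ← hcross i hi hik, ← h1]; exact hprev
      · rw [h1, swap_apply_right] at hn
        rw [hn, hcross i hi hik, ← h1]; exact hprev
  have := hin k' (by omega) le_rfl
  rw [← hvk, hv0, hS k hk (by omega)] at this
  omega

theorem fd_not6 [Fintype α] [Fintype ι] (hι : Fintype.card ι = d+1) (hα : Fintype.card α = d)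
    (h : Walk σ (d+1) d w v) {k l : ℕ} (hk : 1 ≤ k) (hv : v 0 = v k)
    (hl : l ≤ d) (hlk : k < l) (hv' : v (d+1) = v l) :
    ¬ FD d σ (w (l-1)) (v l) := by
  have := fd_not5 hι hα h.rev (k := d+1-l) (l := d+1-k) (by omega)
    (by simp only [rV]; rw [Nat.sub_zero, hv']; congr 1; omega) (by omega) (by omega)
    (by simp only [rV]; rw [show d + 1 - (d+1) = 0 by omega, hv]; congr 1; omega)
  convert this using 2
  · simp only [rW]; congr 1; omega
  · simp only [rV]; congr 1; omega

theorem fd_theta [Fintype α] [Fintype ι] [DecidableEq ι] (hι : Fintype.card ι = d+1) (hα : Fintype.card α = d)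
    (h : Walk σ (d+1) d w v) {k l : ℕ} (hk' : k ≤ d) (hv : v 0 = v k)
    (hl : 1 ≤ l) (hlk : l < k) (hv' : v (d+1) = v l) :
    ∃ F : Finset (ι × α), F.card = 6 ∧ ∀ i x, FD d σ i x ↔ (i, x) ∈ F := by
  have hvkl : v k ≠ v l := fun hc => by
    have := h.vinj k (by omega) hk' l hl (by omega) hc
    omega
  have hw : ∀ a b, a ≤ d → b ≤ d → a ≠ b → w a ≠ w b := fun a b ha hb hab hc =>
    hab (h.winj a (by omega) b (by omega) hc)
  have hld := h.llt (by omega) hv'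
  have hkk := h.kge (by omega) hv
  refine ⟨{(w 0, v k), (w (k-1), v k), (w k, v k), (w d, v l), (w l, v l), (w (l-1), v l)}, ?_, ?_⟩
  · repeat rw [Finset.card_insert_of_notMem]
    · simp
    · simp only [Finset.mem_singleton, Prod.mk.injEq]
      exact fun hc => hw _ _ (by omega) (by omega) (by omega) hc.1
    · simp only [Finset.mem_insert, Finset.mem_singleton, Prod.mk.injEq, and_true, not_or]
      exact ⟨hw _ _ (by omega) (by omega) (by omega), hw _ _ (by omega) (by omega) (by omega)⟩
    · simp [hvkl]
    · simp only [Finset.mem_insert, Finset.mem_singleton, Prod.mk.injEq, and_true, not_or, hvkl, and_false, not_false_eq_true]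
      exact hw _ _ (by omega) (by omega) (by omega)
    · simp only [Finset.mem_insert, Finset.mem_singleton, Prod.mk.injEq, and_true, not_or, hvkl, and_false, not_false_eq_true]
      exact ⟨hw _ _ (by omega) (by omega) (by omega), hw _ _ (by omega) (by omega) (by omega)⟩
  · intro i x
    constructor
    · intro hf
      have hm := fd_moves hf
      obtain ⟨a, ha, rfl⟩ := h.wsurj hι i
      rcases fd_branch hι hα h hf with rfl | rfl
      · rw [hv] at hm
        rcases h.inc_at ha (by omega) hk' hm with h1 | h1 | h1 | h1
        · simp [h1, hv]
        · simp [h1, hv]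
        · simp [h1.1, hv]
        · exact absurd (h1.2.symm.trans hv') hvkl
      · rw [hv'] at hm
        rcases h.inc_at ha (by omega) (by omega) hm with h1 | h1 | h1 | h1
        · simp [h1, hv']
        · simp [h1, hv']
        · exact absurd (hv.symm.trans h1.2) hvkl
        · simp [h1.1, hv']
    · simp only [Finset.mem_insert, Finset.mem_singleton, Prod.mk.injEq]
      rintro (⟨rfl, rfl⟩ | ⟨rfl, rfl⟩ | ⟨rfl, rfl⟩ | ⟨rfl, rfl⟩ | ⟨rfl, rfl⟩ | ⟨rfl, rfl⟩)
      · exact fd1 h hv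
      · exact fd4 h (by omega) hk' hv
      · exact fd5 h hk' hv hl hlk hv'
      · exact fd2 h hv'
      · exact fd3 h hl (by omega) hv'
      · exact fd6 h hk' hv hl hlk hv'

theorem fd_D [Fintype α] [Fintype ι] [DecidableEq ι] (hι : Fintype.card ι = d+1) (hα : Fintype.card α = d)
    (h : Walk σ (d+1) d w v) {k l : ℕ} (hk : 1 ≤ k) (hv : v 0 = v k)
    (hl : l ≤ d) (hkl : k ≤ l) (hv' : v (d+1) = v l) :
    ∃ F : Finset (ι × α), F.card = 4 ∧ ∀ i x, FD d σ i x ↔ (i, x) ∈ F := by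
  have hvkl : v k = v l → k = l := fun hc => by
    have := h.vinj k (by omega) (by omega) l (by omega) hl hc
    omega
  have hw : ∀ a b, a ≤ d → b ≤ d → a ≠ b → w a ≠ w b := fun a b ha hb hab hc =>
    hab (h.winj a (by omega) b (by omega) hc)
  have hld := h.llt (by omega) hv'
  have hkk := h.kge (by omega) hv
  refine ⟨{(w 0, v k), (w (k-1), v k), (w d, v l), (w l, v l)}, ?_, ?_⟩
  · repeat rw [Finset.card_insert_of_notMem]
    · simp
    · simp only [Finset.mem_singleton, Prod.mk.injEq]
      exact fun hc => hw _ _ (by omega) (by omega) (by omega) hc.1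
    · simp only [Finset.mem_insert, Finset.mem_singleton, Prod.mk.injEq, not_or]
      exact ⟨fun hc => hw _ _ (by omega) (by omega) (by omega) hc.1, fun hc => hw _ _ (by omega) (by omega) (by omega) hc.1⟩
    · simp only [Finset.mem_insert, Finset.mem_singleton, Prod.mk.injEq, not_or]
      exact ⟨fun hc => hw _ _ (by omega) (by omega) (by omega) hc.1, fun hc => hw _ _ (by omega) (by omega) (by omega) hc.1, fun hc => hw _ _ (by omega) (by omega) (by omega) hc.1⟩
  · intro i x
    constructor
    · intro hf
      have hm := fd_moves hf
      obtain ⟨a, ha, rfl⟩ := h.wsurj hι i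
      rcases hkl.eq_or_lt with rfl | hlt
      · have : x = v k := by
          rcases fd_branch hι hα h hf with rfl | rfl
          · exact hv
          · exact hv'
        subst this
        rcases h.inc_at ha (by omega) (by omega) hm with h1 | h1 | h1 | h1
        · simp [h1]
        · simp [h1]
        · simp [h1.1]
        · simp [h1.1]
      rcases fd_branch hι hα h hf with rfl | rfl
      · rw [hv] at hm
        rcases h.inc_at ha (by omega) (by omega) hm with h1 | h1 | h1 | h1
        · simp [h1, hv]
        · subst h1; rw [hv] at hf
          exact absurd hf (fd_not5 hι hα h hk hv hl hlt hv')
        · simp [h1.1, hv]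
        · exact absurd (hvkl (h1.2.symm.trans hv')) (by omega)
      · rw [hv'] at hm
        rcases h.inc_at ha (by omega) (by omega) hm with h1 | h1 | h1 | h1
        · subst h1; rw [hv'] at hf
          exact absurd hf (fd_not6 hι hα h hk hv hl hlt hv')
        · simp [h1, hv']
        · exact absurd (hvkl (hv.symm.trans h1.2)) (by omega)
        · simp [h1.1, hv']
    · simp only [Finset.mem_insert, Finset.mem_singleton, Prod.mk.injEq]
      rintro (⟨rfl, rfl⟩ | ⟨rfl, rfl⟩ | ⟨rfl, rfl⟩ | ⟨rfl, rfl⟩)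
      · exact fd1 h hv
      · exact fd4 h (by omega) (by omega) hv
      · exact fd2 h hv'
      · exact fd3 h (by omega) (by omega) hv'
end
end PH

set_option linter.all false
set_option linter.unusedSectionVars false
namespace PH
open Equiv

def cyc {m : ℕ} (a b c : Fin m) : Prop := (b - a).val < (c - a).val

theorem fsub {m : ℕ} (a b : Fin m) : (b - a).val = if a.val ≤ b.val then b.val - a.val else m + b.val - a.val := by
  rw [Fin.sub_def]
  simp only
  have := a.2; have := b.2
  split_ifs with h
  · rw [show m - a.val + b.val = (b.val - a.val) + m by omega, Nat.add_mod_right, Nat.mod_eq_of_lt (by omega)]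
  · rw [Nat.mod_eq_of_lt (by omega)]; omega

theorem fsub_inj {m : ℕ} {a b c : Fin m} (h : (b - a).val = (c - a).val) : b = c := by
  rw [fsub, fsub] at h
  have := a.2; have := b.2; have := c.2
  apply Fin.ext
  split_ifs at h <;> omega

theorem cyc_swap {m : ℕ} {a b c : Fin m} (h : b ≠ c) : cyc a c b ↔ ¬ cyc a b c := by
  unfold cyc
  have : (b - a).val ≠ (c - a).val := fun hc => h (fsub_inj hc)
  omega

theorem cyc_rev {m : ℕ} {a b c : Fin m} (h : b ≠ c) (h' : a ≠ b) (h'' : a ≠ c) : cyc c b a ↔ ¬ cyc a b c := by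
  unfold cyc
  simp only [fsub]
  have := a.2; have := b.2; have := c.2
  have := Fin.val_ne_of_ne h
  have := Fin.val_ne_of_ne h'
  have := Fin.val_ne_of_ne h''
  split_ifs <;> omega

section
variable {α : Type*} [DecidableEq α] {d : ℕ}

def O1 (d : ℕ) (w : ℕ → Fin (d+1)) (v : ℕ → α) : Prop :=
  ∃ k, 1 ≤ k ∧ k ≤ d ∧ v 0 = v k ∧ cyc (w (k-1)) (w 0) (w k)
def O2 (d : ℕ) (w : ℕ → Fin (d+1)) (v : ℕ → α) : Prop :=
  ∃ l, 1 ≤ l ∧ l ≤ d ∧ v (d+1) = v l ∧ cyc (w (l-1)) (w d) (w l)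

variable {σ : Fin (d+1) → Perm α} {w w' : ℕ → Fin (d+1)} {v v' : ℕ → α}

theorem O1_iff (h : Walk σ (d+1) d w v) {k} (hk : 1 ≤ k) (hk' : k ≤ d) (hv : v 0 = v k) :
    O1 d w v ↔ cyc (w (k-1)) (w 0) (w k) := by
  constructor
  · rintro ⟨k2, h1, h2, h3, h4⟩
    have := h.vinj k hk hk' k2 h1 h2 (hv.symm.trans h3)
    subst this; exact h4
  · intro h4; exact ⟨k, hk, hk', hv, h4⟩
theorem O2_iff (h : Walk σ (d+1) d w v) {k} (hk : 1 ≤ k) (hk' : k ≤ d) (hv : v (d+1) = v k) :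
    O2 d w v ↔ cyc (w (k-1)) (w d) (w k) := by
  constructor
  · rintro ⟨k2, h1, h2, h3, h4⟩
    have := h.vinj k hk hk' k2 h1 h2 (hv.symm.trans h3)
    subst this; exact h4
  · intro h4; exact ⟨k, hk, hk', hv, h4⟩

theorem Walk.wne (h : Walk σ (d+1) d w v) {a b : ℕ} (ha : a ≤ d) (hb : b ≤ d) (hab : a ≠ b) : w a ≠ w b :=
  fun hc => hab (h.winj a (by omega) b (by omega) hc)

theorem O1_rev [Fintype α] (hα : Fintype.card α = d) (h : Walk σ (d+1) d w v) :
    O1 d w v ↔ ¬ O2 d (rW d w) (rV d v) := by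
  obtain ⟨k, hk, hk', hv⟩ := h.getk hα
  rw [O1_iff h (by omega) hk' hv, O2_iff h.rev (k := d+1-k) (by omega) (by omega)
    (by simp only [rV]; rw [show d + 1 - (d+1) = 0 by omega, hv]; congr 1; omega)]
  simp only [rW]
  rw [show d - (d+1-k-1) = k by omega, show d - d = 0 by omega, show d - (d+1-k) = k-1 by omega]
  rw [cyc_rev]
  · exact h.wne (by omega) (by omega) (by omega)
  · exact h.wne (by omega) (by omega) (by omega)
  · exact h.wne (by omega) (by omega) (by omega)

theorem O2_rho (h : Walk σ (d+1) d w v) {l : ℕ} (hl : 1 ≤ l) (hl' : l ≤ d) (hv : v (d+1) = v l) :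
    O2 d (pW d l w) (pV d l v) ↔ ¬ O2 d w v := by
  have := h.llt hl' hv
  rw [O2_iff h hl hl' hv, O2_iff (h.rho hl hl' hv) hl hl'
    (by simp only [pV]; rw [if_neg (by omega), if_pos le_rfl]; congr 1; omega)]
  simp only [pW]
  rw [if_pos (by omega), if_neg (by omega), if_neg (by omega), show d + l - d = l by omega,
    show d + l - l = d by omega, cyc_swap]
  exact h.wne (by omega) (by omega) (by omega)

def NoCross (σ : Fin (d+1) → Perm α) : Prop :=
  ∀ w v, Walk σ (d+1) d w v → O1 d w v → O2 d w v → ∀ k l, 1 ≤ k → k ≤ d → v 0 = v k →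
    1 ≤ l → l ≤ d → v (d+1) = v l → k ≤ l ∧ (k = l → cyc (w (k-1)) (w 0) (w d))

theorem O1_rho (hN : NoCross σ) (h : Walk σ (d+1) d w v) {k l : ℕ} (hl : 1 ≤ l) (hl' : l ≤ d)
    (hv : v (d+1) = v l) (hk : 1 ≤ k) (hk' : k ≤ d) (hvk : v 0 = v k) (hkl : k ≤ l) :
    O1 d (pW d l w) (pV d l v) ↔ O1 d w v := by
  have := h.llt hl' hv
  have := h.kge hk hvk
  have hr := h.rho hl hl' hv
  have hvk' : pV d l v 0 = pV d l v k := by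
    simp only [pV]; rw [if_pos (by omega), if_pos (by omega), hvk]
  have hvl' : pV d l v (d+1) = pV d l v l := by
    simp only [pV]; rw [if_neg (by omega), if_pos le_rfl]; congr 1; omega
  rcases hkl.eq_or_lt with rfl | hlt
  · have e1 := O1_iff h hk hk' hvk
    have e2 := O2_iff h hl hl' hv
    have e3 := O1_iff hr hk hk' hvk'
    have e4 := O2_iff hr hl hl' hvl'
    have n1 := hN _ _ h
    have n2 := hN _ _ hr
    rw [e1, e2] at n1
    rw [e3, e4] at n2
    rw [e1, e3]
    replace n1 := fun a b => (n1 a b k k hk hk' hvk hl hl' hv).2 rfl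
    replace n2 := fun a b => (n2 a b k k hk hk' hvk' hl hl' hvl').2 rfl
    have p1 : pW d k w (k-1) = w (k-1) := by simp only [pW]; rw [if_pos (by omega)]
    have p2 : pW d k w 0 = w 0 := by simp only [pW]; rw [if_pos (by omega)]
    have p3 : pW d k w k = w d := by simp only [pW]; rw [if_neg (by omega)]; congr 1; omega
    have p4 : pW d k w d = w k := by simp only [pW]; rw [if_neg (by omega)]; congr 1; omega
    rw [p1, p2, p3, p4] at n2
    rw [p1, p2, p3]
    have q1 : ((w 0 - w (k-1)).val ≠ (w k - w (k-1)).val) := fun hc =>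
      h.wne (a := 0) (b := k) (by omega) (by omega) (by omega) (fsub_inj hc)
    have q2 : ((w 0 - w (k-1)).val ≠ (w d - w (k-1)).val) := fun hc =>
      h.wne (a := 0) (b := d) (by omega) (by omega) (by omega) (fsub_inj hc)
    unfold cyc at *
    omega
  · rw [O1_iff h hk hk' hvk, O1_iff hr hk hk' hvk']
    simp only [pW]
    rw [if_pos (by omega), if_pos (by omega), if_pos (by omega)]

/-! counting level -/
def nW (w : Perm (Fin (d+1))) (j : ℕ) : Fin (d+1) := w (Fin.ofNat (d+1) j)
def nV (v : Fin (d+2) → α) (j : ℕ) : α := v (Fin.ofNat (d+2) j)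

theorem nW_inj {w : Perm (Fin (d+1))} {i j : ℕ} (hi : i ≤ d) (hj : j ≤ d) (h : nW w i = nW w j) : i = j := by
  have := w.injective h
  have := congrArg Fin.val this
  simpa [Fin.ofNat, Nat.mod_eq_of_lt (Nat.lt_succ_of_le hi), Nat.mod_eq_of_lt (Nat.lt_succ_of_le hj)] using this

theorem Walk.congr (h : Walk σ (d+1) d w v) (hw : ∀ j ≤ d, w' j = w j) (hv : ∀ j ≤ d+1, v' j = v j) :
    Walk σ (d+1) d w' v' := by
  refine ⟨?_, ?_, ?_, ?_⟩
  · intro j hj; rw [hw j (by omega), hv j (by omega), hv (j+1) (by omega), h.step j hj]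
  · intro j hj; rw [hv j (by omega), hv (j+1) (by omega)]; exact h.ne j hj
  · intro a ha b hb; rw [hw a (by omega), hw b (by omega)]; exact h.winj a ha b hb
  · intro a ha ha' b hb hb'; rw [hv a (by omega), hv b (by omega)]; exact h.vinj a ha ha' b hb hb'

theorem O1_congr (hw : ∀ j ≤ d, w' j = w j) (hv : ∀ j ≤ d+1, v' j = v j) : O1 d w' v' ↔ O1 d w v := by
  unfold O1
  apply exists_congr
  intro k
  constructor
  · rintro ⟨h1, h2, h3⟩
    rw [hw _ (by omega), hw _ (by omega), hw k (by omega), hv _ (by omega), hv k (by omega)] at h3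
    exact ⟨h1, h2, h3⟩
  · rintro ⟨h1, h2, h3⟩
    rw [hw _ (by omega), hw _ (by omega), hw k (by omega), hv _ (by omega), hv k (by omega)]
    exact ⟨h1, h2, h3⟩

theorem O2_congr (hw : ∀ j ≤ d, w' j = w j) (hv : ∀ j ≤ d+1, v' j = v j) : O2 d w' v' ↔ O2 d w v := by
  unfold O2
  apply exists_congr
  intro k
  constructor
  · rintro ⟨h1, h2, h3⟩
    rw [hw _ (by omega), hw _ (by omega), hw k (by omega), hv _ (by omega), hv k (by omega)] at h3
    exact ⟨h1, h2, h3⟩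
  · rintro ⟨h1, h2, h3⟩
    rw [hw _ (by omega), hw _ (by omega), hw k (by omega), hv _ (by omega), hv k (by omega)]
    exact ⟨h1, h2, h3⟩

abbrev Pr (d : ℕ) (α : Type*) := Perm (Fin (d+1)) × (Fin (d+2) → α)

def Sim (τ : Pr d α) (w : ℕ → Fin (d+1)) (v : ℕ → α) : Prop :=
  (∀ j ≤ d, nW τ.1 j = w j) ∧ (∀ j ≤ d+1, nV τ.2 j = v j)

theorem Sim.ext {τ τ' : Pr d α} (h : Sim τ (nW τ'.1) (nV τ'.2)) : τ = τ' := by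
  apply Prod.ext
  · ext j
    have := h.1 j.val (by omega)
    simpa [nW] using congrArg Fin.val this
  · funext j
    have := h.2 j.val (by omega)
    simpa [nV] using this

def Tr (σ : Fin (d+1) → Perm α) (τ : Pr d α) : Prop := Walk σ (d+1) d (nW τ.1) (nV τ.2)

theorem lift (h : Walk σ (d+1) d w v) : ∃ τ : Pr d α, Tr σ τ ∧ Sim τ w v := by
  have hinj : Function.Injective (fun i : Fin (d+1) => w i) := by
    intro i j hij
    have := h.winj i (by omega) j (by omega) hij
    exact Fin.ext (by omega)
  let e : Perm (Fin (d+1)) := Equiv.ofBijective _ (Finite.injective_iff_bijective.1 hinj)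
  have hs : Sim (d := d) (e, fun j : Fin (d+2) => v j) w v := by
    constructor
    · intro j hj
      simp [nW, e, Fin.ofNat, Nat.mod_eq_of_lt (Nat.lt_succ_of_le hj)]
    · intro j hj
      simp [nV, Fin.ofNat, Nat.mod_eq_of_lt (Nat.lt_succ_of_le hj)]
  exact ⟨_, h.congr hs.1 hs.2, hs⟩

theorem half {X : Type*} {S : Finset X} (ρ : X → X) (hρ : ∀ x ∈ S, ρ x ∈ S) (hinv : ∀ x ∈ S, ρ (ρ x) = x)
    (p : X → Prop) [DecidablePred p] (ht : ∀ x ∈ S, (p (ρ x) ↔ ¬ p x)) : 2 * (S.filter p).card = S.card := by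
  have h1 : (S.filter p).card = (S.filter (fun x => ¬ p x)).card := by
    apply Finset.card_bij' (fun x _ => ρ x) (fun x _ => ρ x)
    · intro x hx; simp only [Finset.mem_filter] at hx ⊢
      exact ⟨hρ x hx.1, by rw [ht x hx.1]; simpa using hx.2⟩
    · intro x hx; simp only [Finset.mem_filter] at hx ⊢
      exact ⟨hρ x hx.1, by rw [ht x hx.1]; simpa using hx.2⟩
    · intro x hx; exact hinv x (Finset.mem_filter.1 hx).1
    · intro x hx; exact hinv x (Finset.mem_filter.1 hx).1
  have := Finset.card_filter_add_card_filter_not (s := S) p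
  omega

variable [Fintype α]

open Classical in
theorem per_sigma (hα : Fintype.card α = d) (hσ : ∀ i, (σ i).IsSwap) (hd : ∀ x, 2 ≤ deg σ x)
    (ht : ∀ x y : α, ∃ g ∈ Subgroup.closure (Set.range σ), g x = y) (hN : NoCross σ) :
    (Finset.univ.filter (fun τ : Pr d α => Tr σ τ)).card +
    2 * (Finset.univ.filter (fun τ : Pr d α => Tr σ τ ∧ (O1 d (nW τ.1) (nV τ.2) ∧ O2 d (nW τ.1) (nV τ.2)))).card = 12 := by
  have hι : Fintype.card (Fin (d+1)) = d+1 := by simp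
  -- partner map
  have hpart : ∀ τ : Pr d α, ∃ τ' : Pr d α, Tr σ τ → (Tr σ τ' ∧ ∃ l, 1 ≤ l ∧ l ≤ d ∧ nV τ.2 (d+1) = nV τ.2 l ∧
      Sim τ' (pW d l (nW τ.1)) (pV d l (nV τ.2))) := by
    intro τ
    by_cases h : Tr σ τ
    · obtain ⟨l, h1, h2, h3⟩ := Walk.getl h hα
      obtain ⟨τ', h4, h5⟩ := lift (Walk.rho h h1 h2.le h3)
      exact ⟨τ', fun _ => ⟨h4, l, h1, h2.le, h3, h5⟩⟩
    · exact ⟨τ, fun h' => absurd h' h⟩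
  choose ρ hρ using hpart
  let fd : Pr d α → Fin (d+1) × α := fun τ => (nW τ.1 0, nV τ.2 0)
  have hfd : ∀ τ, Tr σ τ → fd (ρ τ) = fd τ := by
    intro τ h
    obtain ⟨-, l, h1, h2, h3, h4⟩ := hρ τ h
    simp only [fd]
    rw [h4.1 0 (by omega), h4.2 0 (by omega)]
    simp only [pW, pV]; rw [if_pos (by omega), if_pos (by omega)]
  have hne : ∀ τ, Tr σ τ → ρ τ ≠ τ := by
    intro τ h he
    obtain ⟨-, l, h1, h2, h3, h4⟩ := hρ τ h
    have := h4.1 l h2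
    rw [he] at this
    have hl := Walk.llt h h2 h3
    simp only [pW] at this
    rw [if_neg (by omega), show d + l - l = d by omega] at this
    have := nW_inj h2 le_rfl this
    omega
  have hun : ∀ τ, Tr σ τ → ∀ τ', Tr σ τ' → fd τ' = fd τ → τ' = τ ∨ τ' = ρ τ := by
    intro τ h τ' h' he
    obtain ⟨hh, l, h1, h2, h3, h4⟩ := hρ τ h
    have e1 : nW τ'.1 0 = nW τ.1 0 := congrArg Prod.fst he
    have e2 : nV τ'.2 0 = nV τ.2 0 := congrArg Prod.snd he
    rcases uniq2 hι h h' e2 e1 h1 h2 h3 with h5 | h5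
    · left; exact Sim.ext h5
    · right; apply Sim.ext
      exact ⟨fun j hj => by rw [h5.1 j hj, h4.1 j hj], fun j hj => by rw [h5.2 j hj, h4.2 j hj]⟩
  have hinv : ∀ τ, Tr σ τ → ρ (ρ τ) = τ := by
    intro τ h
    have h1 := (hρ τ h).1
    have h2 := (hρ _ h1).1
    rcases hun τ h _ h2 (by rw [hfd _ h1, hfd _ h]) with h3 | h3
    · exact h3
    · exact absurd h3 (hne _ h1)
  set S := Finset.univ.filter (fun τ : Pr d α => Tr σ τ) with hS
  have hmem : ∀ τ, τ ∈ S ↔ Tr σ τ := by intro τ; simp [hS]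
  have hcard : ∀ F : Finset (Fin (d+1) × α), (∀ i x, FD d σ i x ↔ (i, x) ∈ F) → S.card = 2 * F.card := by
    intro F hF
    rw [Finset.card_eq_sum_card_fiberwise (f := fd) (t := F)]
    · rw [Finset.sum_const_nat (m := 2), mul_comm]
      rintro ⟨i, x⟩ hix
      obtain ⟨w, v, h, h1, h2⟩ := (hF i x).2 hix
      obtain ⟨τ, h3, h4⟩ := lift h
      have e : fd τ = (i, x) := by
        simp only [fd]; rw [h4.1 0 (by omega), h4.2 0 (by omega), h1, h2]
      have : S.filter (fun y => fd y = (i, x)) = {τ, ρ τ} := by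
        ext y
        simp only [Finset.mem_filter, hmem, Finset.mem_insert, Finset.mem_singleton]
        constructor
        · rintro ⟨a, b⟩; exact hun τ h3 y a (by rw [b, e])
        · rintro (rfl | rfl)
          · exact ⟨h3, e⟩
          · exact ⟨(hρ _ h3).1, by rw [hfd _ h3, e]⟩
      rw [this, Finset.card_pair (hne τ h3).symm]
    · intro τ hτ
      rw [Finset.mem_coe, hmem] at hτ
      exact (hF _ _).1 ⟨_, _, hτ, rfl, rfl⟩
  obtain ⟨w, v, h⟩ := exists_trav hσ (by rw [hι, hα]) hd ht
  rw [hα] at h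
  obtain ⟨k, hk, hk', hvk⟩ := h.getk hα
  obtain ⟨l, hl, hl', hvl⟩ := h.getl hα
  have hOO : ∀ τ, Tr σ τ → ¬ (∃ k l, 1 ≤ k ∧ k ≤ d ∧ nV τ.2 0 = nV τ.2 k ∧ 1 ≤ l ∧ l ≤ d ∧ nV τ.2 (d+1) = nV τ.2 l ∧ k ≤ l) →
     ¬ (O1 d (nW τ.1) (nV τ.2) ∧ O2 d (nW τ.1) (nV τ.2)) := by
    rintro τ hτ hn ⟨a, b⟩
    obtain ⟨k, hk, hk', hvk⟩ := Walk.getk hτ hα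
    obtain ⟨l, hl, hl', hvl⟩ := Walk.getl hτ hα
    exact hn ⟨k, l, by omega, hk', hvk, hl, hl'.le, hvl, (hN _ _ hτ a b k l (by omega) hk' hvk hl hl'.le hvl).1⟩
  have hTh : ∀ w v k l, Walk σ (d+1) d w v → k ≤ d → v 0 = v k → 1 ≤ l → l < k → v (d+1) = v l → S.card = 12 := by
    intro w v k l h hk hvk hl hlk hvl
    obtain ⟨F, hF, hF'⟩ := fd_theta hι hα h hk hvk hl hlk hvl
    rw [hcard F hF', hF]
  have hDD : ∀ w v k l, Walk σ (d+1) d w v → 1 ≤ k → v 0 = v k → l ≤ d → k ≤ l → v (d+1) = v l → S.card = 8 := by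
    intro w v k l h hk hvk hl hlk hvl
    obtain ⟨F, hF, hF'⟩ := fd_D hι hα h hk hvk hl hlk hvl
    rw [hcard F hF', hF]
  by_cases hkl : l < k
  · have h12 := hTh w v k l h hk' hvk hl hkl hvl
    rw [h12]
    have : Finset.univ.filter (fun τ : Pr d α => Tr σ τ ∧ (O1 d (nW τ.1) (nV τ.2) ∧ O2 d (nW τ.1) (nV τ.2))) = ∅ := by
      rw [Finset.filter_eq_empty_iff]
      rintro τ - ⟨hτ, ho⟩
      refine hOO τ hτ ?_ ho
      rintro ⟨k', l', a1, a2, a3, a4, a5, a6, a7⟩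
      have := hDD _ _ k' l' hτ a1 a3 a5 a7 a6
      omega
    rw [this]; rfl
  · have h8 := hDD w v k l h (by omega) hvk hl'.le (by omega) hvl
    have allD : ∀ τ, Tr σ τ → ∃ k, 1 ≤ k ∧ k ≤ d ∧ nV τ.2 0 = nV τ.2 k ∧ ∀ l, 1 ≤ l → l ≤ d → nV τ.2 (d+1) = nV τ.2 l → k ≤ l := by
      intro τ hτ
      obtain ⟨k, hk, hk', hvk⟩ := Walk.getk hτ hα
      refine ⟨k, by omega, hk', hvk, fun l h1 h2 h3 => ?_⟩
      by_contra hc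
      have := hTh _ _ k l hτ hk' hvk h1 (by omega) h3
      omega
    have c1 : 2 * (S.filter (fun τ => O2 d (nW τ.1) (nV τ.2))).card = S.card := by
      apply half ρ
      · intro τ hτ; rw [hmem] at hτ ⊢; exact (hρ τ hτ).1
      · intro τ hτ; rw [hmem] at hτ; exact hinv τ hτ
      · intro τ hτ; rw [hmem] at hτ
        obtain ⟨-, l, h1, h2, h3, h4⟩ := hρ τ hτ
        rw [O2_congr h4.1 h4.2, O2_rho hτ h1 h2 h3]
    have hR : ∀ τ : Pr d α, ∃ τ' : Pr d α, Tr σ τ → (Tr σ τ' ∧ Sim τ' (rW d (nW τ.1)) (rV d (nV τ.2))) := by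
      intro τ
      by_cases h : Tr σ τ
      · obtain ⟨τ', h4, h5⟩ := lift (Walk.rev h)
        exact ⟨τ', fun _ => ⟨h4, h5⟩⟩
      · exact ⟨τ, fun h' => absurd h' h⟩
    choose R hR using hR
    have hRR : ∀ τ, Tr σ τ → R (R τ) = τ := by
      intro τ hτ
      have h1 := hR τ hτ
      have h2 := hR _ h1.1
      apply Sim.ext
      constructor
      · intro j hj
        rw [h2.2.1 j hj]; simp only [rW]
        rw [h1.2.1 _ (by omega)]; simp only [rW]; congr 1; omega
      · intro j hj
        rw [h2.2.2 j hj]; simp only [rV]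
        rw [h1.2.2 _ (by omega)]; simp only [rV]; congr 1; omega
    have hRO : ∀ τ, Tr σ τ → (O1 d (nW τ.1) (nV τ.2) ↔ ¬ O2 d (nW (R τ).1) (nV (R τ).2)) := by
      intro τ hτ
      rw [O2_congr (hR τ hτ).2.1 (hR τ hτ).2.2, O1_rev hα hτ]
    have c2 : (S.filter (fun τ => O1 d (nW τ.1) (nV τ.2))).card = (S.filter (fun τ => ¬ O2 d (nW τ.1) (nV τ.2))).card := by
      apply Finset.card_bij' (fun x _ => R x) (fun x _ => R x)
      · intro x hx; simp only [Finset.mem_filter, hmem] at hx ⊢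
        exact ⟨(hR x hx.1).1, (hRO x hx.1).1 hx.2⟩
      · intro x hx; simp only [Finset.mem_filter, hmem] at hx ⊢
        exact ⟨(hR x hx.1).1, by rw [hRO _ (hR x hx.1).1, hRR x hx.1]; exact hx.2⟩
      · intro x hx; simp only [Finset.mem_filter, hmem] at hx; exact hRR x hx.1
      · intro x hx; simp only [Finset.mem_filter, hmem] at hx; exact hRR x hx.1
    have c3 := Finset.card_filter_add_card_filter_not (s := S) (fun τ => O2 d (nW τ.1) (nV τ.2))
    have hO1 : ∀ τ, Tr σ τ → (O1 d (nW (ρ τ).1) (nV (ρ τ).2) ↔ O1 d (nW τ.1) (nV τ.2)) := by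
      intro τ hτ
      obtain ⟨-, l, h1, h2, h3, h4⟩ := hρ τ hτ
      obtain ⟨k, k1, k2, k3, k4⟩ := allD τ hτ
      rw [O1_congr h4.1 h4.2, O1_rho hN hτ h1 h2 h3 k1 k2 k3 (k4 l h1 h2 h3)]
    have c4 : 2 * ((S.filter (fun τ => O1 d (nW τ.1) (nV τ.2))).filter (fun τ => O2 d (nW τ.1) (nV τ.2))).card = (S.filter (fun τ => O1 d (nW τ.1) (nV τ.2))).card := by
      apply half ρ
      · intro τ hτ; simp only [Finset.mem_filter, hmem] at hτ ⊢
        exact ⟨(hρ τ hτ.1).1, (hO1 τ hτ.1).2 hτ.2⟩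
      · intro τ hτ; simp only [Finset.mem_filter, hmem] at hτ; exact hinv τ hτ.1
      · intro τ hτ; simp only [Finset.mem_filter, hmem] at hτ
        obtain ⟨-, l, h1, h2, h3, h4⟩ := hρ τ hτ.1
        rw [O2_congr h4.1 h4.2, O2_rho hτ.1 h1 h2 h3]
    rw [Finset.filter_filter] at c4
    have c5 : Finset.univ.filter (fun τ : Pr d α => Tr σ τ ∧ (O1 d (nW τ.1) (nV τ.2) ∧ O2 d (nW τ.1) (nV τ.2))) = S.filter (fun τ => O1 d (nW τ.1) (nV τ.2) ∧ O2 d (nW τ.1) (nV τ.2)) := by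
      rw [hS, Finset.filter_filter]
    rw [c5]
    omega
end
end PH

set_option linter.all false
set_option linter.unusedSectionVars false
namespace PH
open Equiv

section
variable {α : Type*} [DecidableEq α]

structure Cyc (N : Perm α) (x : α) (p : ℕ) (A : Set α) : Prop where
  pos : 1 ≤ p
  per : (N ^ p) x = x
  inj : ∀ i < p, ∀ j < p, (N ^ i) x = (N ^ j) x → i = j
  mem : ∀ y, y ∈ A ↔ ∃ i < p, (N ^ i) x = y

theorem Cyc.mem_pow {N : Perm α} {x p A} (h : Cyc N x p A) (i : ℕ) : (N ^ i) x ∈ A := by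
  rw [h.mem]
  refine ⟨i % p, Nat.mod_lt _ h.pos, ?_⟩
  conv_rhs => rw [← Nat.div_add_mod i p, add_comm, pow_add, Perm.mul_apply]
  congr 1
  rw [pow_mul]
  exact (Function.IsFixedPt.perm_pow (show Function.IsFixedPt (N ^ p) x from h.per) _).symm

theorem Cyc.self {N : Perm α} {x p A} (h : Cyc N x p A) : x ∈ A := by
  simpa using h.mem_pow 0

theorem Cyc.ne_self {N : Perm α} {x p A} (h : Cyc N x p A) {i : ℕ} (h1 : 1 ≤ i) (h2 : i < p) : (N ^ i) x ≠ x := by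
  intro hc
  have := h.inj i h2 0 (by omega) (by simpa using hc)
  omega

theorem Cyc.shift {N : Perm α} {x p A} (h : Cyc N x p A) (a : ℕ) : Cyc N ((N ^ a) x) p A := by
  refine ⟨h.pos, ?_, ?_, ?_⟩
  · rw [← Perm.mul_apply, ← pow_add, add_comm, pow_add, Perm.mul_apply, h.per]
  · intro i hi j hj hij
    apply h.inj i hi j hj
    rw [← Perm.mul_apply, ← pow_add, ← Perm.mul_apply, ← pow_add, add_comm i, add_comm j, pow_add, pow_add, Perm.mul_apply, Perm.mul_apply] at hij
    exact (N ^ a).injective hij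
  · intro y
    constructor
    · intro hy
      have h2 : (N ^ (p * a)) x = x := by
        rw [pow_mul]
        exact Function.IsFixedPt.perm_pow (show Function.IsFixedPt (N ^ p) x from h.per) _
      obtain ⟨i, hi, rfl⟩ := (h.mem y).1 hy
      refine ⟨(p * a - a + i) % p, Nat.mod_lt _ h.pos, ?_⟩
      have key : ∀ n, (N ^ (n % p)) ((N ^ a) x) = (N ^ n) ((N ^ a) x) := by
        intro n
        conv_rhs => rw [← Nat.div_add_mod n p, add_comm, pow_add, Perm.mul_apply]
        congr 1
        rw [pow_mul]
        refine (Function.IsFixedPt.perm_pow (show Function.IsFixedPt (N ^ p) ((N ^ a) x) from ?_) _).symm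
        show (N ^ p) ((N ^ a) x) = (N ^ a) x
        rw [← Perm.mul_apply, ← pow_add, add_comm, pow_add, Perm.mul_apply, h.per]
      rw [key, ← Perm.mul_apply, ← pow_add]
      have : a ≤ p * a := Nat.le_mul_of_pos_left a h.pos
      rw [show p * a - a + i + a = i + p * a by omega, pow_add, Perm.mul_apply, h2]
    · rintro ⟨i, -, rfl⟩
      rw [← Perm.mul_apply, ← pow_add]
      exact h.mem_pow _

theorem Cyc.unshift {N : Perm α} {x p A} (a : ℕ) (h : Cyc N ((N ^ a) x) p A) : Cyc N x p A := by
  have hx : (N ^ (p * a - a)) ((N ^ a) x) = x := by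
    have : a ≤ p * a := Nat.le_mul_of_pos_left a h.pos
    have h2 : (N ^ (p * a)) ((N ^ a) x) = (N ^ a) x := by
      rw [pow_mul]
      exact Function.IsFixedPt.perm_pow (show Function.IsFixedPt (N ^ p) _ from h.per) _
    apply (N ^ a).injective
    rw [← Perm.mul_apply, ← pow_add, show a + (p * a - a) = p * a by omega, h2]
  have := h.shift (p * a - a)
  rwa [hx] at this

/-- before touching the swap -/
theorem pow_before (N : Perm α) (x y u : α) (a : ℕ)
    (h : ∀ i < a, (N ^ i) u ≠ x ∧ (N ^ i) u ≠ y) : ∀ i ≤ a, ((N * swap x y) ^ i) u = (N ^ i) u := by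
  intro i
  induction i with
  | zero => simp
  | succ i ih =>
    intro hi
    rw [pow_succ', Perm.mul_apply, ih (by omega), Perm.mul_apply,
      swap_apply_of_ne_of_ne (h i (by omega)).1 (h i (by omega)).2, pow_succ', Perm.mul_apply]

theorem join_first {N : Perm α} {x y : α} {q : ℕ} {B : Set α} (hy : Cyc N y q B) (hxB : x ∉ B) :
    ∀ i, 1 ≤ i → i ≤ q → ((N * swap x y) ^ i) x = (N ^ i) y := by
  intro i
  induction i with
  | zero => omega
  | succ i ih =>
    intro _ hi
    by_cases h0 : i = 0
    · subst h0; simp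
    rw [pow_succ', Perm.mul_apply, ih (by omega) (by omega), Perm.mul_apply, swap_apply_of_ne_of_ne, pow_succ', Perm.mul_apply]
    · intro hc; exact hxB (hc ▸ hy.mem_pow i)
    · exact hy.ne_self (by omega) (by omega)

theorem join_second {N : Perm α} {x y : α} {p q : ℕ} {A B : Set α} (hx : Cyc N x p A) (hy : Cyc N y q B)
    (hd : Disjoint A B) :
    ∀ i, 1 ≤ i → i ≤ p → ((N * swap x y) ^ (q + i)) x = (N ^ i) x := by
  intro i h1 h2
  have a1 := join_first hy (Set.disjoint_left.1 hd hx.self) q hy.pos le_rfl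
  have a2 := join_first hx (Set.disjoint_right.1 hd hy.self) i h1 h2
  rw [add_comm, pow_add, Perm.mul_apply, a1, hy.per, swap_comm, a2]

theorem Cyc.join {N : Perm α} {x y : α} {p q : ℕ} {A B : Set α} (hx : Cyc N x p A) (hy : Cyc N y q B)
    (hd : Disjoint A B) : Cyc (N * swap x y) x (q + p) (A ∪ B) := by
  have f1 := join_first hy (Set.disjoint_left.1 hd hx.self)
  have f2 := join_second hx hy hd
  have hper : ((N * swap x y) ^ (q + p)) x = x := by rw [f2 p hx.pos le_rfl, hx.per]
  have hne : ∀ i, 1 ≤ i → i < q + p → ((N * swap x y) ^ i) x ≠ x := by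
    intro i h1 h2
    by_cases hi : i ≤ q
    · rw [f1 i h1 hi]
      intro hc; exact Set.disjoint_left.1 hd hx.self (hc ▸ hy.mem_pow i)
    · obtain ⟨j, rfl⟩ : ∃ j, i = q + j := ⟨i - q, by omega⟩
      rw [f2 j (by omega) (by omega)]
      exact hx.ne_self (by omega) (by omega)
  have haux : ∀ i j, i < j → j < q + p → ((N * swap x y) ^ i) x ≠ ((N * swap x y) ^ j) x := by
    intro i j hij hj hc
    apply hne (j - i) (by omega) (by omega)
    apply ((N * swap x y) ^ i).injective
    rw [← Perm.mul_apply, ← pow_add, show i + (j - i) = j by omega, hc]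
  refine ⟨by have := hx.pos; omega, hper, ?_, ?_⟩
  · intro i hi j hj hij
    rcases lt_trichotomy i j with h | h | h
    · exact absurd hij (haux i j h hj)
    · exact h
    · exact absurd hij.symm (haux j i h hi)
  · intro u
    have hp := hx.pos
    have hq := hy.pos
    constructor
    · rintro (hu | hu)
      · obtain ⟨i, hi, rfl⟩ := (hx.mem u).1 hu
        by_cases h0 : i = 0
        · exact ⟨0, by omega, by simp [h0]⟩
        · exact ⟨q + i, by omega, f2 i (by omega) hi.le⟩
      · obtain ⟨i, hi, rfl⟩ := (hy.mem u).1 hu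
        by_cases h0 : i = 0
        · exact ⟨q, by omega, by rw [f1 q hq le_rfl, hy.per, h0]; rfl⟩
        · exact ⟨i, by omega, f1 i (by omega) hi.le⟩
    · rintro ⟨i, hi, rfl⟩
      by_cases h0 : i = 0
      · left; simpa [h0] using hx.self
      by_cases hiq : i ≤ q
      · right; rw [f1 i (by omega) hiq]; exact hy.mem_pow i
      · obtain ⟨j, rfl⟩ : ∃ j, i = q + j := ⟨i - q, by omega⟩
        left; rw [f2 j (by omega) (by omega)]; exact hx.mem_pow j

theorem Cyc.keep {N : Perm α} {x y u : α} {p : ℕ} {A : Set α} (h : Cyc N u p A) (hx : x ∉ A) (hy : y ∉ A) :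
    Cyc (N * swap x y) u p A := by
  have hp : ∀ i, ((N * swap x y) ^ i) u = (N ^ i) u := fun i =>
    pow_before N x y u i (fun j _ => ⟨fun hc => hx (hc ▸ h.mem_pow j), fun hc => hy (hc ▸ h.mem_pow j)⟩) i le_rfl
  refine ⟨h.pos, by rw [hp, h.per], ?_, ?_⟩
  · intro i hi j hj; rw [hp, hp]; exact h.inj i hi j hj
  · intro z; simp only [hp]; exact h.mem z

def Valid (M : Perm α) (e : ℕ) (P z P' z' : α) : Prop :=
  P ≠ z ∧ P' ≠ z' ∧ (∀ x, ∃ n : ℕ, ((M * swap P z * swap P' z') ^ n) P = x) ∧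
    ((M * swap P z * swap P' z') ^ e) P = P'

def OT (M : Perm α) (e : ℕ) (P z P' z' : α) : Prop :=
  (∃ x ≤ e, ((M * swap P z * swap P' z') ^ x) P = z) ∧ (∃ a < e, ((M * swap P z * swap P' z') ^ a) P = z')

theorem fin3_conn : ∀ a b a' b' : Fin 3, (∀ f : Fin 3 → Bool, f a = f b → f a' = f b' → ∀ i j, f i = f j) →
    (a ≠ b ∧ ((b' ≠ a ∧ b' ≠ b ∧ (a' = a ∨ a' = b)) ∨ (a' ≠ a ∧ a' ≠ b ∧ (b' = a ∨ b' = b)))) := by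
  decide

theorem fin3_cover : ∀ a b r i : Fin 3, a ≠ b → r ≠ a → r ≠ b → (i = a ∨ i = b ∨ i = r) := by decide

theorem fin3_sum (μ : Fin 3 → ℕ) (a b r : Fin 3) (h1 : a ≠ b) (h2 : r ≠ a) (h3 : r ≠ b) :
    μ a + μ b + μ r = μ 0 + μ 1 + μ 2 := by
  revert h1 h2 h3
  fin_cases a <;> fin_cases b <;> fin_cases r <;> simp <;> omega

variable {M : Perm α} {c : α → Fin 3} {μ : Fin 3 → ℕ} (HM : ∀ x, Cyc M x (μ (c x)) {y | c y = c x})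
  (hsurj : Function.Surjective c) {d : ℕ} (hd : μ 0 + μ 1 + μ 2 = d)

include HM in
theorem cM (x : α) : c (M x) = c x := by
  have := (HM x).mem_pow 1
  simpa using this

include HM hsurj in
theorem conn {P z P' z' : α} {e : ℕ} (h : Valid M e P z P' z') :
    (c P ≠ c z ∧ ((c z' ≠ c P ∧ c z' ≠ c z ∧ (c P' = c P ∨ c P' = c z)) ∨ (c P' ≠ c P ∧ c P' ≠ c z ∧ (c z' = c P ∨ c z' = c z)))) := by
  apply fin3_conn
  intro f hf hf'
  have key : ∀ a b : α, f (c a) = f (c b) → ∀ x, f (c (swap a b x)) = f (c x) := by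
    intro a b hab x
    rw [swap_apply_def]
    split_ifs with h1 h2
    · rw [h1, hab]
    · rw [h2, hab]
    · rfl
  have hn : ∀ n : ℕ, f (c (((M * swap P z * swap P' z') ^ n) P)) = f (c P) := by
    intro n
    induction n with
    | zero => rfl
    | succ n ih =>
      rw [pow_succ', Perm.mul_apply, Perm.mul_apply, Perm.mul_apply, cM HM, key _ _ hf, key _ _ hf', ih]
  have : ∀ i, f i = f (c P) := by
    intro i
    obtain ⟨x, rfl⟩ := hsurj i
    obtain ⟨n, rfl⟩ := h.2.2.1 x
    exact hn n
  intro i j; rw [this i, this j]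

/-- the joined cycle `M1` -/
theorem M1_cyc (HM : ∀ x, Cyc M x (μ (c x)) {y | c y = c x}) {P z : α} (h : c P ≠ c z) :
    Cyc (M * swap P z) P (μ (c z) + μ (c P)) ({y | c y = c P} ∪ {y | c y = c z}) := by
  apply (HM P).join (HM z)
  rw [Set.disjoint_left]
  intro y hy hy'
  exact h ((Eq.symm hy).trans hy')

theorem M1_z (HM : ∀ x, Cyc M x (μ (c x)) {y | c y = c x}) {P z : α} (h : c P ≠ c z) :
    ((M * swap P z) ^ (μ (c z))) P = z := by
  rw [join_first (HM z) h _ (HM z).pos le_rfl, (HM z).per]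

theorem M1_r (HM : ∀ x, Cyc M x (μ (c x)) {y | c y = c x}) {P z r : α} (h1 : c r ≠ c P) (h2 : c r ≠ c z) :
    Cyc (M * swap P z) r (μ (c r)) {y | c y = c r} :=
  (HM r).keep (fun h => h1 (Eq.symm h)) (fun h => h2 (Eq.symm h))

/-- case 1: `z'` in third colour, `P'` is the `a`-th on the joined cycle. -/
theorem case1 (HM : ∀ x, Cyc M x (μ (c x)) {y | c y = c x}) (hd : μ 0 + μ 1 + μ 2 = d)
    {P z P' z' : α} (h : c P ≠ c z) (h1 : c z' ≠ c P) (h2 : c z' ≠ c z) {a : ℕ}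
    (ha : a < d - μ (c z')) (hP' : P' = ((M * swap P z) ^ a) P) :
    Cyc (M * swap P z * swap P' z') P d Set.univ ∧
    (∀ i ≤ a, ((M * swap P z * swap P' z') ^ i) P = ((M * swap P z) ^ i) P) := by
  have hs := fin3_sum μ _ _ _ h h1 h2
  have hJ := M1_cyc HM h
  have hz'J : z' ∉ ({y | c y = c P} ∪ {y | c y = c z} : Set α) := by
    rintro (hc | hc)
    · exact h1 hc
    · exact h2 hc
  have hb : ∀ i ≤ a, ((M * swap P z * swap P' z') ^ i) P = ((M * swap P z) ^ i) P := by
    apply pow_before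
    intro i hi
    constructor
    · rw [hP']; intro hc
      have := hJ.inj i (by omega) a (by omega) hc
      omega
    · intro hc; exact hz'J (hc ▸ hJ.mem_pow i)
  refine ⟨?_, hb⟩
  apply Cyc.unshift a
  rw [hb a le_rfl, ← hP']
  have j := (hJ.shift a)
  rw [← hP'] at j
  have := j.join (M1_r HM h1 h2) (by
    rw [Set.disjoint_left]; rintro y (hy | hy) hy'
    · exact h1 ((Eq.symm hy').trans hy)
    · exact h2 ((Eq.symm hy').trans hy))
  convert this using 1
  · omega
  · symm; rw [Set.eq_univ_iff_forall]; intro y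
    rcases fin3_cover _ _ _ (c y) h h1 h2 with h | h | h
    · left; left; exact h
    · left; right; exact h
    · right; exact h

/-- case 2: `P'` in third colour, `z'` is the `a`-th on the joined cycle. -/
theorem case2 (HM : ∀ x, Cyc M x (μ (c x)) {y | c y = c x}) (hd : μ 0 + μ 1 + μ 2 = d)
    {P z P' z' : α} (h : c P ≠ c z) (h1 : c P' ≠ c P) (h2 : c P' ≠ c z) {a : ℕ}
    (ha : a < d - μ (c P')) (hz' : z' = ((M * swap P z) ^ a) P) :
    Cyc (M * swap P z * swap P' z') P d Set.univ ∧
    (∀ i ≤ a, ((M * swap P z * swap P' z') ^ i) P = ((M * swap P z) ^ i) P) ∧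
    ((M * swap P z * swap P' z') ^ (a + μ (c P'))) P = P' ∧
    (a < μ (c z) → ((M * swap P z * swap P' z') ^ (μ (c z) + μ (c P'))) P = z) := by
  have hs := fin3_sum μ _ _ _ h h1 h2
  have hJ := M1_cyc HM h
  have hz'J : P' ∉ ({y | c y = c P} ∪ {y | c y = c z} : Set α) := by
    rintro (hc | hc)
    · exact h1 hc
    · exact h2 hc
  rw [swap_comm P' z']
  have hb : ∀ i ≤ a, ((M * swap P z * swap z' P') ^ i) P = ((M * swap P z) ^ i) P := by
    apply pow_before
    intro i hi
    constructor
    · rw [hz']; intro hc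
      have := hJ.inj i (by omega) a (by omega) hc
      omega
    · intro hc; exact hz'J (hc ▸ hJ.mem_pow i)
  have j := (hJ.shift a)
  rw [← hz'] at j
  have hdis : Disjoint ({y | c y = c P} ∪ {y | c y = c z} : Set α) {y | c y = c P'} := by
    rw [Set.disjoint_left]; rintro y (hy | hy) hy'
    · exact h1 ((Eq.symm hy').trans hy)
    · exact h2 ((Eq.symm hy').trans hy)
  have hr := M1_r HM h1 h2
  have haz : ((M * swap P z * swap z' P') ^ a) P = z' := by rw [hb a le_rfl, hz']
  refine ⟨?_, hb, ?_, ?_⟩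
  · apply Cyc.unshift a
    rw [haz]
    have := j.join hr hdis
    convert this using 1
    · omega
    · symm; rw [Set.eq_univ_iff_forall]; intro y
      rcases fin3_cover _ _ _ (c y) h h1 h2 with h | h | h
      · left; left; exact h
      · left; right; exact h
      · right; exact h
  · rw [add_comm, pow_add, Perm.mul_apply, haz, join_first hr (Set.disjoint_left.1 hdis j.self) _ hr.pos le_rfl, hr.per]
  · intro haz'
    rw [show μ (c z) + μ (c P') = (μ (c P') + (μ (c z) - a)) + a by omega, pow_add, Perm.mul_apply, haz,
      join_second j hr hdis _ (by omega) (by omega), hz', ← Perm.mul_apply, ← pow_add,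
      show μ (c z) - a + a = μ (c z) by omega, M1_z HM h]

include HM hsurj hd in
/-- full classification -/
theorem valid_iff {P z P' z' : α} {e : ℕ} (he : e < d) :
    Valid M e P z P' z' ↔
      ((c P ≠ c z ∧ c z' ≠ c P ∧ c z' ≠ c z ∧ e < d - μ (c z') ∧ P' = ((M * swap P z) ^ e) P) ∨
       (c P ≠ c z ∧ c P' ≠ c P ∧ c P' ≠ c z ∧ μ (c P') ≤ e ∧ z' = ((M * swap P z) ^ (e - μ (c P'))) P)) := by
  constructor
  · intro h
    obtain ⟨h0, ⟨h1, h2, h3⟩ | ⟨h1, h2, h3⟩⟩ := conn HM hsurj h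
    · left
      have hs := fin3_sum μ _ _ _ h0 h1 h2
      obtain ⟨a, ha, ha'⟩ := ((M1_cyc HM h0).mem P').1 h3
      obtain ⟨k1, k2⟩ := case1 HM hd h0 h1 h2 (a := a) (by omega) ha'.symm
      have : e = a := k1.inj e he a (by omega) (by rw [h.2.2.2, k2 a le_rfl, ha'])
      subst this
      exact ⟨h0, h1, h2, by omega, ha'.symm⟩
    · right
      have hs := fin3_sum μ _ _ _ h0 h1 h2
      obtain ⟨a, ha, ha'⟩ := ((M1_cyc HM h0).mem z').1 h3
      obtain ⟨k1, k2, k3, -⟩ := case2 HM hd h0 h1 h2 (a := a) (by omega) ha'.symm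
      have : e = a + μ (c P') := k1.inj e he _ (by omega) (by rw [h.2.2.2, k3])
      subst this
      exact ⟨h0, h1, h2, by omega, by rw [Nat.add_sub_cancel, ha']⟩
  · rintro (⟨h0, h1, h2, h3, h4⟩ | ⟨h0, h1, h2, h3, h4⟩)
    · obtain ⟨k1, k2⟩ := case1 HM hd h0 h1 h2 h3 h4
      refine ⟨fun hc => h0 (by rw [hc]), ?_, ?_, ?_⟩
      · intro hc
        have := (M1_cyc HM h0).mem_pow e
        rw [← h4, hc] at this
        rcases this with h | h
        · exact h1 h
        · exact h2 h
      · intro x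
        obtain ⟨i, -, hi⟩ := (k1.mem x).1 trivial
        exact ⟨i, hi⟩
      · rw [k2 e le_rfl, h4]
    · obtain ⟨k1, k2, k3, -⟩ := case2 HM hd h0 h1 h2 (a := e - μ (c P')) (by have := fin3_sum μ _ _ _ h0 h1 h2; omega) h4
      refine ⟨fun hc => h0 (by rw [hc]), ?_, ?_, ?_⟩
      · intro hc
        have := (M1_cyc HM h0).mem_pow (e - μ (c P'))
        rw [← h4, ← hc] at this
        rcases this with h | h
        · exact h1 h
        · exact h2 h
      · intro x
        obtain ⟨i, -, hi⟩ := (k1.mem x).1 trivial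
        exact ⟨i, hi⟩
      · rw [Nat.sub_add_cancel h3] at k3; exact k3

include HM hsurj hd in
theorem valid_cyc {P z P' z' : α} {e : ℕ} (he : e < d) (h : Valid M e P z P' z') :
    Cyc (M * swap P z * swap P' z') P d Set.univ := by
  rcases (valid_iff HM hsurj hd he).1 h with ⟨h0, h1, h2, h3, h4⟩ | ⟨h0, h1, h2, h3, h4⟩
  · exact (case1 HM hd h0 h1 h2 h3 h4).1
  · exact (case2 HM hd h0 h1 h2 (a := e - μ (c P')) (by have := fin3_sum μ _ _ _ h0 h1 h2; omega) h4).1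

include HM hsurj hd in
theorem valid_OT {P z P' z' : α} {e : ℕ} (he : e < d) (h : Valid M e P z P' z') {x a : ℕ} (hx : x ≤ e)
    (hx' : ((M * swap P z * swap P' z') ^ x) P = z) (ha : a < e)
    (ha' : ((M * swap P z * swap P' z') ^ a) P = z') :
    x ≤ a ∧ c P ≠ c z ∧ c P' ≠ c P ∧ c P' ≠ c z ∧ μ (c z) + μ (c P') ≤ e ∧ z' = ((M * swap P z) ^ (e - μ (c P'))) P := by
  rcases (valid_iff HM hsurj hd he).1 h with ⟨h0, h1, h2, h3, h4⟩ | ⟨h0, h1, h2, h3, h4⟩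
  · exfalso
    have hk := (case1 HM hd h0 h1 h2 h3 h4).2 a ha.le
    have := (M1_cyc HM h0).mem_pow a
    rw [← hk, ha'] at this
    rcases this with h | h
    · exact h1 h
    · exact h2 h
  · have hs := fin3_sum μ _ _ _ h0 h1 h2
    have hp1 := (HM P).pos
    obtain ⟨k1, k2, k3, k4⟩ := case2 HM hd h0 h1 h2 (a := e - μ (c P')) (by omega) h4
    have ea : a = e - μ (c P') := k1.inj a (by omega) _ (by omega) (by rw [ha', k2 _ le_rfl, h4])
    by_cases hlt : e - μ (c P') < μ (c z)
    · exfalso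
      have := k1.inj x (by omega) (μ (c z) + μ (c P')) (by omega) (by rw [hx', k4 hlt])
      omega
    · have : x = μ (c z) := k1.inj x (by omega) (μ (c z)) (by omega) (by rw [hx', k2 _ (by omega), M1_z HM h0])
      exact ⟨by omega, h0, h1, h2, by omega, h4⟩

include HM hsurj hd in
theorem validOT_iff {P z P' z' : α} {e : ℕ} (he : e < d) :
    (Valid M e P z P' z' ∧ OT M e P z P' z') ↔
    (c P ≠ c z ∧ c P' ≠ c P ∧ c P' ≠ c z ∧ μ (c z) + μ (c P') ≤ e ∧ z' = ((M * swap P z) ^ (e - μ (c P'))) P) := by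
  constructor
  · rintro ⟨h, ⟨x, hx, hx'⟩, ⟨a, ha, ha'⟩⟩
    exact (valid_OT HM hsurj hd he h hx hx' ha ha').2
  · rintro ⟨h0, h1, h2, h3, h4⟩
    have hs := fin3_sum μ _ _ _ h0 h1 h2
    have hp1 := (HM P').pos
    obtain ⟨k1, k2, k3, k4⟩ := case2 HM hd h0 h1 h2 (a := e - μ (c P')) (by omega) h4
    refine ⟨(valid_iff HM hsurj hd he).2 (Or.inr ⟨h0, h1, h2, by omega, h4⟩), ⟨μ (c z), by omega, ?_⟩, ⟨e - μ (c P'), by omega, ?_⟩⟩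
    · rw [k2 _ (by omega), M1_z HM h0]
    · rw [k2 _ le_rfl, h4]
end
end PH

set_option linter.all false
set_option linter.unusedSectionVars false
namespace PH
open Equiv

section
variable {α : Type*} [DecidableEq α] {d : ℕ}

def fl (f : Fin (d+1) → Perm α) : ℕ → Perm α
  | 0 => 1
  | t+1 => f (Fin.ofNat (d+1) t) * fl f t

theorem fl_add (f : Fin (d+1) → Perm α) (t : ℕ) : fl f (t + (d+1)) = fl f t * fl f (d+1) := by
  induction t with
  | zero => rw [zero_add]; show _ = 1 * _; rw [one_mul]
  | succ t ih =>
    rw [show t + 1 + (d+1) = (t + (d+1)) + 1 by ring]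
    show f (Fin.ofNat (d+1) (t+(d+1))) * fl f (t + (d+1)) = f (Fin.ofNat (d+1) t) * fl f t * _
    rw [ih, mul_assoc]
    congr 2
    apply Fin.ext; simp [Fin.ofNat]

theorem fl_mul (f : Fin (d+1) → Perm α) (t a : ℕ) : fl f (t + a * (d+1)) = fl f t * fl f (d+1) ^ a := by
  induction a with
  | zero => simp
  | succ a ih =>
    rw [show t + (a+1) * (d+1) = (t + a * (d+1)) + (d+1) by ring, fl_add, ih, pow_succ, mul_assoc]

theorem fl_stay (f : Fin (d+1) → Perm α) {p u : α} {t t' : ℕ} (h : fl f t p = u) (htt : t ≤ t')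
    (hs : ∀ s, t ≤ s → s < t' → f (Fin.ofNat (d+1) s) u = u) : fl f t' p = u := by
  induction t', htt using Nat.le_induction with
  | base => exact h
  | succ n hn ih =>
    show f (Fin.ofNat (d+1) n) (fl f n p) = u
    rw [ih (fun s h1 h2 => hs s h1 (by omega)), hs n hn (by omega)]

def WW (w : ℕ → Fin (d+1)) : ℕ → ℕ
  | 0 => 0
  | j+1 => WW w j + (w (j+1) - w j).val

theorem WW_mod {w : ℕ → Fin (d+1)} (h0 : w 0 = 0) (j : ℕ) : WW w j % (d+1) = (w j).val := by
  induction j with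
  | zero => simp [WW, h0]
  | succ j ih =>
    show (WW w j + (w (j+1) - w j).val) % (d+1) = _
    rw [Nat.add_mod, ih, fsub]
    have h1 := (w j).isLt
    have h2 := (w (j+1)).isLt
    split_ifs with h
    · rw [Nat.mod_eq_of_lt (a := (w (j+1)).val - (w j).val) (by omega), Nat.add_sub_cancel' h, Nat.mod_eq_of_lt h2]
    · rw [Nat.mod_eq_of_lt (a := d+1 + (w (j+1)).val - (w j).val) (by omega),
        show (w j).val + (d + 1 + (w (j+1)).val - (w j).val) = (w (j+1)).val + (d+1) by omega, Nat.add_mod_right, Nat.mod_eq_of_lt h2]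

theorem WW_lt {w : ℕ → Fin (d+1)} (hw : ∀ i < d+1, ∀ j < d+1, w i = w j → i = j) {j : ℕ} (hj : j < d) :
    WW w j < WW w (j+1) ∧ WW w (j+1) < WW w j + (d+1) := by
  have h1 := (w (j+1) - w j).isLt
  have h2 : (w (j+1) - w j).val ≠ 0 := by
    intro hc
    have := hw (j+1) (by omega) j (by omega) (fsub_inj (a := w j) (by rw [hc]; simp))
    omega
  constructor
  · show _ < WW w j + (w (j+1) - w j).val
    omega
  · show WW w j + (w (j+1) - w j).val < _
    omega

theorem WW_mono {w : ℕ → Fin (d+1)} (j i : ℕ) : WW w j ≤ WW w (j+i) := by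
  induction i with
  | zero => exact le_rfl
  | succ i ih => exact ih.trans (Nat.le_add_right _ _)

theorem WW_mono' {w : ℕ → Fin (d+1)} {j i : ℕ} (h : j ≤ i) : WW w j ≤ WW w i := by
  obtain ⟨k, rfl⟩ := Nat.exists_eq_add_of_le h
  exact WW_mono j k

theorem WW_le {w : ℕ → Fin (d+1)} (j : ℕ) : WW w j ≤ j * d := by
  induction j with
  | zero => simp [WW]
  | succ j ih =>
    have h1 := (w (j+1) - w j).isLt
    show WW w j + (w (j+1) - w j).val ≤ _
    rw [add_mul]; omega

theorem res_eq {A : ℕ} {r : Fin (d+1)} (h : A % (d+1) = r.val) : Fin.ofNat (d+1) A = r := by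
  apply Fin.ext; simpa [Fin.ofNat] using h

theorem res_ne {A s : ℕ} {r : Fin (d+1)} (h : A % (d+1) = r.val) (h1 : A ≠ s) (h2 : s < A + (d+1)) (h3 : A < s + (d+1)) :
    Fin.ofNat (d+1) s ≠ r := by
  intro hc
  rw [← hc] at h
  have h' : A % (d+1) = s % (d+1) := by simpa [Fin.ofNat] using h
  have e1 := Nat.div_add_mod A (d+1)
  have e2 := Nat.div_add_mod s (d+1)
  rw [h'] at e1
  rcases lt_trichotomy (A / (d+1)) (s / (d+1)) with hl | hl | hl
  · have := Nat.mul_le_mul_left (d+1) (Nat.succ_le_of_lt hl)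
    rw [Nat.mul_succ] at this
    omega
  · rw [hl] at e1; omega
  · have := Nat.mul_le_mul_left (d+1) (Nat.succ_le_of_lt hl)
    rw [Nat.mul_succ] at this
    omega

def hat (σ : Fin (d+1) → Perm α) (w : ℕ → Fin (d+1)) (i : Fin (d+1)) : Perm α :=
  if i = w 0 ∨ i = w d then 1 else σ i

variable {σ : Fin (d+1) → Perm α} {w : ℕ → Fin (d+1)} {v : ℕ → α}

theorem hat_fix (h : Walk σ (d+1) d w v) {j : ℕ} (hj : 1 ≤ j) (hj' : j ≤ d) {i : Fin (d+1)}
    (h1 : i ≠ w j ∨ j = d) (h2 : i ≠ w (j-1) ∨ j = 1) : hat σ w i (v j) = v j := by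
  unfold hat
  split_ifs with hc
  · rfl
  push Not at hc
  obtain ⟨k, hk, rfl⟩ := h.wsurj (by simp) i
  by_contra hne
  have hk0 : k ≠ 0 := fun e => hc.1 (by rw [e])
  have hkd : k ≠ d := fun e => hc.2 (by rw [e])
  rcases (h.inc (by omega) _).1 hne with e | e
  · have := h.vinj j hj hj' k (by omega) (by omega) e
    subst this
    rcases h1 with h1 | h1
    · exact h1 rfl
    · exact hkd h1
  · have := h.vinj j hj hj' (k+1) (by omega) (by omega) e
    subst this
    rcases h2 with h2 | h2
    · exact h2 rfl
    · omega

theorem hat_step (h : Walk σ (d+1) d w v) {j : ℕ} (hj : 1 ≤ j) (hj' : j < d) :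
    hat σ w (w j) = swap (v j) (v (j+1)) := by
  unfold hat
  rw [if_neg, h.step j (by omega)]
  rintro (hc | hc)
  · have := h.winj j (by omega) 0 (by omega) hc; omega
  · have := h.winj j (by omega) d (by omega) hc; omega

theorem fwd (h : Walk σ (d+1) d w v) (h0 : w 0 = 0) {j : ℕ} (hj : j < d) : ∀ t, WW w j < t → t ≤ WW w (j+1) →
    fl (hat σ w) t (v 1) = v (j+1) := by
  induction j with
  | zero =>
    intro t h1 h2
    apply fl_stay (t := 0) _ rfl (by omega)
    intro s _ hs
    apply hat_fix h (by omega) (by omega)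
    · left
      have := WW_lt h.winj hj
      have e : WW w 0 = 0 := rfl
      have e1 : WW w (0+1) = WW w 1 := rfl
      exact res_ne (WW_mod h0 1) (by omega) (by omega) (by omega)
    · right; rfl
  | succ j ih =>
    intro t h1 h2
    have a1 := WW_lt h.winj (show j < d by omega)
    have a2 := WW_lt h.winj hj
    have hX := ih (by omega) (WW w (j+1)) a1.1 le_rfl
    have hX' : fl (hat σ w) (WW w (j+1) + 1) (v 1) = v (j+1+1) := by
      show hat σ w (Fin.ofNat (d+1) (WW w (j+1))) (fl (hat σ w) (WW w (j+1)) (v 1)) = _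
      rw [hX, res_eq (WW_mod h0 _), hat_step h (by omega) hj, swap_apply_left]
    apply fl_stay _ hX' (by omega)
    intro s hs hs'
    apply hat_fix h (by omega) (by omega)
    · left; exact res_ne (WW_mod h0 _) (by omega) (by omega) (by omega)
    · left; exact res_ne (WW_mod h0 _) (by simp only [Nat.add_sub_cancel]; omega) (by simp only [Nat.add_sub_cancel]; omega) (by simp only [Nat.add_sub_cancel]; omega)

theorem bwd (h : Walk σ (d+1) d w v) (h0 : w 0 = 0) {i : ℕ} : ∀ j, j + 1 + i = d → ∀ t, WW w (j+1) + i * (d+1) < t →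
    t ≤ WW w j + (i+1) * (d+1) → fl (hat σ w) t (v 1) = v (j+1) := by
  induction i with
  | zero =>
    intro j hj t h1 h2
    have a1 := WW_lt h.winj (show j < d by omega)
    apply fl_stay (t := WW w (j+1)) _ (fwd h h0 (by omega) _ a1.1 le_rfl) (by omega)
    intro s hs hs'
    apply hat_fix h (by omega) (by omega)
    · right; omega
    · left; exact res_ne (WW_mod h0 _) (by simp only [Nat.add_sub_cancel]; omega) (by simp only [Nat.add_sub_cancel]; omega) (by simp only [Nat.add_sub_cancel]; omega)
  | succ i ih =>
    intro j hj t h1 h2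
    have a1 := WW_lt h.winj (show j < d by omega)
    have a2 := WW_lt h.winj (show j + 1 < d by omega)
    have er : (i + 1 + 1) * (d+1) = (i+1) * (d+1) + (d+1) := by ring
    have er' : (i + 1) * (d+1) = i * (d+1) + (d+1) := by ring
    have md : ∀ k n, (WW w k + n * (d+1)) % (d+1) = (w k).val := by
      intro k n; rw [Nat.add_mul_mod_self_right, WW_mod h0]
    have hX := ih (j+1) (by omega) (WW w (j+1) + (i+1) * (d+1)) (by omega) le_rfl
    have hX' : fl (hat σ w) (WW w (j+1) + (i+1) * (d+1) + 1) (v 1) = v (j+1) := by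
      show hat σ w (Fin.ofNat (d+1) (WW w (j+1) + (i+1) * (d+1))) (fl (hat σ w) (WW w (j+1) + (i+1) * (d+1)) (v 1)) = _
      rw [hX, res_eq (md _ _), hat_step h (by omega) (by omega), swap_apply_right]
    apply fl_stay _ hX' (by omega)
    intro s hs hs'
    apply hat_fix h (by omega) (by omega)
    · left; exact res_ne (md _ (i+1)) (by omega) (by omega) (by omega)
    · left; exact res_ne (md _ (i+1+1)) (by simp only [Nat.add_sub_cancel]; omega) (by simp only [Nat.add_sub_cancel]; omega) (by simp only [Nat.add_sub_cancel]; omega)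

/-- the exponents depend only on `w` -/
theorem exists_n (w : ℕ → Fin (d+1)) (h0 : w 0 = 0) : ∃ n : ℕ → ℕ, ∀ (σ : Fin (d+1) → Perm α) (v : ℕ → α), Walk σ (d+1) d w v →
    ∀ j < d, ((fl (hat σ w) (d+1)) ^ (n j)) (v 1) = v (j+1) := by
  have key : ∀ j, ∃ a, j < d → ∀ (σ : Fin (d+1) → Perm α) (v : ℕ → α), Walk σ (d+1) d w v →
      fl (hat σ w) (0 + a * (d+1)) (v 1) = v (j+1) := by
    intro j
    have e := Nat.div_add_mod (WW w j) (d+1)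
    have e' := Nat.mod_lt (WW w j) (show 0 < d + 1 by omega)
    have ee : (WW w j / (d+1) + 1) * (d+1) = (d+1) * (WW w j / (d+1)) + (d+1) := by ring
    by_cases hc : (WW w j / (d+1) + 1) * (d+1) ≤ WW w (j+1)
    · exact ⟨WW w j / (d+1) + 1, fun hj σ v h => fwd h h0 hj _ (by omega) (by omega)⟩
    · refine ⟨WW w j / (d+1) + 1 + (d - (j+1)), fun hj σ v h => bwd h h0 (i := d - (j+1)) j (by omega) _ ?_ ?_⟩
      · rw [add_mul]; omega
      · rw [add_mul, add_mul (d - (j+1))]; omega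
  choose n hn using key
  refine ⟨n, fun σ v h j hj => ?_⟩
  have := hn j hj σ v h
  rw [fl_mul] at this
  exact this

end
end PH

set_option linter.all false
set_option linter.unusedSectionVars false
namespace PH
open Equiv

section
variable {α : Type*} [DecidableEq α] {d : ℕ}

theorem swap_sq {s : Perm α} (h : s.IsSwap) : s * s = 1 := by
  obtain ⟨a, b, -, rfl⟩ := h
  exact swap_mul_self a b

theorem fl_prod {σ : Fin (d+1) → Perm α} (hσ : ∀ i, (σ i).IsSwap) : (List.ofFn σ).prod * fl σ (d+1) = 1 := by
  have : ∀ t ≤ d+1, ((List.ofFn σ).take t).prod * fl σ t = 1 := by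
    intro t
    induction t with
    | zero => intro _; simp [fl]
    | succ t ih =>
      intro ht
      rw [List.prod_take_succ _ _ (by simpa using ht)]
      have e : (List.ofFn σ)[t]'(by simpa using ht) = σ (Fin.ofNat (d+1) t) := by
        rw [List.getElem_ofFn]; congr 1; apply Fin.ext; simp [Fin.ofNat, Nat.mod_eq_of_lt (show t < d+1 by omega)]
      rw [e]
      show _ * _ * (σ (Fin.ofNat (d+1) t) * fl σ t) = 1
      rw [mul_assoc, ← mul_assoc (σ _), swap_sq (hσ _), one_mul, ih (by omega)]
  have h := this (d+1) le_rfl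
  rwa [List.take_of_length_le (by simp)] at h

variable {σ : Fin (d+1) → Perm α} {w : ℕ → Fin (d+1)} {v : ℕ → α}

theorem Walk.isSwap (h : Walk σ (d+1) d w v) (i) : (σ i).IsSwap := by
  obtain ⟨k, hk, rfl⟩ := h.wsurj (by simp) i
  exact ⟨_, _, h.ne k (by omega), h.step k (by omega)⟩

def Qh (σ : Fin (d+1) → Perm α) (w : ℕ → Fin (d+1)) : Perm α := fl (hat σ w) (d+1)
def Yh (σ : Fin (d+1) → Perm α) (w : ℕ → Fin (d+1)) : Perm α := fl (hat σ w) (w d).val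

theorem flat (t : ℕ) (ht : t < d+1) : (Fin.ofNat (d+1) t).val = t := by
  simp [Fin.ofNat, Nat.mod_eq_of_lt ht]

theorem split1 (h : Walk σ (d+1) d w v) (h0 : w 0 = 0) (hd : 1 ≤ d) : ∀ t, t + 1 ≤ (w d).val →
    fl σ (t+1) = fl (hat σ w) (t+1) * swap (v 1) (v 0) := by
  intro t
  have hq := (w d).isLt
  induction t with
  | zero =>
    intro _
    show σ (Fin.ofNat (d+1) 0) * 1 = hat σ w (Fin.ofNat (d+1) 0) * 1 * _
    have e : Fin.ofNat (d+1) 0 = w 0 := by rw [h0]; rfl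
    rw [e, h.step 0 (by omega), swap_comm]
    simp [hat]
  | succ t ih =>
    intro ht
    show σ (Fin.ofNat (d+1) (t+1)) * fl σ (t+1) = hat σ w (Fin.ofNat (d+1) (t+1)) * fl (hat σ w) (t+1) * _
    rw [ih (by omega), mul_assoc]
    congr 1
    unfold hat
    rw [if_neg]
    have := flat (t+1) (show t+1 < d+1 by omega)
    rintro (hc | hc)
    · rw [hc, h0] at this; simp at this
    · rw [hc] at this; omega

theorem wd_pos (h : Walk σ (d+1) d w v) (h0 : w 0 = 0) (hd : 1 ≤ d) : 1 ≤ (w d).val := by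
  by_contra hc
  have := h.winj d (by omega) 0 (by omega) (by rw [h0]; exact Fin.ext (show (w d).val = 0 by omega))
  omega

theorem split2 (h : Walk σ (d+1) d w v) (h0 : w 0 = 0) (hd : 1 ≤ d) : ∀ t, (w d).val + 1 ≤ t → t ≤ d+1 →
    fl σ t = fl (hat σ w) t * swap ((Yh σ w)⁻¹ (v d)) ((Yh σ w)⁻¹ (v (d+1))) * swap (v 1) (v 0) := by
  intro t ht
  have hq := wd_pos h h0 hd
  induction t, ht using Nat.le_induction with
  | base =>
    intro ht
    have e : Fin.ofNat (d+1) (w d).val = w d := by apply Fin.ext; rw [flat _ (w d).isLt]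
    show σ (Fin.ofNat (d+1) (w d).val) * fl σ (w d).val = hat σ w (Fin.ofNat (d+1) (w d).val) * fl (hat σ w) (w d).val * _ * _
    have s1 := split1 h h0 hd ((w d).val - 1) (by omega)
    rw [Nat.sub_add_cancel hq] at s1
    rw [s1, e, h.step d (by omega), ← mul_assoc]
    congr 1
    have : hat σ w (w d) = 1 := by simp [hat]
    rw [this, one_mul]
    rw [mul_swap_eq_swap_mul]
    show _ = swap (Yh σ w _) (Yh σ w _) * _
    simp [fl, Yh]
  | succ n hn ih =>
    intro ht
    show σ (Fin.ofNat (d+1) n) * fl σ n = hat σ w (Fin.ofNat (d+1) n) * fl (hat σ w) n * _ * _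
    rw [ih (by omega)]
    have : hat σ w (Fin.ofNat (d+1) n) = σ (Fin.ofNat (d+1) n) := by
      unfold hat
      rw [if_neg]
      have := flat n (show n < d+1 by omega)
      rintro (hc | hc)
      · rw [hc, h0] at this; simp at this; omega
      · rw [hc] at this; omega
    rw [this]; simp only [mul_assoc]

theorem Q_eq (h : Walk σ (d+1) d w v) (h0 : w 0 = 0) (hd : 1 ≤ d) :
    fl σ (d+1) * swap (v 1) (v 0) * swap ((Yh σ w)⁻¹ (v d)) ((Yh σ w)⁻¹ (v (d+1))) = Qh σ w := by
  rw [split2 h h0 hd (d+1) (by have := (w d).isLt; omega) le_rfl]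
  simp [Qh, mul_assoc]

def ee (w : ℕ → Fin (d+1)) : ℕ := WW w d / (d+1)

theorem ee_lt (hd : 1 ≤ d) (w : ℕ → Fin (d+1)) : ee w < d := by
  unfold ee
  rw [Nat.div_lt_iff_lt_mul (by omega)]
  have := WW_le (w := w) d
  rw [mul_add]; omega

theorem ee_eq (h0 : w 0 = 0) : WW w d = (w d).val + ee w * (d+1) := by
  have := Nat.div_add_mod (WW w d) (d+1)
  rw [WW_mod h0] at this
  unfold ee
  rw [mul_comm]; omega

theorem X_eq (σ : Fin (d+1) → Perm α) (w : ℕ → Fin (d+1)) (a : ℕ) (p : α) :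
    fl (hat σ w) (0 + a * (d+1)) p = (Qh σ w ^ a) p := by
  rw [fl_mul]; rfl

theorem Y_eq (σ : Fin (d+1) → Perm α) (w : ℕ → Fin (d+1)) (a : ℕ) (p : α) :
    fl (hat σ w) ((w d).val + a * (d+1)) p = Yh σ w ((Qh σ w ^ a) p) := by
  rw [fl_mul]; rfl

theorem valid_of_walk [Fintype α] (hα : Fintype.card α = d) (h : Walk σ (d+1) d w v) (h0 : w 0 = 0) (hd : 1 ≤ d) :
    Valid (fl σ (d+1)) (ee w) (v 1) (v 0) ((Yh σ w)⁻¹ (v d)) ((Yh σ w)⁻¹ (v (d+1))) := by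
  unfold Valid
  rw [Q_eq h h0 hd]
  refine ⟨(h.ne 0 (by omega)).symm, fun hc => h.ne d (by omega) ((Yh σ w)⁻¹.injective hc), ?_, ?_⟩
  · intro x
    obtain ⟨n, hn⟩ := exists_n (α := α) w h0
    obtain ⟨j, hj, hj', rfl⟩ := h.vsurj hα x
    refine ⟨n (j-1), ?_⟩
    have := hn σ v h (j-1) (by omega)
    rw [Nat.sub_add_cancel hj] at this
    exact this
  · rw [Perm.eq_inv_iff_eq, ← Y_eq, ← ee_eq h0]
    obtain ⟨d', rfl⟩ : ∃ d', d = d' + 1 := ⟨d - 1, by omega⟩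
    exact fwd h h0 (by omega) _ (WW_lt h.winj (by omega)).1 le_rfl

theorem sub_of_res {A s : ℕ} {a r : Fin (d+1)} (hA : A % (d+1) = a.val) (hs : s < d+1) (h : (A + s) % (d+1) = r.val) :
    (r - a).val = s := by
  have h1 : (A + s) % (d+1) = (A + (r - a).val) % (d+1) := by
    rw [h, Nat.add_mod, hA, fsub]
    have h1 := a.isLt
    have h2 := r.isLt
    split_ifs with h
    · rw [Nat.mod_eq_of_lt (a := r.val - a.val) (by omega), Nat.add_sub_cancel' h, Nat.mod_eq_of_lt h2]
    · rw [Nat.mod_eq_of_lt (a := d+1 + r.val - a.val) (by omega),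
        show a.val + (d + 1 + r.val - a.val) = r.val + (d+1) by omega, Nat.add_mod_right, Nat.mod_eq_of_lt h2]
  by_contra hne
  have := (r - a).isLt
  refine res_ne h (s := A + (r - a).val) (by omega) (by omega) (by omega) (res_eq ?_)
  rw [← h1, h]

theorem res_add {A : ℕ} {a : Fin (d+1)} (hA : A % (d+1) = a.val) (r : Fin (d+1)) : (A + (r - a).val) % (d+1) = r.val := by
  rw [Nat.add_mod, hA, fsub]
  have h1 := a.isLt
  have h2 := r.isLt
  split_ifs with h
  · rw [Nat.mod_eq_of_lt (a := r.val - a.val) (by omega), Nat.add_sub_cancel' h, Nat.mod_eq_of_lt h2]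
  · rw [Nat.mod_eq_of_lt (a := d+1 + r.val - a.val) (by omega),
      show a.val + (d + 1 + r.val - a.val) = r.val + (d+1) by omega, Nat.add_mod_right, Nat.mod_eq_of_lt h2]

theorem cross_to (h0 : w 0 = 0) {j : ℕ} {r : Fin (d+1)} (hr : r ≠ w j) (hc : cyc (w j) r (w (j+1))) :
    ∃ t, WW w j < t ∧ t < WW w (j+1) ∧ t % (d+1) = r.val := by
  refine ⟨WW w j + (r - w j).val, ?_, ?_, res_add (WW_mod h0 j) r⟩
  · have : (r - w j).val ≠ 0 := by
      intro hc; exact hr (fsub_inj (a := w j) (by rw [hc]; simp))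
    omega
  · exact Nat.add_lt_add_left hc _

theorem cross_of (h0 : w 0 = 0) {j : ℕ} {r : Fin (d+1)} {t : ℕ} (h1 : WW w j < t) (h2 : t < WW w (j+1)) (ht : t % (d+1) = r.val) :
    cyc (w j) r (w (j+1)) := by
  have e : WW w (j+1) = WW w j + (w (j+1) - w j).val := rfl
  have := (w (j+1) - w j).isLt
  unfold cyc
  rw [sub_of_res (WW_mod h0 j) (s := t - WW w j) (r := r) (by omega) (by rw [Nat.add_sub_cancel' h1.le, ht])]
  omega

theorem locate (w : ℕ → Fin (d+1)) {n t : ℕ} (h1 : 0 < t) (h2 : t ≤ WW w n) : ∃ j < n, WW w j < t ∧ t ≤ WW w (j+1) := by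
  induction n with
  | zero => have : WW w 0 = 0 := rfl; omega
  | succ n ih =>
    by_cases hc : t ≤ WW w n
    · obtain ⟨j, hj, hh⟩ := ih hc
      exact ⟨j, by omega, hh⟩
    · exact ⟨n, by omega, by omega, h2⟩

theorem O1_to (h : Walk σ (d+1) d w v) (h0 : w 0 = 0) (ho : O1 d w v) {k : ℕ} (hk : 1 ≤ k) (hk' : k ≤ d) (hv : v 0 = v k) :
    ∃ x ≤ ee w, (Qh σ w ^ x) (v 1) = v 0 ∧ WW w (k-1) < x * (d+1) ∧ x * (d+1) < WW w k := by
  have hc := (O1_iff h hk hk' hv).1 ho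
  have := h.kge hk hv
  obtain ⟨j, rfl⟩ : ∃ j, k = j + 1 := ⟨k - 1, by omega⟩
  rw [Nat.add_sub_cancel] at hc ⊢
  obtain ⟨t, t1, t2, t3⟩ := cross_to h0 (h.wne (by omega) (by omega) (by omega)) hc
  rw [h0] at t3
  have t4 := Nat.div_add_mod t (d+1)
  rw [t3] at t4
  have t5 : t / (d+1) * (d+1) = t := by rw [mul_comm]; simpa using t4
  refine ⟨t / (d+1), ?_, ?_, by omega, by omega⟩
  · unfold ee
    apply Nat.div_le_div_right
    have := WW_mono' (w := w) (show j + 1 ≤ d by omega)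
    omega
  · rw [← X_eq, zero_add, t5, hv]
    exact fwd h h0 (by omega) t t1 t2.le

theorem O1_of (h : Walk σ (d+1) d w v) (h0 : w 0 = 0) (hd : 1 ≤ d) {x : ℕ} (hx : x ≤ ee w) (hx' : (Qh σ w ^ x) (v 1) = v 0) : O1 d w v := by
  by_cases hx0 : x = 0
  · rw [hx0] at hx'
    exact absurd hx'.symm (h.ne 0 (by omega))
  have e := ee_eq h0
  have le : x * (d+1) ≤ ee w * (d+1) := Nat.mul_le_mul_right _ hx
  have pos : 0 < x * (d+1) := Nat.mul_pos (by omega) (by omega)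
  obtain ⟨j, hj, j1, j2⟩ := locate w (n := d) pos (by omega)
  rw [← X_eq, zero_add, fwd h h0 hj _ j1 j2] at hx'
  have hr : (x * (d+1)) % (d+1) = (w 0).val := by rw [h0]; simp
  have hne : x * (d+1) ≠ WW w (j+1) := by
    intro hc
    rw [hc, WW_mod h0] at hr
    exact h.wne (a := j+1) (b := 0) (by omega) (by omega) (by omega) (Fin.ext hr)
  exact ⟨j+1, by omega, by omega, hx'.symm, cross_of (j := j) h0 j1 (by omega) hr⟩

theorem O2_to [Fintype α] (h : Walk σ (d+1) d w v) (h0 : w 0 = 0) (ho : O2 d w v) {l : ℕ} (hl : 1 ≤ l) (hl' : l ≤ d) (hv : v (d+1) = v l) :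
    ∃ a < ee w, (Qh σ w ^ a) (v 1) = (Yh σ w)⁻¹ (v (d+1)) ∧ WW w (l-1) < (w d).val + a * (d+1) ∧ (w d).val + a * (d+1) < WW w l := by
  have hc := (O2_iff h hl hl' hv).1 ho
  have hlt := h.llt hl' hv
  obtain ⟨j, rfl⟩ : ∃ j, l = j + 1 := ⟨l - 1, by omega⟩
  rw [Nat.add_sub_cancel] at hc ⊢
  obtain ⟨t, t1, t2, t3⟩ := cross_to h0 (h.wne (by omega) (by omega) (by omega)) hc
  have t4 := Nat.div_add_mod t (d+1)
  rw [t3] at t4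
  have t5 : (w d).val + t / (d+1) * (d+1) = t := by rw [mul_comm, add_comm]; exact t4
  refine ⟨t / (d+1), ?_, ?_, by omega, by omega⟩
  · have := WW_mono' (w := w) (show j + 1 ≤ d by omega)
    have e := ee_eq h0
    exact Nat.lt_of_mul_lt_mul_right (a := d+1) (by omega)
  · rw [Perm.eq_inv_iff_eq, ← Y_eq, t5, hv]
    exact fwd h h0 (by omega) t t1 t2.le

theorem O2_of (h : Walk σ (d+1) d w v) (h0 : w 0 = 0) (hd : 1 ≤ d) {a : ℕ} (ha : a < ee w) (ha' : (Qh σ w ^ a) (v 1) = (Yh σ w)⁻¹ (v (d+1))) : O2 d w v := by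
  have e := ee_eq h0
  have le : (a+1) * (d+1) ≤ ee w * (d+1) := Nat.mul_le_mul_right _ ha
  rw [add_mul] at le
  have pos := wd_pos h h0 hd
  obtain ⟨j, hj, j1, j2⟩ := locate w (n := d) (t := (w d).val + a * (d+1)) (by omega) (by omega)
  rw [Perm.eq_inv_iff_eq, ← Y_eq, fwd h h0 hj _ j1 j2] at ha'
  have hr : ((w d).val + a * (d+1)) % (d+1) = (w d).val := by rw [Nat.add_mul_mod_self_right, Nat.mod_eq_of_lt (w d).isLt]
  have hlt := h.llt (l := j+1) (by omega) ha'.symm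
  have hne : (w d).val + a * (d+1) ≠ WW w (j+1) := by
    intro hc
    rw [hc, WW_mod h0] at hr
    exact h.wne (a := j+1) (b := d) (by omega) (by omega) (by omega) (Fin.ext hr)
  exact ⟨j+1, by omega, by omega, ha'.symm, cross_of (j := j) h0 j1 (by omega) hr⟩

theorem OO_iff [Fintype α] (hα : Fintype.card α = d) (h : Walk σ (d+1) d w v) (h0 : w 0 = 0) (hd : 1 ≤ d) :
    (O1 d w v ∧ O2 d w v) ↔ OT (fl σ (d+1)) (ee w) (v 1) (v 0) ((Yh σ w)⁻¹ (v d)) ((Yh σ w)⁻¹ (v (d+1))) := by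
  unfold OT
  rw [Q_eq h h0 hd]
  apply and_congr
  · constructor
    · intro ho
      obtain ⟨k, hk, hk', hv, -⟩ := id ho
      obtain ⟨x, a, b, -⟩ := O1_to h h0 ho hk hk' hv
      exact ⟨x, a, b⟩
    · rintro ⟨x, hx, hx'⟩; exact O1_of h h0 hd hx hx'
  · constructor
    · intro ho
      obtain ⟨k, hk, hk', hv, -⟩ := id ho
      obtain ⟨x, a, b, -⟩ := O2_to h h0 ho hk hk' hv
      exact ⟨x, a, b⟩
    · rintro ⟨x, hx, hx'⟩; exact O2_of h h0 hd hx hx'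

theorem noCross0 [Fintype α] (hα : Fintype.card α = d) {c : α → Fin 3} {μ : Fin 3 → ℕ}
    (HM : ∀ x, Cyc (fl σ (d+1)) x (μ (c x)) {y | c y = c x}) (hsurj : Function.Surjective c) (hμ : μ 0 + μ 1 + μ 2 = d)
    (hd : 1 ≤ d) (h : Walk σ (d+1) d w v) (h0 : w 0 = 0) (o1 : O1 d w v) (o2 : O2 d w v) (k l : ℕ) (hk : 1 ≤ k) (hk' : k ≤ d)
    (hv : v 0 = v k) (hl : 1 ≤ l) (hl' : l ≤ d) (hv' : v (d+1) = v l) : k ≤ l ∧ (k = l → cyc (w (k-1)) (w 0) (w d)) := by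
  obtain ⟨x, x1, x2, x3, x4⟩ := O1_to h h0 o1 hk hk' hv
  obtain ⟨a, a1, a2, a3, a4⟩ := O2_to h h0 o2 hl hl' hv'
  have hV := valid_of_walk hα h h0 hd
  have hQ := Q_eq h h0 hd
  have hxa := (valid_OT HM hsurj hμ (ee_lt hd w) hV x1 (by rw [hQ, x2]) a1 (by rw [hQ, a2])).1
  have hxm : x * (d+1) ≤ a * (d+1) := Nat.mul_le_mul_right _ hxa
  have pos := wd_pos h h0 hd
  constructor
  · by_contra hc
    have := WW_mono' (w := w) (show l ≤ k - 1 by omega)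
    omega
  · rintro rfl
    obtain ⟨j, rfl⟩ : ∃ j, k = j + 1 := ⟨k - 1, by omega⟩
    rw [Nat.add_sub_cancel] at *
    have hlt := WW_lt h.winj (show j < d by omega)
    unfold cyc
    rw [sub_of_res (WW_mod h0 j) (s := x * (d+1) - WW w j) (r := w 0) (by omega) (by
        rw [Nat.add_sub_cancel' x3.le, h0]; simp),
      sub_of_res (WW_mod h0 j) (s := (w d).val + a * (d+1) - WW w j) (r := w d) (by omega) (by
        rw [Nat.add_sub_cancel' a3.le, Nat.add_mul_mod_self_right, Nat.mod_eq_of_lt (w d).isLt])]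
    omega
end
end PH

set_option linter.all false
set_option linter.unusedSectionVars false
namespace PH
open Equiv

section
variable {α : Type*} [DecidableEq α] {d : ℕ}

theorem perm_iter (Q : Perm α) (n : ℕ) (x : α) : (Q ^ n) x = (Q : α → α)^[n] x := by
  rw [← Perm.iterate_eq_pow]

theorem cycTrans [Fintype α] (hα : Fintype.card α = d) {Q : Perm α} {P : α} (ht : ∀ x, ∃ n : ℕ, (Q ^ n) P = x) :
    Cyc Q P d Set.univ := by
  have hpos : 0 < Function.minimalPeriod Q P := by
    apply Function.IsPeriodicPt.minimalPeriod_pos (n := orderOf Q) (orderOf_pos Q)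
    show (Q : α → α)^[orderOf Q] P = P
    rw [← perm_iter, pow_orderOf_eq_one]; rfl
  have hinj : ∀ i < Function.minimalPeriod Q P, ∀ j < Function.minimalPeriod Q P, (Q ^ i) P = (Q ^ j) P → i = j := by
    intro i hi j hj h
    rw [perm_iter, perm_iter] at h
    exact Function.iterate_injOn_Iio_minimalPeriod hi hj h
  have hmem : ∀ x, ∃ i < Function.minimalPeriod Q P, (Q ^ i) P = x := by
    intro x
    obtain ⟨n, rfl⟩ := ht x
    refine ⟨n % Function.minimalPeriod Q P, Nat.mod_lt _ hpos, ?_⟩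
    rw [perm_iter, perm_iter, Function.iterate_mod_minimalPeriod_eq]
  have hcard : Fintype.card (Fin (Function.minimalPeriod Q P)) = Fintype.card α := by
    apply Fintype.card_of_bijective (f := fun i : Fin (Function.minimalPeriod Q P) => (Q ^ i.val) P)
    constructor
    · intro i j h; exact Fin.ext (hinj _ i.isLt _ j.isLt h)
    · intro x
      obtain ⟨i, hi, h⟩ := hmem x
      exact ⟨⟨i, hi⟩, h⟩
  rw [Fintype.card_fin, hα] at hcard
  rw [hcard] at hpos hinj hmem
  refine ⟨hpos, ?_, hinj, fun y => ⟨fun _ => hmem y, fun _ => trivial⟩⟩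
  rw [perm_iter, ← hcard, Function.iterate_minimalPeriod]

theorem Cyc.mod {N : Perm α} {x p A} (h : Cyc N x p A) (i : ℕ) : (N ^ (i % p)) x = (N ^ i) x := by
  conv_rhs => rw [← Nat.div_add_mod i p, add_comm, pow_add, Perm.mul_apply]
  congr 1
  rw [pow_mul]
  exact (Function.IsFixedPt.perm_pow (show Function.IsFixedPt (N ^ p) x from h.per) _).symm

theorem Cyc.eq_iff {N : Perm α} {x p A} (h : Cyc N x p A) (i j : ℕ) : (N ^ i) x = (N ^ j) x ↔ i % p = j % p := by
  rw [← h.mod i, ← h.mod j]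
  constructor
  · exact h.inj _ (Nat.mod_lt _ h.pos) _ (Nat.mod_lt _ h.pos)
  · intro e; rw [e]

def Good (d : ℕ) (v : ℕ → α) : Prop :=
  (∀ j < d+1, v j ≠ v (j+1)) ∧ (∀ i, 1 ≤ i → i ≤ d → ∀ j, 1 ≤ j → j ≤ d → v i = v j → i = j)

def sg (w : Perm (Fin (d+1))) (v : ℕ → α) (i : Fin (d+1)) : Perm α :=
  swap (v (w.symm i).val) (v ((w.symm i).val + 1))

theorem sg_walk (w : Perm (Fin (d+1))) {v : ℕ → α} (h : Good d v) : Walk (sg w v) (d+1) d (nW w) v := by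
  refine ⟨?_, h.1, ?_, h.2⟩
  · intro j hj
    simp [sg, nW, Nat.mod_eq_of_lt hj]
  · intro i hi j hj
    exact nW_inj (by omega) (by omega)

theorem sg_congr (w : Perm (Fin (d+1))) {v v' : ℕ → α} (h : ∀ j ≤ d+1, v' j = v j) : sg w v' = sg w v := by
  funext i
  have := (w.symm i).isLt
  unfold sg
  rw [h _ (by omega), h _ (by omega)]

theorem walk_sg {w : Perm (Fin (d+1))} {v : ℕ → α} {σ} (h : Walk σ (d+1) d (nW w) v) : σ = sg w v ∧ Good d v := by
  refine ⟨?_, h.ne, h.vinj⟩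
  funext i
  have := h.step (w.symm i).val (w.symm i).isLt
  simpa [nW, sg] using this

theorem hat_congr (w : Perm (Fin (d+1))) {v v' : ℕ → α} (h : ∀ j, 1 ≤ j → j ≤ d → v' j = v j) :
    hat (sg w v') (nW w) = hat (sg w v) (nW w) := by
  funext i
  unfold hat
  split_ifs with hc
  · rfl
  push Not at hc
  have h1 : (w.symm i).val ≠ 0 := by
    intro e
    apply hc.1
    rw [nW, ← e]; simp
  have h2 : (w.symm i).val ≠ d := by
    intro e
    apply hc.2
    have : Fin.ofNat (d+1) d = w.symm i := by apply Fin.ext; rw [flat _ (by omega), e]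
    rw [nW, this]; simp
  have := (w.symm i).isLt
  unfold sg
  rw [h _ (by omega) (by omega), h _ (by omega) (by omega)]

theorem base_good (hd : 2 ≤ d) {f : ℕ → α} (hf : ∀ i < d, ∀ j < d, f i = f j → i = j) : Good d (fun j => f ((j + (d-1)) % d)) := by
  have e1 : ∀ j, 1 ≤ j → j ≤ d → (j + (d-1)) % d = j - 1 := by
    intro j h1 h2
    rw [show j + (d-1) = (j-1) + d by omega, Nat.add_mod_right, Nat.mod_eq_of_lt (by omega)]
  have e0 : (0 + (d-1)) % d = d - 1 := by rw [zero_add, Nat.mod_eq_of_lt (by omega)]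
  have ed : (d+1 + (d-1)) % d = 0 := by rw [show d + 1 + (d-1) = d + d by omega]; simp
  constructor
  · intro j hj hc
    have := hf _ (Nat.mod_lt _ (by omega)) _ (Nat.mod_lt _ (by omega)) hc
    by_cases h0 : j = 0
    · subst h0
      rw [e0, e1 _ (by omega) (by omega)] at this; omega
    by_cases h1 : j = d
    · subst h1
      rw [ed, e1 _ (by omega) (by omega)] at this; omega
    rw [e1 _ (by omega) (by omega), e1 _ (by omega) (by omega)] at this; omega
  · intro i h1 h2 j h3 h4 hc
    have := hf _ (Nat.mod_lt _ (by omega)) _ (Nat.mod_lt _ (by omega)) hc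
    rw [e1 _ h1 h2, e1 _ h3 h4] at this; omega

theorem base_val (hd : 2 ≤ d) (f : ℕ → α) {j : ℕ} (hj : j < d) : (fun j => f ((j + (d-1)) % d)) (j+1) = f j := by
  show f _ = f _
  rw [show j + 1 + (d-1) = j + d by omega, Nat.add_mod_right, Nat.mod_eq_of_lt hj]

theorem exists_base [Fintype α] (hα : Fintype.card α = d) (hd : 2 ≤ d) : ∃ f : ℕ → α, ∀ i < d, ∀ j < d, f i = f j → i = j := by
  have e : α ≃ Fin d := Fintype.equivFinOfCardEq hα
  refine ⟨fun i => e.symm ⟨i % d, Nat.mod_lt _ (by omega)⟩, ?_⟩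
  intro i hi j hj h
  have := congrArg Fin.val (e.symm.injective h)
  simpa [Nat.mod_eq_of_lt hi, Nat.mod_eq_of_lt hj] using this

theorem trans_of_walk [Fintype α] (hα : Fintype.card α = d) {σ : Fin (d+1) → Perm α} {w : ℕ → Fin (d+1)} {v : ℕ → α}
    (h : Walk σ (d+1) d w v) (h0 : w 0 = 0) : Cyc (Qh σ w) (v 1) d Set.univ := by
  apply cycTrans hα
  intro x
  obtain ⟨n, hn⟩ := exists_n (α := α) w h0
  obtain ⟨j, hj, hj', rfl⟩ := h.vsurj hα x
  refine ⟨n (j-1), ?_⟩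
  have := hn σ v h (j-1) (by omega)
  rw [Nat.sub_add_cancel hj] at this
  exact this

/-- surjectivity onto valid tuples -/
theorem surj_tuple [Fintype α] (hα : Fintype.card α = d) (hd : 2 ≤ d) (w : Perm (Fin (d+1))) (h0 : nW w 0 = 0)
    {M : Perm α} {P z P' z' : α} (hV : Valid M (ee (nW w)) P z P' z') :
    ∃ v : ℕ → α, Good d v ∧ fl (sg w v) (d+1) = M ∧ v 1 = P ∧ v 0 = z ∧ (Yh (sg w v) (nW w))⁻¹ (v d) = P' ∧
      (Yh (sg w v) (nW w))⁻¹ (v (d+1)) = z' := by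
  obtain ⟨n, hn⟩ := exists_n (α := α) (nW w) h0
  obtain ⟨f, hf⟩ := exists_base hα hd
  obtain ⟨hPz, hPz', hT, hE⟩ := hV
  set Q := M * swap P z * swap P' z' with hQ
  have hC := cycTrans hα hT
  have hb := sg_walk w (base_good hd hf)
  have hbC := trans_of_walk hα hb h0
  have hbn := hn _ _ hb
  have nn : ∀ i < d, ∀ j < d, n i % d = n j % d → i = j := by
    intro i hi j hj hij
    apply hf i hi j hj
    rw [← base_val hd f hi, ← base_val hd f hj]
    refine (hbn i hi).symm.trans (Eq.trans ?_ (hbn j hj))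
    exact (hbC.eq_iff _ _).2 hij
  have n0 : n 0 % d = 0 := by
    have := (hbC.eq_iff (n 0) 0).1 (by rw [Qh, hbn 0 (by omega)]; rfl)
    simpa using this
  -- the new middle part
  have hg : ∀ i < d, ∀ j < d, (Q ^ (n i)) P = (Q ^ (n j)) P → i = j := by
    intro i hi j hj hij
    exact nn i hi j hj ((hC.eq_iff _ _).1 hij)
  set b : ℕ → α := fun j => (fun i => (Q ^ (n i)) P) ((j + (d-1)) % d) with hbdef
  have bv : ∀ j < d, b (j+1) = (Q ^ (n j)) P := fun j hj => base_val hd (fun i => (Q ^ (n i)) P) hj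
  have bG : Good d b := base_good hd (f := fun i => (Q ^ (n i)) P) hg
  have b1 : b 1 = P := by
    rw [bv 0 (by omega), ← hC.mod, n0]; rfl
  have bw := sg_walk w bG
  have bC := trans_of_walk hα bw h0
  have bn := hn _ _ bw
  have hQQ : Qh (sg w b) (nW w) = Q := by
    ext x
    obtain ⟨j, hj, hj', rfl⟩ := bw.vsurj hα x
    obtain ⟨i, hi, hi', hy⟩ := bw.vsurj hα (Qh (sg w b) (nW w) (b j))
    rw [← hy]
    have ej := bn (j-1) (by omega)
    have ei := bn (i-1) (by omega)
    rw [Nat.sub_add_cancel hj] at ej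
    rw [Nat.sub_add_cancel hi] at ei
    have hm : n (i-1) % d = (n (j-1) + 1) % d := by
      apply (bC.eq_iff _ _).1
      rw [pow_succ', Perm.mul_apply, Qh, ei, hy, ej]; rfl
    have vi := bv (i-1) (by omega)
    have vj := bv (j-1) (by omega)
    rw [Nat.sub_add_cancel hj] at vj
    rw [Nat.sub_add_cancel hi] at vi
    rw [vi, vj, ← Perm.mul_apply, ← pow_succ']
    exact (hC.eq_iff _ _).2 hm
  set Y := Yh (sg w b) (nW w) with hY
  have hbV := (valid_of_walk hα bw h0 (by omega)).2.2.2
  rw [Q_eq bw h0 (by omega), hQQ, b1, hE, ← hY] at hbV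
  -- the final walk
  let v : ℕ → α := fun j => if j = 0 then z else if j = d+1 then Y z' else b j
  have vb : ∀ j, 1 ≤ j → j ≤ d → v j = b j := by
    intro j h1 h2
    show (if j = 0 then z else if j = d+1 then Y z' else b j) = _
    rw [if_neg (by omega), if_neg (by omega)]
  have v0 : v 0 = z := rfl
  have vd : v (d+1) = Y z' := by
    show (if d+1 = 0 then z else if d+1 = d+1 then Y z' else b (d+1)) = _
    rw [if_neg (by omega), if_pos rfl]
  have hh : hat (sg w v) (nW w) = hat (sg w b) (nW w) := hat_congr w vb
  have hYv : Yh (sg w v) (nW w) = Y := by rw [hY]; unfold Yh; rw [hh]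
  have hQv : Qh (sg w v) (nW w) = Q := by rw [← hQQ]; unfold Qh; rw [hh]
  have vG : Good d v := by
    constructor
    · intro j hj
      by_cases hj0 : j = 0
      · subst hj0
        rw [v0, vb 1 (by omega) (by omega), b1]; exact hPz.symm
      by_cases hjd : j = d
      · rw [hjd, vd, vb d (by omega) (by omega)]
        intro hc
        apply hPz'
        rw [hbV, hc]; simp
      rw [vb j (by omega) (by omega), vb (j+1) (by omega) (by omega)]
      exact bG.1 j hj
    · intro i h1 h2 j h3 h4
      rw [vb i h1 h2, vb j h3 h4]
      exact bG.2 i h1 h2 j h3 h4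
  refine ⟨v, vG, ?_, ?_, v0, ?_, ?_⟩
  · have hYY : Y⁻¹ (Y z') = z' := by simp
    have := Q_eq (sg_walk w vG) h0 (by omega)
    rw [hQv, hYv, vd, vb d (by omega) le_rfl, ← hbV, v0, vb 1 le_rfl (by omega), b1, hYY, hQ] at this
    exact mul_right_cancel (mul_right_cancel this)
  · rw [vb 1 le_rfl (by omega), b1]
  · rw [hYv, vb d (by omega) le_rfl, hbV]
  · rw [hYv, vd]; simp

theorem inj_tuple [Fintype α] (hα : Fintype.card α = d) (hd : 2 ≤ d) (w : Perm (Fin (d+1))) (h0 : nW w 0 = 0)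
    {v v' : ℕ → α} (hv : Good d v) (hv' : Good d v') (hM : fl (sg w v) (d+1) = fl (sg w v') (d+1))
    (h1 : v 1 = v' 1) (hz : v 0 = v' 0) (h2 : (Yh (sg w v) (nW w))⁻¹ (v d) = (Yh (sg w v') (nW w))⁻¹ (v' d))
    (h3 : (Yh (sg w v) (nW w))⁻¹ (v (d+1)) = (Yh (sg w v') (nW w))⁻¹ (v' (d+1))) : ∀ j ≤ d+1, v j = v' j := by
  obtain ⟨n, hn⟩ := exists_n (α := α) (nW w) h0
  have a := sg_walk w hv
  have a' := sg_walk w hv'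
  have hQ : Qh (sg w v) (nW w) = Qh (sg w v') (nW w) := by
    rw [← Q_eq a h0 (by omega), ← Q_eq a' h0 (by omega), hM, h1, hz, h2, h3]
  have hm : ∀ j, 1 ≤ j → j ≤ d → v j = v' j := by
    intro j hj hj'
    have e := hn _ _ a (j-1) (by omega)
    have e' := hn _ _ a' (j-1) (by omega)
    rw [Nat.sub_add_cancel hj] at e e'
    rw [← e, ← e', h1]
    show (Qh _ _ ^ _) _ = (Qh _ _ ^ _) _
    rw [hQ]
  have hY : Yh (sg w v) (nW w) = Yh (sg w v') (nW w) := by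
    unfold Yh; rw [hat_congr w hm]
  intro j hj
  by_cases hj0 : j = 0
  · rw [hj0, hz]
  by_cases hjd : j = d+1
  · rw [hjd]; rw [hY] at h3; exact (Yh (sg w v') (nW w))⁻¹.injective h3
  exact hm j (by omega) (by omega)

theorem nV_mk (v : ℕ → α) {j : ℕ} (hj : j ≤ d+1) : nV (d := d) (fun i : Fin (d+2) => v i.val) j = v j := by
  simp [nV, Nat.mod_eq_of_lt (show j < d+2 by omega)]

open Classical in
theorem count0 [Fintype α] (hα : Fintype.card α = d) (hd : 2 ≤ d) (w : Perm (Fin (d+1))) (h0 : nW w 0 = 0) (M : Perm α)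
    (p : (Fin (d+2) → α) → Prop) (q : α × α × α × α → Prop)
    (hpq : ∀ v : Fin (d+2) → α, Good d (nV v) → fl (sg w (nV v)) (d+1) = M →
      (p v ↔ q (nV v 1, nV v 0, (Yh (sg w (nV v)) (nW w))⁻¹ (nV v d), (Yh (sg w (nV v)) (nW w))⁻¹ (nV v (d+1))))) :
    (Finset.univ.filter (fun v : Fin (d+2) → α => (Good d (nV v) ∧ fl (sg w (nV v)) (d+1) = M) ∧ p v)).card =
    (Finset.univ.filter (fun t : α × α × α × α => Valid M (ee (nW w)) t.1 t.2.1 t.2.2.1 t.2.2.2 ∧ q t)).card := by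
  apply Finset.card_bij (fun v _ => (nV v 1, nV v 0, (Yh (sg w (nV v)) (nW w))⁻¹ (nV v d), (Yh (sg w (nV v)) (nW w))⁻¹ (nV v (d+1))))
  · intro v hv
    simp only [Finset.mem_filter, Finset.mem_univ, true_and] at hv ⊢
    obtain ⟨⟨hG, hM⟩, hp⟩ := hv
    refine ⟨?_, (hpq v hG hM).1 hp⟩
    rw [← hM]
    exact valid_of_walk hα (sg_walk w hG) h0 (by omega)
  · intro v hv v' hv' he
    simp only [Finset.mem_filter, Finset.mem_univ, true_and] at hv hv'
    simp only [Prod.mk.injEq] at he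
    obtain ⟨h1, h2, h3, h4⟩ := he
    have := inj_tuple hα hd w h0 hv.1.1 hv'.1.1 (hv.1.2.trans hv'.1.2.symm) h1 h2 h3 h4
    funext j
    have := this j.val (by omega)
    simpa [nV] using this
  · rintro ⟨P, z, P', z'⟩ ht
    simp only [Finset.mem_filter, Finset.mem_univ, true_and] at ht
    obtain ⟨v, hG, hM, h1, h2, h3, h4⟩ := surj_tuple hα hd w h0 ht.1
    have hc : ∀ j ≤ d+1, nV (d := d) (fun i : Fin (d+2) => v i.val) j = v j := fun j hj => nV_mk v hj
    have hs := sg_congr w hc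
    have hG' : Good d (nV (d := d) (fun i : Fin (d+2) => v i.val)) := (walk_sg ((sg_walk w hG).congr (fun _ _ => rfl) hc)).2
    have ht' : (nV (d := d) (fun i : Fin (d+2) => v i.val) 1, nV (d := d) (fun i : Fin (d+2) => v i.val) 0,
      (Yh (sg w (nV (d := d) (fun i : Fin (d+2) => v i.val))) (nW w))⁻¹ (nV (d := d) (fun i : Fin (d+2) => v i.val) d),
      (Yh (sg w (nV (d := d) (fun i : Fin (d+2) => v i.val))) (nW w))⁻¹ (nV (d := d) (fun i : Fin (d+2) => v i.val) (d+1))) = (P, z, P', z') := by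
      rw [hs, hc 1 (by omega), hc 0 (by omega), hc d (by omega), hc (d+1) le_rfl, h1, h2, h3, h4]
    have hM' : fl (sg w (nV (d := d) (fun i : Fin (d+2) => v i.val))) (d+1) = M := by rw [hs, hM]
    refine ⟨fun i => v i.val, ?_, ht'⟩
    simp only [Finset.mem_filter, Finset.mem_univ, true_and]
    refine ⟨⟨hG', hM'⟩, (hpq _ hG' hM').2 ?_⟩
    rw [ht']; exact ht.2
end
end PH

set_option linter.all false
set_option linter.unusedSectionVars false
namespace PH
open Equiv

section
variable {α : Type*} [DecidableEq α] [Fintype α]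

theorem fiber_card {M : Perm α} {c : α → Fin 3} {μ : Fin 3 → ℕ} (HM : ∀ x, Cyc M x (μ (c x)) {y | c y = c x})
    (hsurj : Function.Surjective c) (i : Fin 3) : (Finset.univ.filter (fun x => c x = i)).card = μ i := by
  obtain ⟨x, rfl⟩ := hsurj i
  rw [← Finset.card_range (μ (c x))]
  symm
  apply Finset.card_bij (fun n _ => (M ^ n) x)
  · intro n hn
    simpa using (HM x).mem_pow n
  · intro a ha b hb h
    exact (HM x).inj a (by simpa using ha) b (by simpa using hb) h
  · intro y hy
    obtain ⟨n, hn, h⟩ := ((HM x).mem y).1 (by simpa using hy)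
    exact ⟨n, by simpa using hn, h⟩

def DD (c : α → Fin 3) (s : α × α × α) : Prop := c s.1 ≠ c s.2.1 ∧ c s.2.2 ≠ c s.1 ∧ c s.2.2 ≠ c s.2.1

open Classical in
theorem DD_card {c : α → Fin 3} {μ : Fin 3 → ℕ} (hf : ∀ i, (Finset.univ.filter (fun x => c x = i)).card = μ i) :
    (Finset.univ.filter (fun s : α × α × α => DD c s)).card = 6 * (μ 0 * μ 1 * μ 2) := by
  have key : ∀ g : Fin 3 → ℕ, ∑ x : α, g (c x) = μ 0 * g 0 + μ 1 * g 1 + μ 2 * g 2 := by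
    intro g
    rw [← Finset.sum_fiberwise (s := Finset.univ) (g := c)]
    rw [Fin.sum_univ_three]
    have : ∀ i, ∑ x ∈ Finset.univ.filter (fun x => c x = i), g (c x) = μ i * g i := by
      intro i
      rw [← hf i, Finset.sum_congr rfl (g := fun _ => g i)]
      · simp
      · intro x hx; rw [(Finset.mem_filter.1 hx).2]
    rw [this, this, this]
  have e4 : (Finset.univ.filter (fun s : α × α × α => DD c s)).card =
      ∑ P : α, ∑ z : α, ∑ r : α, (if (c P ≠ c z ∧ c r ≠ c P ∧ c r ≠ c z) then 1 else 0) := by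
    rw [Finset.card_filter, Fintype.sum_prod_type]
    refine Finset.sum_congr rfl fun P _ => ?_
    rw [Fintype.sum_prod_type]
    refine Finset.sum_congr rfl fun z _ => Finset.sum_congr rfl fun r _ => ?_
    exact if_congr Iff.rfl rfl rfl
  rw [e4]
  have e3 : ∀ a b : Fin 3, ∑ r : α, (if (a ≠ b ∧ c r ≠ a ∧ c r ≠ b) then 1 else 0) =
    μ 0 * (if (a ≠ b ∧ 0 ≠ a ∧ 0 ≠ b) then 1 else 0) + μ 1 * (if (a ≠ b ∧ 1 ≠ a ∧ 1 ≠ b) then 1 else 0) + μ 2 * (if (a ≠ b ∧ 2 ≠ a ∧ 2 ≠ b) then 1 else 0) := by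
    intro a b
    exact key (fun k => if (a ≠ b ∧ k ≠ a ∧ k ≠ b) then 1 else 0)
  have h2 : ∀ a : Fin 3, ∑ z : α, ∑ r : α, (if (a ≠ c z ∧ c r ≠ a ∧ c r ≠ c z) then 1 else 0) = _ := fun a =>
    key (fun b => ∑ r : α, (if (a ≠ b ∧ c r ≠ a ∧ c r ≠ b) then 1 else 0))
  have h1 : ∑ P : α, ∑ z : α, ∑ r : α, (if (c P ≠ c z ∧ c r ≠ c P ∧ c r ≠ c z) then 1 else 0) = _ :=
    key (fun a => ∑ z : α, ∑ r : α, (if (a ≠ c z ∧ c r ≠ a ∧ c r ≠ c z) then 1 else 0))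
  rw [h1]
  rw [h2, h2, h2]
  simp only [e3]
  simp
  ring

variable {M : Perm α} {c : α → Fin 3} {μ : Fin 3 → ℕ} (HM : ∀ x, Cyc M x (μ (c x)) {y | c y = c x})
  (hsurj : Function.Surjective c) {d : ℕ} (hd : μ 0 + μ 1 + μ 2 = d)

open Classical in
noncomputable def NN (M : Perm α) (e : ℕ) : ℕ :=
  (Finset.univ.filter (fun t : α × α × α × α => Valid M e t.1 t.2.1 t.2.2.1 t.2.2.2)).card +
  2 * (Finset.univ.filter (fun t : α × α × α × α => Valid M e t.1 t.2.1 t.2.2.1 t.2.2.2 ∧ OT M e t.1 t.2.1 t.2.2.1 t.2.2.2)).card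

include HM hsurj hd in
open Classical in
theorem NN_eq {e : ℕ} (he : e < d) : NN M e = (Finset.univ.filter (fun s : α × α × α => DD c s)).card
    + (Finset.univ.filter (fun s : α × α × α => DD c s ∧ μ (c s.2.2) ≤ e)).card
    + (Finset.univ.filter (fun s : α × α × α => DD c s ∧ d - μ (c s.2.2) ≤ e)).card := by
  have c1 : (Finset.univ.filter (fun t : α × α × α × α => c t.1 ≠ c t.2.1 ∧ c t.2.2.2 ≠ c t.1 ∧ c t.2.2.2 ≠ c t.2.1 ∧ e < d - μ (c t.2.2.2) ∧ t.2.2.1 = ((M * swap t.1 t.2.1) ^ e) t.1)).card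
      = (Finset.univ.filter (fun s : α × α × α => DD c s ∧ e < d - μ (c s.2.2))).card := by
    apply Finset.card_bij (fun t _ => (t.1, t.2.1, t.2.2.2))
    · rintro ⟨P, z, P', z'⟩ ht
      simp only [Finset.mem_filter, Finset.mem_univ, true_and] at ht ⊢
      exact ⟨⟨ht.1, ht.2.1, ht.2.2.1⟩, ht.2.2.2.1⟩
    · rintro ⟨P, z, P', z'⟩ ht ⟨P1, z1, P1', z1'⟩ ht1 h
      simp only [Finset.mem_filter, Finset.mem_univ, true_and] at ht ht1
      simp only [Prod.mk.injEq] at h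
      obtain ⟨rfl, rfl, rfl⟩ := h
      rw [ht.2.2.2.2, ht1.2.2.2.2]
    · rintro ⟨P, z, r⟩ hs
      simp only [Finset.mem_filter, Finset.mem_univ, true_and] at hs
      refine ⟨(P, z, ((M * swap P z) ^ e) P, r), ?_, rfl⟩
      simp only [Finset.mem_filter, Finset.mem_univ, true_and]
      exact ⟨hs.1.1, hs.1.2.1, hs.1.2.2, hs.2, trivial⟩
  have c2 : ∀ (p : Fin 3 → Fin 3 → Fin 3 → Prop) [∀ a b k, Decidable (p a b k)], (Finset.univ.filter (fun t : α × α × α × α => c t.1 ≠ c t.2.1 ∧ c t.2.2.1 ≠ c t.1 ∧ c t.2.2.1 ≠ c t.2.1 ∧ p (c t.1) (c t.2.1) (c t.2.2.1) ∧ t.2.2.2 = ((M * swap t.1 t.2.1) ^ (e - μ (c t.2.2.1))) t.1)).card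
      = (Finset.univ.filter (fun s : α × α × α => DD c s ∧ p (c s.1) (c s.2.1) (c s.2.2))).card := by
    intro p _
    apply Finset.card_bij (fun t _ => (t.1, t.2.1, t.2.2.1))
    · rintro ⟨P, z, P', z'⟩ ht
      simp only [Finset.mem_filter, Finset.mem_univ, true_and] at ht ⊢
      exact ⟨⟨ht.1, ht.2.1, ht.2.2.1⟩, ht.2.2.2.1⟩
    · rintro ⟨P, z, P', z'⟩ ht ⟨P1, z1, P1', z1'⟩ ht1 h
      simp only [Finset.mem_filter, Finset.mem_univ, true_and] at ht ht1
      simp only [Prod.mk.injEq] at h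
      obtain ⟨rfl, rfl, rfl⟩ := h
      rw [ht.2.2.2.2, ht1.2.2.2.2]
    · rintro ⟨P, z, r⟩ hs
      simp only [Finset.mem_filter, Finset.mem_univ, true_and] at hs
      refine ⟨(P, z, r, ((M * swap P z) ^ (e - μ (c r))) P), ?_, rfl⟩
      simp only [Finset.mem_filter, Finset.mem_univ, true_and]
      exact ⟨hs.1.1, hs.1.2.1, hs.1.2.2, hs.2, trivial⟩
  have hv : (Finset.univ.filter (fun t : α × α × α × α => Valid M e t.1 t.2.1 t.2.2.1 t.2.2.2)).card =
      (Finset.univ.filter (fun s : α × α × α => DD c s ∧ e < d - μ (c s.2.2))).card +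
      (Finset.univ.filter (fun s : α × α × α => DD c s ∧ μ (c s.2.2) ≤ e)).card := by
    rw [← c1, ← c2 (fun a b k => μ k ≤ e), ← Finset.card_union_of_disjoint]
    · congr 1
      ext t
      simp only [Finset.mem_filter, Finset.mem_univ, true_and, Finset.mem_union]
      exact valid_iff HM hsurj hd he
    · rw [Finset.disjoint_left]
      intro t ht ht'
      simp only [Finset.mem_filter, Finset.mem_univ, true_and] at ht ht'
      have := (M1_cyc HM ht.1).mem_pow e
      rw [← ht.2.2.2.2] at this
      rcases this with h | h
      · exact ht'.2.1 h
      · exact ht'.2.2.1 h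
  have ho : (Finset.univ.filter (fun t : α × α × α × α => Valid M e t.1 t.2.1 t.2.2.1 t.2.2.2 ∧ OT M e t.1 t.2.1 t.2.2.1 t.2.2.2)).card =
      (Finset.univ.filter (fun s : α × α × α => DD c s ∧ d - μ (c s.2.2) ≤ e)).card := by
    have : (Finset.univ.filter (fun s : α × α × α => DD c s ∧ d - μ (c s.2.2) ≤ e)).card =
        (Finset.univ.filter (fun s : α × α × α => DD c s ∧ μ (c s.2.1) + μ (c s.2.2) ≤ e)).card := by
      apply Finset.card_bij (fun s _ => (s.2.2, s.2.1, s.1))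
      · rintro ⟨P, z, r⟩ hs
        simp only [Finset.mem_filter, Finset.mem_univ, true_and] at hs ⊢
        unfold DD at hs ⊢
        have := fin3_sum μ _ _ _ hs.1.1 hs.1.2.1 hs.1.2.2
        dsimp only at this hs
        refine ⟨⟨hs.1.2.2, hs.1.2.1.symm, hs.1.1⟩, by omega⟩
      · rintro ⟨P, z, r⟩ hs ⟨P1, z1, r1⟩ hs1 h
        simp only [Prod.mk.injEq] at h ⊢
        tauto
      · rintro ⟨P, z, r⟩ hs
        simp only [Finset.mem_filter, Finset.mem_univ, true_and] at hs
        unfold DD at hs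
        have := fin3_sum μ _ _ _ hs.1.1 hs.1.2.1 hs.1.2.2
        dsimp only at this hs
        refine ⟨(r, z, P), ?_, rfl⟩
        simp only [Finset.mem_filter, Finset.mem_univ, true_and]
        unfold DD
        refine ⟨⟨hs.1.2.2, hs.1.2.1.symm, hs.1.1⟩, by omega⟩
    rw [this, ← c2 (fun a b k => μ b + μ k ≤ e)]
    congr 1
    ext t
    simp only [Finset.mem_filter, Finset.mem_univ, true_and]
    exact validOT_iff HM hsurj hd he
  have hcompl : (Finset.univ.filter (fun s : α × α × α => DD c s ∧ e < d - μ (c s.2.2))).card +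
      (Finset.univ.filter (fun s : α × α × α => DD c s ∧ d - μ (c s.2.2) ≤ e)).card = (Finset.univ.filter (fun s : α × α × α => DD c s)).card := by
    rw [← Finset.card_filter_add_card_filter_not (s := Finset.univ.filter (fun s : α × α × α => DD c s)) (fun s => e < d - μ (c s.2.2)),
      Finset.filter_filter, Finset.filter_filter]
    simp only [not_lt]
  unfold NN
  rw [hv, ho, ← hcompl]
  ring

include HM hsurj hd in
theorem NN_sum {e : ℕ} (he : e < d) : NN M e + NN M (d - 1 - e) = 24 * (μ 0 * μ 1 * μ 2) := by
  classical
  rw [NN_eq HM hsurj hd he, NN_eq HM hsurj hd (e := d - 1 - e) (by omega)]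
  have hle : ∀ i, μ i ≤ d := by
    intro i; fin_cases i <;> simp <;> omega
  have a1 : (Finset.univ.filter (fun s : α × α × α => DD c s ∧ μ (c s.2.2) ≤ e)).card +
      (Finset.univ.filter (fun s : α × α × α => DD c s ∧ d - μ (c s.2.2) ≤ d - 1 - e)).card = (Finset.univ.filter (fun s : α × α × α => DD c s)).card := by
    rw [← Finset.card_filter_add_card_filter_not (s := Finset.univ.filter (fun s : α × α × α => DD c s)) (fun s => μ (c s.2.2) ≤ e),
      Finset.filter_filter, Finset.filter_filter]
    congr 2
    ext s
    simp only [Finset.mem_filter, Finset.mem_univ, true_and]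
    have := hle (c s.2.2)
    refine and_congr_right fun _ => ?_
    omega
  have a2 : (Finset.univ.filter (fun s : α × α × α => DD c s ∧ μ (c s.2.2) ≤ d - 1 - e)).card +
      (Finset.univ.filter (fun s : α × α × α => DD c s ∧ d - μ (c s.2.2) ≤ e)).card = (Finset.univ.filter (fun s : α × α × α => DD c s)).card := by
    rw [← Finset.card_filter_add_card_filter_not (s := Finset.univ.filter (fun s : α × α × α => DD c s)) (fun s => μ (c s.2.2) ≤ d - 1 - e),
      Finset.filter_filter, Finset.filter_filter]
    congr 2
    ext s
    simp only [Finset.mem_filter, Finset.mem_univ, true_and]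
    have := hle (c s.2.2)
    refine and_congr_right fun _ => ?_
    omega
  have a3 := DD_card (fiber_card HM hsurj)
  have a4 : (Finset.univ.filter (fun s : α × α × α => DD c s)).card = 6 * (μ 0 * μ 1 * μ 2) := by
    convert a3
  omega
end
end PH

set_option linter.all false
set_option linter.unusedSectionVars false
namespace PH
open Equiv

section
variable {α : Type*} [DecidableEq α] {d : ℕ}

theorem fl_conj (f : Fin (d+1) → Perm α) (g : Perm α) (t : ℕ) : fl (fun i => g * f i * g⁻¹) t = g * fl f t * g⁻¹ := by
  induction t with
  | zero => show 1 = g * 1 * g⁻¹; simp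
  | succ t ih =>
    show (g * f _ * g⁻¹) * fl _ t = g * (f _ * fl f t) * g⁻¹
    rw [ih]; group

theorem fl_shift (f : Fin (d+1) → Perm α) (a : Fin (d+1)) (t : ℕ) : fl (fun i => f (i + a)) t * fl f a.val = fl f (t + a.val) := by
  induction t with
  | zero => show 1 * _ = _; rw [one_mul, zero_add]
  | succ t ih =>
    rw [show t + 1 + a.val = (t + a.val) + 1 by ring]
    show f (Fin.ofNat (d+1) t + a) * fl (fun i => f (i + a)) t * _ = f (Fin.ofNat (d+1) (t + a.val)) * fl f (t + a.val)
    rw [mul_assoc, ih]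
    congr 2
    apply Fin.ext
    simp [Fin.ofNat, Fin.val_add]

def rot (σ : Fin (d+1) → Perm α) (a : Fin (d+1)) (i : Fin (d+1)) : Perm α :=
  (fl σ a.val)⁻¹ * σ (i + a) * ((fl σ a.val)⁻¹)⁻¹

theorem fl_rot (σ : Fin (d+1) → Perm α) (a : Fin (d+1)) (t : ℕ) : fl (rot σ a) t = (fl σ a.val)⁻¹ * fl σ (t + a.val) := by
  show fl (fun i => _ * (fun i => σ (i + a)) i * _) t = _
  rw [fl_conj, ← fl_shift]; group

theorem fl_rot_full (σ : Fin (d+1) → Perm α) (a : Fin (d+1)) : fl (rot σ a) (d+1) = fl σ (d+1) := by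
  rw [fl_rot, add_comm (d+1) a.val, fl_add]; group

theorem fl_rot_back (σ : Fin (d+1) → Perm α) (a : Fin (d+1)) : fl (rot σ a) (d+1-a.val) = (fl σ a.val)⁻¹ * fl σ (d+1) := by
  rw [fl_rot, Nat.sub_add_cancel a.isLt.le]

variable {σ : Fin (d+1) → Perm α} {w : ℕ → Fin (d+1)} {v : ℕ → α}

theorem Walk.rot (h : Walk σ (d+1) d w v) (a : Fin (d+1)) :
    Walk (rot σ a) (d+1) d (fun j => w j - a) (fun j => (fl σ a.val)⁻¹ (v j)) := by
  refine ⟨?_, ?_, ?_, ?_⟩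
  · intro j hj
    show (fl σ a.val)⁻¹ * σ (w j - a + a) * ((fl σ a.val)⁻¹)⁻¹ = _
    rw [sub_add_cancel, h.step j hj, Equiv.swap_apply_apply]
  · intro j hj hc
    exact h.ne j hj ((fl σ a.val)⁻¹.injective hc)
  · intro i hi j hj hc
    exact h.winj i hi j hj (sub_left_injective hc)
  · intro i h1 h2 j h3 h4 hc
    exact h.vinj i h1 h2 j h3 h4 ((fl σ a.val)⁻¹.injective hc)

theorem cyc_sub (a b c x : Fin (d+1)) : cyc (a - x) (b - x) (c - x) ↔ cyc a b c := by
  unfold cyc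
  rw [sub_sub_sub_cancel_right, sub_sub_sub_cancel_right]

theorem O1_rot (a : Fin (d+1)) (g : Perm α) : O1 d (fun j => w j - a) (fun j => g (v j)) ↔ O1 d w v := by
  unfold O1
  simp only [cyc_sub, g.injective.eq_iff]
theorem O2_rot (a : Fin (d+1)) (g : Perm α) : O2 d (fun j => w j - a) (fun j => g (v j)) ↔ O2 d w v := by
  unfold O2
  simp only [cyc_sub, g.injective.eq_iff]

theorem noCross [Fintype α] (hα : Fintype.card α = d) {c : α → Fin 3} {μ : Fin 3 → ℕ}
    (HM : ∀ x, Cyc (fl σ (d+1)) x (μ (c x)) {y | c y = c x}) (hsurj : Function.Surjective c) (hμ : μ 0 + μ 1 + μ 2 = d)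
    (hd : 1 ≤ d) : NoCross σ := by
  intro w v h o1 o2 k l hk hk' hv hl hl' hv'
  have := noCross0 (σ := rot σ (w 0)) hα (by rw [fl_rot_full]; exact HM) hsurj hμ hd (h.rot (w 0)) (sub_self _)
    ((O1_rot _ _).2 o1) ((O2_rot _ _).2 o2) k l hk hk' (by simp [hv]) hl hl' (by simp [hv'])
  rwa [cyc_sub] at this

def shiftp (w : Perm (Fin (d+1))) (a : Fin (d+1)) : Perm (Fin (d+1)) := w.trans (Equiv.subRight a)

theorem nW_shiftp (w : Perm (Fin (d+1))) (a : Fin (d+1)) : nW (shiftp w a) = fun j => nW w j - a := by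
  funext j; rfl

theorem rot_sg (w : Perm (Fin (d+1))) (v : ℕ → α) (hG : Good d v) (a : Fin (d+1)) :
    rot (sg w v) a = sg (shiftp w a) (fun j => (fl (sg w v) a.val)⁻¹ (v j)) ∧ Good d (fun j => (fl (sg w v) a.val)⁻¹ (v j)) := by
  have := (sg_walk w hG).rot a
  rw [← nW_shiftp] at this
  exact walk_sg this

variable [Fintype α]
open Classical in
theorem rot_le (M : Perm α) (P : (ℕ → Fin (d+1)) → (ℕ → α) → Prop)
    (hP : ∀ w v a (g : Perm α), P w v → P (fun j => w j - a) (fun j => g (v j))) (w : Perm (Fin (d+1))) (a : Fin (d+1)) :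
    (Finset.univ.filter (fun v : Fin (d+2) → α => (Good d (nV v) ∧ fl (sg w (nV v)) (d+1) = M) ∧ P (nW w) (nV v))).card ≤
    (Finset.univ.filter (fun v : Fin (d+2) → α => (Good d (nV v) ∧ fl (sg (shiftp w a) (nV v)) (d+1) = M) ∧ P (nW (shiftp w a)) (nV v))).card := by
  apply Finset.card_le_card_of_injOn (fun v => fun j => (fl (sg w (nV v)) a.val)⁻¹ (v j))
  · intro v hv
    simp only [Finset.coe_filter, Finset.mem_univ, true_and, Set.mem_setOf_eq] at hv ⊢
    obtain ⟨⟨hG, hM⟩, hp⟩ := hv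
    obtain ⟨h1, h2⟩ := rot_sg w _ hG a
    refine ⟨⟨h2, ?_⟩, ?_⟩
    · have := fl_rot_full (sg w (nV v)) a
      rw [h1, hM] at this
      exact this
    · rw [nW_shiftp]; exact hP _ _ _ _ hp
  · intro v hv v' hv' he
    simp only [Finset.coe_filter, Finset.mem_univ, true_and, Set.mem_setOf_eq] at hv hv'
    obtain ⟨⟨hG, hM⟩, hp⟩ := hv
    obtain ⟨⟨hG', hM'⟩, hp'⟩ := hv'
    have e1 := (rot_sg w _ hG a).1
    have e2 := (rot_sg w _ hG' a).1
    have e3 : (fun j => (fl (sg w (nV v)) a.val)⁻¹ (nV v j)) = (fun j => (fl (sg w (nV v')) a.val)⁻¹ (nV v' j)) := by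
      funext j; exact congrFun he _
    rw [e3, ← e2] at e1
    have e4 := fl_rot_back (sg w (nV v)) a
    rw [e1, fl_rot_back, hM, hM'] at e4
    have e5 := mul_right_cancel e4
    funext j
    have := congrFun he j
    simp only at this
    rw [← e5] at this
    exact (Equiv.injective _) this

open Classical in
theorem rot_eq (M : Perm α) (P : (ℕ → Fin (d+1)) → (ℕ → α) → Prop)
    (hP : ∀ w v a (g : Perm α), P w v → P (fun j => w j - a) (fun j => g (v j))) (w : Perm (Fin (d+1))) (a : Fin (d+1)) :
    (Finset.univ.filter (fun v : Fin (d+2) → α => (Good d (nV v) ∧ fl (sg w (nV v)) (d+1) = M) ∧ P (nW w) (nV v))).card =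
    (Finset.univ.filter (fun v : Fin (d+2) → α => (Good d (nV v) ∧ fl (sg (shiftp w a) (nV v)) (d+1) = M) ∧ P (nW (shiftp w a)) (nV v))).card := by
  apply le_antisymm (rot_le M P hP w a)
  have h := rot_le M P hP (shiftp w a) (-a)
  have : shiftp (shiftp w a) (-a) = w := by
    ext j; simp [shiftp]
  rwa [this] at h

theorem WW_sub (w : ℕ → Fin (d+1)) (a : Fin (d+1)) (j : ℕ) : WW (fun j => w j - a) j = WW w j := by
  induction j with
  | zero => rfl
  | succ j ih =>
    show WW (fun j => w j - a) j + (w (j+1) - a - (w j - a)).val = WW w j + (w (j+1) - w j).val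
    rw [ih, sub_sub_sub_cancel_right]

open Classical in
noncomputable def FF (M : Perm α) (w : Perm (Fin (d+1))) : ℕ :=
  (Finset.univ.filter (fun v : Fin (d+2) → α => (Good d (nV v) ∧ fl (sg w (nV v)) (d+1) = M) ∧ True)).card +
  2 * (Finset.univ.filter (fun v : Fin (d+2) → α => (Good d (nV v) ∧ fl (sg w (nV v)) (d+1) = M) ∧ (O1 d (nW w) (nV v) ∧ O2 d (nW w) (nV v)))).card

theorem FF_eq (hα : Fintype.card α = d) (hd : 2 ≤ d) (M : Perm α) (w : Perm (Fin (d+1))) : FF M w = NN M (ee (nW w)) := by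
  classical
  unfold FF NN
  have hee : ee (nW (shiftp w (nW w 0))) = ee (nW w) := by
    unfold ee; rw [nW_shiftp, WW_sub]
  have h0 : nW (shiftp w (nW w 0)) 0 = 0 := by rw [nW_shiftp]; exact sub_self _
  have r1 := rot_eq M (fun _ _ => True) (fun _ _ _ _ _ => trivial) w (nW w 0)
  have r2 := rot_eq M (fun w v => O1 d w v ∧ O2 d w v) (fun w v a g h => ⟨(O1_rot a g).2 h.1, (O2_rot a g).2 h.2⟩) w (nW w 0)
  have c1 := count0 hα hd (shiftp w (nW w 0)) h0 M (fun _ => True) (fun _ => True) (fun _ _ _ => Iff.rfl)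
  have c2 := count0 hα hd (shiftp w (nW w 0)) h0 M (fun v => O1 d (nW (shiftp w (nW w 0))) (nV v) ∧ O2 d (nW (shiftp w (nW w 0))) (nV v))
    (fun t => OT M (ee (nW w)) t.1 t.2.1 t.2.2.1 t.2.2.2) (by
      intro v hG hM
      have := OO_iff hα (sg_walk (shiftp w (nW w 0)) hG) h0 (by omega)
      rw [hM, hee] at this
      exact this)
  rw [hee] at c1 c2
  congr 1
  · convert r1.trans c1 using 3
    simp
  · congr 1
    convert r2.trans c2 using 3

theorem WW_neg {w : ℕ → Fin (d+1)} (hw : ∀ i < d+1, ∀ j < d+1, w i = w j → i = j) (j : ℕ) (hj : j ≤ d) :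
    WW (fun j => - w j) j + WW w j = j * (d+1) := by
  induction j with
  | zero => simp [WW]
  | succ j ih =>
    have ih := ih (by omega)
    show WW (fun j => - w j) j + (- w (j+1) - - w j).val + (WW w j + (w (j+1) - w j).val) = _
    have h1 : - w (j+1) - - w j = w j - w (j+1) := by abel
    have hne : (w j).val ≠ (w (j+1)).val := fun hc => by
      have := hw j (by omega) (j+1) (by omega) (Fin.ext hc); omega
    have h2 : (w j - w (j+1)).val + (w (j+1) - w j).val = d + 1 := by
      rw [fsub, fsub]
      have := (w j).isLt; have := (w (j+1)).isLt
      split_ifs <;> omega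
    rw [h1, add_mul]; omega

def negp (w : Perm (Fin (d+1))) : Perm (Fin (d+1)) := w.trans (Equiv.neg _)

theorem ee_neg (hd : 2 ≤ d) (w : Perm (Fin (d+1))) : ee (nW (negp w)) = d - 1 - ee (nW w) := by
  have hw : ∀ i < d+1, ∀ j < d+1, nW w i = nW w j → i = j := fun i hi j hj => nW_inj (by omega) (by omega)
  have e : nW (negp w) = fun j => - nW w j := by funext j; rfl
  have h1 := WW_neg hw d le_rfl
  have hm := WW_mod (w := fun j => nW w j - nW w 0) (sub_self _) d
  rw [WW_sub] at hm
  have hne : (nW w d - nW w 0).val ≠ 0 := by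
    intro hc
    have := hw d (by omega) 0 (by omega) (fsub_inj (a := nW w 0) (by rw [hc]; simp))
    omega
  unfold ee
  rw [e]
  have a1 := Nat.div_add_mod (WW (nW w) d) (d+1)
  have a3 := ee_lt (show 1 ≤ d by omega) (nW w)
  unfold ee at a3
  have a2 := Nat.mod_lt (WW (nW w) d) (show 0 < d+1 by omega)
  set q := WW (nW w) d / (d+1)
  set r := WW (nW w) d % (d+1)
  apply Nat.div_eq_of_lt_le
  · have : (d - 1 - q) * (d+1) + (d+1) * q + (d+1) = d * (d+1) := by
      obtain ⟨k, hk⟩ : ∃ k, d = q + 1 + k := ⟨d - (q+1), by omega⟩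
      have : d - 1 - q = k := by omega
      rw [this]
      generalize d + 1 = m
      rw [hk]; ring
    omega
  · have : (d - 1 - q + 1) * (d+1) + (d+1) * q = d * (d+1) := by
      obtain ⟨k, hk⟩ : ∃ k, d = q + 1 + k := ⟨d - (q+1), by omega⟩
      have : d - 1 - q = k := by omega
      rw [this]
      generalize d + 1 = m
      rw [hk]; ring
    omega

theorem FF_sum (hα : Fintype.card α = d) (hd : 2 ≤ d) {M : Perm α} {c : α → Fin 3} {μ : Fin 3 → ℕ}
    (HM : ∀ x, Cyc M x (μ (c x)) {y | c y = c x}) (hsurj : Function.Surjective c) (hμ : μ 0 + μ 1 + μ 2 = d) :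
    ∑ w : Perm (Fin (d+1)), FF M w = 12 * ((d+1).factorial * (μ 0 * μ 1 * μ 2)) := by
  have h1 : ∑ w : Perm (Fin (d+1)), FF M w = ∑ w : Perm (Fin (d+1)), FF M (negp w) := by
    symm
    apply Function.Bijective.sum_comp (g := FF M)
    apply Function.Involutive.bijective
    intro w; ext j; simp [negp]
  have h2 : ∑ w : Perm (Fin (d+1)), (FF M w + FF M (negp w)) = (d+1).factorial * (24 * (μ 0 * μ 1 * μ 2)) := by
    rw [Finset.sum_congr rfl (g := fun _ => 24 * (μ 0 * μ 1 * μ 2))]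
    · simp [Fintype.card_perm]
    · intro w _
      rw [FF_eq hα hd, FF_eq hα hd, ee_neg hd]
      exact NN_sum HM hsurj hμ (ee_lt (by omega) _)
  rw [Finset.sum_add_distrib, ← h1] at h2
  have : (d+1).factorial * (24 * (μ 0 * μ 1 * μ 2)) = 2 * (12 * ((d+1).factorial * (μ 0 * μ 1 * μ 2))) := by ring
  omega
end
end PH

set_option linter.all false
set_option linter.unusedSectionVars false
namespace PH
open Equiv

section
variable {α : Type*} [DecidableEq α] {d : ℕ} [Fintype α]
variable {σ : Fin (d+1) → Perm α} {w : ℕ → Fin (d+1)} {v : ℕ → α}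

theorem walk_deg (hα : Fintype.card α = d) (h : Walk σ (d+1) d w v) (x : α) : 2 ≤ deg σ x := by
  obtain ⟨j, h1, h2, rfl⟩ := h.vsurj hα x
  unfold deg
  have hne : w (j-1) ≠ w j := h.wne (by omega) h2 (by omega)
  rw [← Finset.card_pair hne]
  apply Finset.card_le_card
  intro i hi
  simp only [Finset.mem_insert, Finset.mem_singleton] at hi
  simp only [Finset.mem_filter, Finset.mem_univ, true_and]
  rcases hi with rfl | rfl
  · apply (h.inc (by omega) _).2; right; rw [Nat.sub_add_cancel h1]
  · apply (h.inc (by omega) _).2; left; rfl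

theorem walk_trans (hα : Fintype.card α = d) (h : Walk σ (d+1) d w v) (x y : α) :
    ∃ g ∈ Subgroup.closure (Set.range σ), g x = y := by
  have key : ∀ j, j + 1 ≤ d → ∃ g ∈ Subgroup.closure (Set.range σ), g (v 1) = v (j+1) := by
    intro j
    induction j with
    | zero => intro _; exact ⟨1, one_mem _, rfl⟩
    | succ j ih =>
      intro hj
      obtain ⟨g, hg, hg'⟩ := ih (by omega)
      refine ⟨σ (w (j+1)) * g, mul_mem (Subgroup.subset_closure ⟨_, rfl⟩) hg, ?_⟩
      rw [Perm.mul_apply, hg', h.step _ (by omega), swap_apply_left]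
  obtain ⟨i, i1, i2, rfl⟩ := h.vsurj hα x
  obtain ⟨j, j1, j2, rfl⟩ := h.vsurj hα y
  obtain ⟨g, hg, hg'⟩ := key (i-1) (by omega)
  obtain ⟨k, hk, hk'⟩ := key (j-1) (by omega)
  rw [Nat.sub_add_cancel i1] at hg'
  rw [Nat.sub_add_cancel j1] at hk'
  refine ⟨k * g⁻¹, mul_mem hk (inv_mem hg), ?_⟩
  rw [← hg', ← hk']; simp

def PF (T : Perm α) (σ : Fin (d+1) → Perm α) : Prop :=
  (∀ i, (σ i).IsSwap) ∧ (List.ofFn σ).prod = T ∧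
  (∀ x y : α, ∃ g ∈ Subgroup.closure (Set.range σ), g x = y) ∧ (∀ x : α, 2 ≤ deg σ x)

theorem PF_sg (hα : Fintype.card α = d) (T : Perm α) (τ : Pr d α) :
    (Good d (nV τ.2) ∧ fl (sg τ.1 (nV τ.2)) (d+1) = T⁻¹) ↔ (PF T (sg τ.1 (nV τ.2)) ∧ Tr (sg τ.1 (nV τ.2)) τ) := by
  constructor
  · rintro ⟨hG, hM⟩
    have h := sg_walk τ.1 hG
    have := fl_prod h.isSwap
    rw [hM] at this
    exact ⟨⟨h.isSwap, mul_inv_eq_one.1 this, walk_trans hα h, walk_deg hα h⟩, h⟩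
  · rintro ⟨⟨h1, h2, -, -⟩, h⟩
    refine ⟨(walk_sg h).2, ?_⟩
    have := fl_prod h1
    rw [h2] at this
    exact (inv_eq_of_mul_eq_one_right this).symm

open Classical in
theorem dbl (hα : Fintype.card α = d) (T : Perm α) (p : Perm (Fin (d+1)) → (Fin (d+2) → α) → Prop) :
    ∑ σ ∈ Finset.univ.filter (fun σ : Fin (d+1) → Perm α => PF T σ), (Finset.univ.filter (fun τ : Pr d α => Tr σ τ ∧ p τ.1 τ.2)).card =
    ∑ w : Perm (Fin (d+1)), (Finset.univ.filter (fun v : Fin (d+2) → α => (Good d (nV v) ∧ fl (sg w (nV v)) (d+1) = T⁻¹) ∧ p w v)).card := by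
  have e1 : ∑ w : Perm (Fin (d+1)), (Finset.univ.filter (fun v : Fin (d+2) → α => (Good d (nV v) ∧ fl (sg w (nV v)) (d+1) = T⁻¹) ∧ p w v)).card
    = (Finset.univ.filter (fun τ : Pr d α => (Good d (nV τ.2) ∧ fl (sg τ.1 (nV τ.2)) (d+1) = T⁻¹) ∧ p τ.1 τ.2)).card := by
    rw [Finset.card_filter, Fintype.sum_prod_type]
    refine Finset.sum_congr rfl fun w _ => ?_
    rw [Finset.card_filter]
  rw [e1, Finset.card_eq_sum_card_fiberwise (f := fun τ : Pr d α => sg τ.1 (nV τ.2)) (t := Finset.univ.filter (fun σ : Fin (d+1) → Perm α => PF T σ))]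
  · refine Finset.sum_congr rfl fun σ hσ => ?_
    congr 1
    ext τ
    simp only [Finset.mem_filter, Finset.mem_univ, true_and] at hσ ⊢
    constructor
    · rintro ⟨h1, h2⟩
      have := (walk_sg h1).1
      subst this
      exact ⟨⟨(PF_sg hα T τ).2 ⟨hσ, h1⟩, h2⟩, rfl⟩
    · rintro ⟨⟨h1, h2⟩, rfl⟩
      exact ⟨((PF_sg hα T τ).1 h1).2, h2⟩
  · intro τ hτ
    simp only [Finset.coe_filter, Finset.mem_univ, true_and, Set.mem_setOf_eq] at hτ ⊢
    exact ((PF_sg hα T τ).1 hτ.1).1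

open Classical in
theorem main_count (hα : Fintype.card α = d) (hd : 2 ≤ d) {T : Perm α} {c : α → Fin 3} {μ : Fin 3 → ℕ}
    (HM : ∀ x, Cyc T⁻¹ x (μ (c x)) {y | c y = c x}) (hsurj : Function.Surjective c) (hμ : μ 0 + μ 1 + μ 2 = d) :
    (Finset.univ.filter (fun σ : Fin (d+1) → Perm α => PF T σ)).card = (d+1).factorial * (μ 0 * μ 1 * μ 2) := by
  have h1 : ∑ σ ∈ Finset.univ.filter (fun σ : Fin (d+1) → Perm α => PF T σ),
      ((Finset.univ.filter (fun τ : Pr d α => Tr σ τ ∧ True)).card +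
    2 * (Finset.univ.filter (fun τ : Pr d α => Tr σ τ ∧ (O1 d (nW τ.1) (nV τ.2) ∧ O2 d (nW τ.1) (nV τ.2)))).card) =
    ∑ w : Perm (Fin (d+1)), FF T⁻¹ w := by
    unfold FF
    rw [Finset.sum_add_distrib, Finset.sum_add_distrib, ← Finset.mul_sum, ← Finset.mul_sum]
    congr 1
    · convert dbl hα T (fun _ _ => True)
    · congr 1
      convert dbl hα T (fun w v => O1 d (nW w) (nV v) ∧ O2 d (nW w) (nV v))
  rw [FF_sum hα hd HM hsurj hμ, Finset.sum_congr rfl (g := fun _ => 12)] at h1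
  · simp only [Finset.sum_const, smul_eq_mul] at h1
    omega
  · intro σ hσ
    obtain ⟨s1, s2, s3, s4⟩ := (Finset.mem_filter.1 hσ).2
    have hM : fl σ (d+1) = T⁻¹ := by
      have := fl_prod s1
      rw [s2] at this
      exact (inv_eq_of_mul_eq_one_right this).symm
    have := per_sigma hα s1 s4 s3 (noCross hα (by rw [hM]; exact HM) hsurj hμ (by omega))
    simpa using this
end
end PH

set_option linter.all false
set_option linter.unusedSectionVars false
namespace PH
open Equiv

theorem rot_val {p : ℕ} (k : Fin p) (n : ℕ) : (((finRotate p) ^ n) k).val = (k.val + n) % p := by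
  induction n with
  | zero => simp [Nat.mod_eq_of_lt k.isLt]
  | succ n ih =>
    rw [pow_succ', Perm.mul_apply]
    obtain ⟨q, rfl⟩ : ∃ q, p = q + 1 := ⟨p - 1, by have := k.isLt; omega⟩
    rw [finRotate_succ_apply, Fin.val_add, ih]
    simp [← add_assoc]

section
variable {α : Type*} [DecidableEq α] [Fintype α] {μ : Fin 3 → ℕ}

noncomputable def eI (φ : α ≃ (Σ i : Fin 3, Fin (μ i))) (i : Fin 3) : Fin (μ i) ≃ {x : α // (φ x).1 = i} :=
  Equiv.ofBijective (fun k => ⟨φ.symm ⟨i, k⟩, by simp⟩) (by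
    constructor
    · intro a b h
      have := congrArg Subtype.val h
      simpa using this
    · rintro ⟨x, hx⟩
      obtain ⟨⟨j, k⟩, rfl⟩ := φ.symm.surjective x
      simp at hx
      subst hx
      exact ⟨k, rfl⟩)

noncomputable def sI (φ : α ≃ (Σ i : Fin 3, Fin (μ i))) (i : Fin 3) : Perm α := (finRotate (μ i)).extendDomain (eI φ i)

theorem sI_same (φ : α ≃ (Σ i : Fin 3, Fin (μ i))) (i : Fin 3) (k : Fin (μ i)) :
    sI φ i (φ.symm ⟨i, k⟩) = φ.symm ⟨i, finRotate _ k⟩ :=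
  Perm.extendDomain_apply_image (finRotate (μ i)) (eI φ i) k

theorem sI_ne (φ : α ≃ (Σ i : Fin 3, Fin (μ i))) {i : Fin 3} {x : α} (h : (φ x).1 ≠ i) : sI φ i x = x :=
  Perm.extendDomain_apply_not_subtype _ _ h

theorem sI_disj (φ : α ≃ (Σ i : Fin 3, Fin (μ i))) {i j : Fin 3} (h : i ≠ j) : Perm.Disjoint (sI φ i) (sI φ j) := by
  intro x
  by_cases hx : (φ x).1 = i
  · right; exact sI_ne φ (fun hc => h (hx.symm.trans hc))
  · left; exact sI_ne φ hx

theorem sI_type (φ : α ≃ (Σ i : Fin 3, Fin (μ i))) (i : Fin 3) : (sI φ i).cycleType = Multiset.filter (fun x => 2 ≤ x) {μ i} := by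
  unfold sI
  rw [Perm.cycleType_extendDomain]
  by_cases h : 2 ≤ μ i
  · rw [cycleType_finRotate_of_le h, Multiset.filter_singleton, if_pos h]
  · rw [Multiset.filter_singleton, if_neg h]
    rw [show (∅ : Multiset ℕ) = 0 from rfl, Perm.cycleType_eq_zero]
    have : Subsingleton (Fin (μ i)) := Fin.subsingleton_iff_le_one.2 (by omega)
    exact Subsingleton.elim _ _

noncomputable def sS (φ : α ≃ (Σ i : Fin 3, Fin (μ i))) : Perm α := sI φ 0 * sI φ 1 * sI φ 2

theorem sS_type (φ : α ≃ (Σ i : Fin 3, Fin (μ i))) : (sS φ).cycleType = Multiset.filter (fun x => 2 ≤ x) {μ 0, μ 1, μ 2} := by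
  unfold sS
  rw [Perm.Disjoint.cycleType_mul, Perm.Disjoint.cycleType_mul, sI_type, sI_type, sI_type, ← Multiset.filter_add, ← Multiset.filter_add]
  · rfl
  · exact sI_disj φ (by decide)
  · exact Perm.Disjoint.mul_left (sI_disj φ (by decide)) (sI_disj φ (by decide))

theorem sS_apply (φ : α ≃ (Σ i : Fin 3, Fin (μ i))) (i : Fin 3) (k : Fin (μ i)) :
    sS φ (φ.symm ⟨i, k⟩) = φ.symm ⟨i, finRotate _ k⟩ := by
  unfold sS
  rw [Perm.mul_apply, Perm.mul_apply]
  fin_cases i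
  · rw [sI_ne φ (i := 2) (by simp), sI_ne φ (i := 1) (by simp)]; exact sI_same φ 0 k
  · rw [sI_ne φ (i := 2) (by simp)]
    refine (congrArg _ (sI_same φ 1 k)).trans ?_
    exact sI_ne φ (by simp)
  · refine (congrArg _ (congrArg _ (sI_same φ 2 k))).trans ?_
    rw [sI_ne φ (i := 1) (by simp), sI_ne φ (i := 0) (by simp)]; rfl

theorem sS_pow (φ : α ≃ (Σ i : Fin 3, Fin (μ i))) (i : Fin 3) (k : Fin (μ i)) (n : ℕ) :
    (sS φ ^ n) (φ.symm ⟨i, k⟩) = φ.symm ⟨i, (finRotate _ ^ n) k⟩ := by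
  induction n with
  | zero => rfl
  | succ n ih => rw [pow_succ', Perm.mul_apply, ih, sS_apply, pow_succ', Perm.mul_apply]

theorem sS_cyc (φ : α ≃ (Σ i : Fin 3, Fin (μ i))) (x : α) : Cyc (sS φ) x (μ (φ x).1) {y | (φ y).1 = (φ x).1} := by
  obtain ⟨⟨i, k⟩, rfl⟩ := φ.symm.surjective x
  rw [Equiv.apply_symm_apply]
  have hk := k.isLt
  refine ⟨by show 0 < μ i; omega, ?_, ?_, ?_⟩
  · rw [sS_pow]
    congr 2
    apply Fin.ext
    rw [rot_val]
    show (k.val + μ i) % μ i = k.val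
    rw [Nat.add_mod_right, Nat.mod_eq_of_lt hk]
  · intro a ha b hb h
    rw [sS_pow, sS_pow] at h
    have h2 := φ.symm.injective h
    simp only [Sigma.mk.injEq, heq_eq_eq, true_and] at h2
    have := congrArg Fin.val h2
    rw [rot_val, rot_val] at this
    have := Nat.ModEq.add_left_cancel' k.val this
    exact Nat.ModEq.eq_of_lt_of_lt this ha hb
  · intro y
    obtain ⟨⟨j, l⟩, rfl⟩ := φ.symm.surjective y
    simp only [Set.mem_setOf_eq, Equiv.apply_symm_apply]
    constructor
    · intro h
      subst h
      have hl := l.isLt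
      refine ⟨(μ j + l.val - k.val) % μ j, Nat.mod_lt _ (by omega), ?_⟩
      rw [sS_pow]
      congr 2
      apply Fin.ext
      rw [rot_val, Nat.add_mod_mod, show k.val + (μ j + l.val - k.val) = l.val + μ j by omega, Nat.add_mod_right, Nat.mod_eq_of_lt hl]
    · rintro ⟨n, -, h⟩
      rw [sS_pow] at h
      have h2 := φ.symm.injective h
      exact (congrArg Sigma.fst h2).symm

theorem Cyc.conj {N : Perm α} {x : α} {p : ℕ} {A : Set α} (g : Perm α) (h : Cyc N (g⁻¹ x) p A) :
    Cyc (g * N * g⁻¹) x p {y | g⁻¹ y ∈ A} := by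
  have e : ∀ n : ℕ, ((g * N * g⁻¹) ^ n) x = g ((N ^ n) (g⁻¹ x)) := by
    intro n; rw [conj_pow]; rfl
  refine ⟨h.pos, ?_, ?_, ?_⟩
  · rw [e, h.per]; simp
  · intro i hi j hj hc
    rw [e, e] at hc
    exact h.inj i hi j hj (g.injective hc)
  · intro y
    show g⁻¹ y ∈ A ↔ _
    rw [h.mem]
    apply exists_congr; intro n
    rw [e]
    constructor
    · rintro ⟨h1, h2⟩; exact ⟨h1, by rw [h2]; simp⟩
    · rintro ⟨h1, h2⟩; exact ⟨h1, by rw [← h2]; simp⟩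

theorem exists_color {d : ℕ} (hα : Fintype.card α = d) (hμ : μ 0 + μ 1 + μ 2 = d) (hp : ∀ i, 1 ≤ μ i) {M : Perm α}
    (hM : M.cycleType = Multiset.filter (fun x => 2 ≤ x) {μ 0, μ 1, μ 2}) :
    ∃ c : α → Fin 3, Function.Surjective c ∧ ∀ x, Cyc M x (μ (c x)) {y | c y = c x} := by
  have hc : Fintype.card α = Fintype.card (Σ i : Fin 3, Fin (μ i)) := by
    rw [Fintype.card_sigma, Fin.sum_univ_three]; simp [hα, hμ]
  let φ := Fintype.equivOfCardEq hc
  have : IsConj (sS φ) M := Perm.isConj_iff_cycleType_eq.2 (by rw [sS_type, hM])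
  obtain ⟨g, hg⟩ := isConj_iff.1 this
  refine ⟨fun x => (φ (g⁻¹ x)).1, ?_, ?_⟩
  · intro i
    refine ⟨g (φ.symm ⟨i, ⟨0, hp i⟩⟩), by simp⟩
  · intro x
    rw [← hg]
    exact (sS_cyc φ (g⁻¹ x)).conj g
end
end PH

/-- Pruned simple Hurwitz number `K_{0,3}(μ₁, μ₂, μ₃) = (μ₁+μ₂+μ₃+1)! · μ₁μ₂μ₃`:
here `T` is a fixed permutation of `{1, …, μ₁+μ₂+μ₃}` of cycle type `(μ₁, μ₂, μ₃)` and
the factorisations are into `m = 2·0 - 2 + 3 + (μ₁+μ₂+μ₃) = μ₁+μ₂+μ₃+1` transpositions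
generating a transitive subgroup, with every point moved by at least two of the
transpositions. -/
theorem prunedHurwitz_genus_zero_three_part (μ₁ μ₂ μ₃ : ℕ)
    (h₁ : 1 ≤ μ₁) (h₂ : 1 ≤ μ₂) (h₃ : 1 ≤ μ₃)
    (T : Equiv.Perm (Fin (μ₁ + μ₂ + μ₃)))
    (hT : T.cycleType = Multiset.filter (fun x => 2 ≤ x) ({μ₁, μ₂, μ₃} : Multiset ℕ)) :
    Nat.card {σ : Fin (μ₁ + μ₂ + μ₃ + 1) → Equiv.Perm (Fin (μ₁ + μ₂ + μ₃)) //
        IsPrunedFactorisation T σ}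
      = Nat.factorial (μ₁ + μ₂ + μ₃ + 1) * (μ₁ * μ₂ * μ₃) := by
  have hd : 2 ≤ μ₁ + μ₂ + μ₃ := by omega
  obtain ⟨c, hc, HM⟩ := PH.exists_color (α := Fin (μ₁ + μ₂ + μ₃)) (μ := ![μ₁, μ₂, μ₃]) (d := μ₁ + μ₂ + μ₃) (by simp) (by simp)
    (by intro i; fin_cases i <;> simpa) (M := T⁻¹) (by rw [Equiv.Perm.cycleType_inv, hT]; rfl)
  have h := PH.main_count (by simp) hd HM hc (by simp)
  have e : ∀ σ : Fin (μ₁ + μ₂ + μ₃ + 1) → Equiv.Perm (Fin (μ₁ + μ₂ + μ₃)), IsPrunedFactorisation T σ ↔ PH.PF T σ := by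
    intro σ
    unfold IsPrunedFactorisation PH.PF PH.deg
    simp only [Nat.card_eq_fintype_card, Fintype.card_subtype]
  classical
  rw [Nat.card_congr (Equiv.subtypeEquivRight e), Nat.card_eq_fintype_card, Fintype.card_subtype]
  convert h using 2
  rfl
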